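/- Let N ≥ 1 be an integer, ω > 0, and 1 < p < p_max, and let u be a ground-state profile of (QLS). Suppose ξ : ℝ^N → ℂ is smooth, with ∫_{ℝ^N}(|ξ|² + |∇ξ|²) dx < ∞, and satisfies pointwise on ℝ^N the linearized equation −Δξ − 2u·Δ(u·Re ξ) + ωξ − (Δ(u²))ξ − (p−1)u^{p−1}·Re ξ − u^{p−1}ξ = 0. Then there exist real numbers a, c₁, …, c_N such that ξ(x) = i·a·u(x) + Σ_{l=1}^{N} c_l ∂_{x_l}u(x) for all x ∈ ℝ^N. -/

import Mathlib

open MeasureTheory Real Filter Topology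

noncomputable section

/-- Partial derivative along the `i`-th coordinate direction. -/
def pd {N : ℕ} {F : Type*} [NormedAddCommGroup F] [NormedSpace ℝ F]
    (i : Fin N) (f : EuclideanSpace ℝ (Fin N) → F) (x : EuclideanSpace ℝ (Fin N)) : F :=
  fderiv ℝ f x (EuclideanSpace.single i 1)

/-- Euclidean Laplacian. -/
def lap {N : ℕ} {F : Type*} [NormedAddCommGroup F] [NormedSpace ℝ F]
    (f : EuclideanSpace ℝ (Fin N) → F) (x : EuclideanSpace ℝ (Fin N)) : F :=
  ∑ i : Fin N, pd i (pd i f) x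

/-- Squared norm of the gradient of a real-valued function: `|∇f|²`. -/
def gradsq {N : ℕ} (f : EuclideanSpace ℝ (Fin N) → ℝ) (x : EuclideanSpace ℝ (Fin N)) : ℝ :=
  ∑ i : Fin N, (pd i f x) ^ 2

/-- A ground-state profile of the quasilinear Schrödinger equation (QLS)
`-Δu - uΔ(u²) + ωu - u^p = 0` on `ℝ^N`: smooth, positive, radially symmetric with a
strictly decreasing positive profile, solves (QLS) pointwise, and decays
exponentially together with all its derivatives. -/
structure IsGroundState (N : ℕ) (ω p : ℝ) (u : EuclideanSpace ℝ (Fin N) → ℝ) : Prop where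
  smooth : ContDiff ℝ (⊤ : ℕ∞) u
  pos : ∀ x, 0 < u x
  radial : ∃ U : ℝ → ℝ, StrictAntiOn U (Set.Ici 0) ∧ (∀ r, 0 ≤ r → 0 < U r) ∧
      ∀ x, u x = U ‖x‖
  solves : ∀ x, -lap u x - u x * lap (fun y => (u y) ^ 2) x + ω * u x - (u x) ^ p = 0
  decay : ∀ k : ℕ, ∃ C > 0, ∃ δ > 0, ∀ x,
      ‖iteratedFDeriv ℝ k u x‖ ≤ C * Real.exp (-δ * ‖x‖)

/-- The linearized operator `L₊` around `u` (real-valued functions). -/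
def Lplus {N : ℕ} (ω p : ℝ) (u η : EuclideanSpace ℝ (Fin N) → ℝ)
    (x : EuclideanSpace ℝ (Fin N)) : ℝ :=
  -lap η x - 2 * u x * lap (fun y => u y * η y) x + ω * η x
    - (lap (fun y => (u y) ^ 2) x + p * u x ^ (p - 1)) * η x

/-- The linearized operator `L₋` around `u`. -/
def Lminus {N : ℕ} (ω p : ℝ) (u ζ : EuclideanSpace ℝ (Fin N) → ℝ)
    (x : EuclideanSpace ℝ (Fin N)) : ℝ :=
  -lap ζ x + ω * ζ x - (lap (fun y => (u y) ^ 2) x + u x ^ (p - 1)) * ζ x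

/-!
The dual change of variables `v = F(u)` with `F' = √(1 + 2u²)` turns (QLS) into a semilinear
equation `-Δv = g(v)`. The substitution `φ = √(1 + 2u²) Re ξ` turns the equation for `Re ξ` into
its linearization `-Δφ = g'(v) φ`, while `Im ξ` solves a linear Schrödinger equation that has the
positive solution `u`. Both potentials are radial, so the moments `r ↦ ∫ φ(rθ) ⟪a, θ⟫ᵏ dθ` over
spheres satisfy, modulo lower moments, radial equations with the centrifugal term
`k (k + N - 2) / r²`. By Picone's identity the square integrable solutions of these equations with
`k ≥ 0` are multiples of `u` for `Im ξ`, and those with `k ≥ 1` are multiples of `v'` for `φ`. The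
remaining radial mode of `φ` vanishes: its Wronskian with `v'` excludes a solution of constant sign,
and its Wronskian with `r v' + c v`, together with Pohozaev's identity for `v`, excludes a sign
change. Finally, a continuous function on the sphere all of whose moments vanish is zero.
-/

/-! ### Real functions on a half-line -/

section HalfLine

open Set

variable {f f' : ℝ → ℝ} {a b c l : ℝ}

theorem lt_of_deriv_pos (hf : ∀ r, c < r → HasDerivAt f (f' r) r) (ha : c < a) (hab : a < b)
    (hf' : ∀ r ∈ Ioo a b, 0 < f' r) : f a < f b := by
  refine strictMonoOn_of_hasDerivWithinAt_pos (f' := f') (convex_Icc a b)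
    (fun r hr => (hf r (ha.trans_le hr.1)).continuousAt.continuousWithinAt) ?_ ?_
    (left_mem_Icc.2 hab.le) (right_mem_Icc.2 hab.le) hab
  · exact fun r hr => (hf r (ha.trans_le (interior_subset hr).1)).hasDerivWithinAt
  · simpa only [interior_Icc] using hf'

theorem le_of_deriv_nonneg (hf : ∀ r, c < r → HasDerivAt f (f' r) r) (ha : c < a) (hab : a ≤ b)
    (hf' : ∀ r ∈ Ioo a b, 0 ≤ f' r) : f a ≤ f b := by
  refine monotoneOn_of_hasDerivWithinAt_nonneg (f' := f') (convex_Icc a b)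
    (fun r hr => (hf r (ha.trans_le hr.1)).continuousAt.continuousWithinAt) ?_ ?_
    (left_mem_Icc.2 hab) (right_mem_Icc.2 hab) hab
  · exact fun r hr => (hf r (ha.trans_le (interior_subset hr).1)).hasDerivWithinAt
  · simpa only [interior_Icc] using hf'

theorem limit_lt_of_deriv_pos (hf : ∀ r, c < r → HasDerivAt f (f' r) r) (hb : c < b)
    (hf' : ∀ r ∈ Ioo c b, 0 < f' r) (hl : Tendsto f (𝓝[>] c) (𝓝 l)) : l < f b := by
  obtain ⟨d, hcd, hdb⟩ := exists_between hb
  have hld : l ≤ f d := by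
    refine le_of_tendsto hl ?_
    filter_upwards [Ioo_mem_nhdsGT hcd] with r hr
    exact (lt_of_deriv_pos hf hr.1 hr.2 fun t ht => hf' t ⟨hr.1.trans ht.1, ht.2.trans hdb⟩).le
  exact hld.trans_lt (lt_of_deriv_pos hf hcd hdb fun r hr => hf' r ⟨hcd.trans hr.1, hr.2⟩)

theorem lt_limit_of_deriv_pos (hf : ∀ r, c < r → HasDerivAt f (f' r) r) (ha : c < a)
    (hf' : ∀ r, a < r → 0 < f' r) (hl : Tendsto f atTop (𝓝 l)) : f a < l := by
  have hlt : f a < f (a + 1) := lt_of_deriv_pos hf ha (by linarith) fun r hr => hf' r hr.1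
  refine hlt.trans_le (ge_of_tendsto hl ?_)
  filter_upwards [eventually_gt_atTop (a + 1)] with r hr
  exact (lt_of_deriv_pos hf (by linarith) hr fun t ht => hf' t (by linarith [ht.1])).le

theorem limit_lt_of_deriv_neg (hf : ∀ r, c < r → HasDerivAt f (f' r) r) (ha : c < a)
    (hf' : ∀ r, a < r → f' r < 0) (hl : Tendsto f atTop (𝓝 l)) : l < f a :=
  neg_lt_neg_iff.1 (lt_limit_of_deriv_pos (f := -f) (fun r hr => (hf r hr).neg) ha
    (fun r hr => neg_pos.2 (hf' r hr)) hl.neg)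

theorem abs_le_of_abs_deriv_le {g g' : ℝ → ℝ} (hf : ∀ r, a ≤ r → HasDerivAt f (f' r) r)
    (hg : ∀ r, a ≤ r → HasDerivAt g (g' r) r) (ha : |f a| ≤ g a)
    (hfg : ∀ r, a ≤ r → |f' r| ≤ g' r) (hb : a ≤ b) : |f b| ≤ g b :=
  image_norm_le_of_norm_deriv_right_le_deriv_boundary'
    (fun r hr => (hf r hr.1).continuousAt.continuousWithinAt)
    (fun r hr => (hf r hr.1).hasDerivWithinAt) ha
    (fun r hr => (hg r hr.1).continuousAt.continuousWithinAt)
    (fun r hr => (hg r hr.1).hasDerivWithinAt) (fun r hr => hfg r hr.1) (right_mem_Icc.2 hb)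

theorem exists_bounded_primitive (hfc : ContinuousOn f (Ioi a)) (hf0 : ∀ r, a < r → 0 ≤ f r)
    (hfi : IntegrableOn f (Ioi a)) :
    ∃ (F : ℝ → ℝ) (C : ℝ), (∀ r, a < r → HasDerivAt F (f r) r) ∧ ∀ r, a < r → F r ∈ Icc 0 C := by
  have hIoc : ∀ r, a < r → ∫ x in a..r, f x = ∫ x in Ioc a r, f x := fun r hr =>
    intervalIntegral.integral_of_le hr.le
  refine ⟨fun r => ∫ x in a..r, f x, ∫ x in Ioi a, f x, fun r hr => ?_,
    fun r hr => ⟨(hIoc r hr).ge.trans' ?_, (hIoc r hr).trans_le ?_⟩⟩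
  · refine intervalIntegral.integral_hasDerivAt_right ?_
      (hfc.stronglyMeasurableAtFilter isOpen_Ioi _ hr) (hfc.continuousAt (Ioi_mem_nhds hr))
    exact (intervalIntegrable_iff_integrableOn_Ioc_of_le hr.le).2
      (hfi.mono_set Ioc_subset_Ioi_self)
  · exact setIntegral_nonneg measurableSet_Ioc fun x hx => hf0 x hx.1
  · refine setIntegral_mono_set hfi ?_ Ioc_subset_Ioi_self.eventuallyLE
    filter_upwards [ae_restrict_mem measurableSet_Ioi] with x hx using hf0 x hx

-- If `f a > 0`, then `f' / f ^ 2 + s ≥ 1 / s + s ≥ 2`, so a primitive of `s` minus `1 / f` grows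
-- at least linearly, although it is bounded above.
theorem nonpos_of_sq_le_mul_deriv {s : ℝ → ℝ} (hf : ∀ r, c < r → HasDerivAt f (f' r) r)
    (hf' : ∀ r, c < r → 0 ≤ f' r) (hsc : ContinuousOn s (Ioi c)) (hs0 : ∀ r, c < r → 0 ≤ s r)
    (hsi : IntegrableOn s (Ioi c)) (hsq : ∀ r, c < r → f r ^ 2 ≤ s r * f' r) (ha : c < a) :
    f a ≤ 0 := by
  by_contra! hfa
  have hpos : ∀ r, a ≤ r → 0 < f r := fun r hr =>
    hfa.trans_le (le_of_deriv_nonneg hf ha hr fun t ht => hf' t (ha.trans ht.1))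
  obtain ⟨S, C, hS, hSC⟩ := exists_bounded_primitive hsc hs0 hsi
  have hder : ∀ r, a ≤ r → HasDerivAt (fun r => S r - (f r)⁻¹ - 2 * r)
      (s r + f' r / f r ^ 2 - 2) r := fun r hr =>
    (((hS r (ha.trans_le hr)).sub ((hf r (ha.trans_le hr)).inv (hpos r hr).ne')).sub
      ((hasDerivAt_id r).const_mul 2)).congr_deriv (by ring)
  have hder_nonneg : ∀ r, a ≤ r → 0 ≤ s r + f' r / f r ^ 2 - 2 := by
    intro r hr
    have hcr := ha.trans_le hr
    have hfr := hpos r hr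
    have hsr : 0 < s r := (hs0 r hcr).lt_of_ne' fun h => by
      have := hsq r hcr
      rw [h] at this
      nlinarith
    have hinv : 1 / s r ≤ f' r / f r ^ 2 := by
      rw [div_le_div_iff₀ hsr (by positivity)]
      linarith [hsq r hcr]
    have hamgm : 2 ≤ s r + 1 / s r := by
      rw [← sub_nonneg, show s r + 1 / s r - 2 = (s r - 1) ^ 2 / s r by field_simp; ring]
      positivity
    linarith
  set R := max (a + 1) (a + 1 + ((f (a + 1))⁻¹ + C) / 2)
  have haR : a + 1 ≤ R := le_max_left _ _
  have hmono := le_of_deriv_nonneg (c := a) (fun r hr => hder r hr.le) (lt_add_one a) haR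
    fun r hr => hder_nonneg r (by linarith [hr.1])
  have hSR := (hSC R (by linarith)).2
  have hSa := (hSC (a + 1) (by linarith)).1
  have hfR := inv_pos.2 (hpos R (by linarith))
  linarith [le_max_right (a + 1) (a + 1 + ((f (a + 1))⁻¹ + C) / 2)]

theorem exists_eq_const_mul_of_wronskian_eq_zero {w w' : ℝ → ℝ}
    (hf : ∀ r, c < r → HasDerivAt f (f' r) r) (hw : ∀ r, c < r → HasDerivAt w (w' r) r)
    (hw0 : ∀ r, c < r → w r ≠ 0) (hfw : ∀ r, c < r → f' r * w r = f r * w' r) :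
    ∃ k : ℝ, ∀ r, c < r → f r = k * w r := by
  have hder : ∀ r ∈ Ioi c, HasDerivAt (fun r => f r / w r) 0 r := fun r hr =>
    ((hf r hr).div (hw r hr) (hw0 r hr)).congr_deriv (by rw [hfw r hr, sub_self, zero_div])
  obtain ⟨k, hk⟩ := isOpen_Ioi.exists_is_const_of_deriv_eq_zero isPreconnected_Ioi
    (fun r hr => (hder r hr).differentiableAt.differentiableWithinAt)
    fun r hr => (hder r hr).deriv
  exact ⟨k, fun r hr => (div_eq_iff (hw0 r hr)).1 (hk r hr)⟩

theorem pos_or_neg_of_ne_zero {s : Set ℝ} (hs : IsPreconnected s) (hf : ContinuousOn f s)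
    (hne : ∀ x ∈ s, f x ≠ 0) : (∀ x ∈ s, 0 < f x) ∨ ∀ x ∈ s, f x < 0 := by
  by_contra! h
  obtain ⟨⟨x, hx, hfx⟩, y, hy, hfy⟩ := h
  obtain ⟨z, hz, hfz⟩ := hs.intermediate_value hx hy hf ⟨hfx, hfy⟩
  exact hne z hz hfz

theorem exists_last_zero (hab : a ≤ b) (hf : ContinuousOn f (Icc a b)) (ha : f a = 0) :
    ∃ y ∈ Icc a b, f y = 0 ∧ ∀ t ∈ Ioc y b, f t ≠ 0 := by
  have hcompact : IsCompact (Icc a b ∩ f ⁻¹' {0}) := isCompact_Icc.of_isClosed_subset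
    (hf.preimage_isClosed_of_isClosed isClosed_Icc isClosed_singleton) inter_subset_left
  obtain ⟨y, ⟨hy, hfy⟩, hmax⟩ := hcompact.exists_isGreatest ⟨a, left_mem_Icc.2 hab, ha⟩
  exact ⟨y, hy, hfy, fun t ht hft => ht.1.not_ge (hmax ⟨⟨hy.1.trans ht.1.le, ht.2⟩, hft⟩)⟩

theorem eventually_nhdsLT_neg_of_deriv_pos (hf : HasDerivAt f l a) (hl : 0 < l) (ha : f a = 0) :
    ∀ᶠ r in 𝓝[<] a, f r < 0 := by
  have hsign := eventually_nhdsWithin_sign_eq_of_deriv_pos (hf.deriv.symm ▸ hl) ha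
  filter_upwards [hsign.filter_mono nhdsWithin_le_nhds, self_mem_nhdsWithin] with r hr hra
  rw [sign_neg (sub_neg.2 hra)] at hr
  exact sign_eq_neg_one_iff.1 hr

theorem nonpos_deriv_of_eventually_nhdsGT_neg (hf : HasDerivAt f l a) (ha : f a = 0)
    (hneg : ∀ᶠ r in 𝓝[>] a, f r < 0) : l ≤ 0 := by
  by_contra! hl
  have hsign := eventually_nhdsWithin_sign_eq_of_deriv_pos (hf.deriv.symm ▸ hl) ha
  obtain ⟨r, hr, hra, hfr⟩ := ((hsign.filter_mono nhdsWithin_le_nhds).and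
    (eventually_mem_nhdsWithin.and hneg)).exists
  rw [sign_neg hfr, sign_pos (sub_pos.2 hra)] at hr
  exact absurd hr (by decide)

theorem neg_on_Ioo_or_exists_zero (hca : c < a) (hf : ContinuousOn f (Ioo c a))
    (hneg : ∀ᶠ r in 𝓝[<] a, f r < 0) :
    (∀ r ∈ Ioo c a, f r < 0) ∨ ∃ y ∈ Ioo c a, f y = 0 ∧ ∀ r ∈ Ioo y a, f r < 0 := by
  obtain ⟨b, ⟨hcb, hba⟩, hbneg⟩ := (mem_nhdsLT_iff_exists_mem_Ico_Ioo_subset hca).1 hneg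
  obtain ⟨d, hbd, hda⟩ := exists_between hba
  have neg_of_ne : ∀ y, c ≤ y → y < d → (∀ r ∈ Ioo y a, f r ≠ 0) → ∀ r ∈ Ioo y a, f r < 0 :=
    fun y hcy hyd hne => (pos_or_neg_of_ne_zero isPreconnected_Ioo
      (hf.mono (Ioo_subset_Ioo_left hcy)) hne).resolve_left
      fun hpos => (hpos d ⟨hyd, hda⟩).not_gt (hbneg ⟨hbd, hda⟩)
  by_cases hzero : ∃ x ∈ Ioo c a, f x = 0
  · obtain ⟨x, ⟨hcx, hxa⟩, hfx⟩ := hzero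
    have hxb : x ≤ b := not_lt.1 fun hbx => (hbneg ⟨hbx, hxa⟩).ne hfx
    obtain ⟨y, ⟨hxy, hyd⟩, hfy, hne⟩ := exists_last_zero (hxb.trans hbd.le)
      (hf.mono fun r hr => ⟨hcx.trans_le hr.1, hr.2.trans_lt hda⟩) hfx
    have hyd' : y < d := hyd.lt_of_ne fun h => (hbneg ⟨hbd, hda⟩).ne (h ▸ hfy)
    refine .inr ⟨y, ⟨hcx.trans_le hxy, hyd'.trans hda⟩, hfy, ?_⟩
    refine neg_of_ne y (hcx.le.trans hxy) hyd' fun r hr => ?_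
    rcases le_or_gt r d with hrd | hrd
    · exact hne r ⟨hr.1, hrd⟩
    · exact (hbneg ⟨hbd.trans hrd, hr.2⟩).ne
  · push Not at hzero
    exact .inl (neg_of_ne c le_rfl (hcb.trans_lt hbd) hzero)

/-- A function on `(0, ∞)` that changes sign at most once, from negative to positive. -/
def CrossesUp (f : ℝ → ℝ) : Prop :=
  ∀ r₁ r₂, 0 < r₁ → r₁ < r₂ → f r₂ ≤ 0 → f r₁ < 0

namespace CrossesUp

variable {k : ℝ → ℝ}

theorem pos_of_nonneg (h : CrossesUp f) (ha : 0 < a) (hab : a < b) (hfa : 0 ≤ f a) : 0 < f b :=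
  not_le.1 fun hfb => (h a b ha hab hfb).not_ge hfa

theorem neg_of_deriv (h : CrossesUp f) (hk : ∀ r, 0 < r → 0 < k r) {F : ℝ → ℝ}
    (hF : ∀ r, 0 < r → HasDerivAt F (k r * f r) r) (hlim : Tendsto F atTop (𝓝 0)) :
    CrossesUp fun r => -F r := by
  intro r₁ r₂ hr₁ hr₁₂ hFr₂
  have hr₂ := hr₁.trans hr₁₂
  have hfr₂ : f r₂ < 0 := by
    by_contra! hcon
    have hFneg := lt_limit_of_deriv_pos hF hr₂
      (fun s hs => mul_pos (hk s (hr₂.trans hs)) (h.pos_of_nonneg hr₂ hs hcon)) hlim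
    linarith
  have hlt := lt_of_deriv_pos (fun r hr => (hF r hr).neg) hr₁ hr₁₂ fun s hs =>
    neg_pos.2 (mul_neg_of_pos_of_neg (hk s (hr₁.trans hs.1))
      (h s r₂ (hr₁.trans hs.1) hs.2 hfr₂.le))
  exact hlt.trans_le hFr₂

theorem pos_of_deriv (h : CrossesUp fun r => -f r) (hk : ∀ r, 0 < r → 0 < k r) {F : ℝ → ℝ}
    (hF : ∀ r, 0 < r → HasDerivAt F (k r * f r) r) (hzero : Tendsto F (𝓝[>] 0) (𝓝 0))
    (hlim : Tendsto F atTop (𝓝 0)) (ha : 0 < a) : 0 < F a := by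
  rcases le_or_gt 0 (f a) with hfa | hfa
  · refine limit_lt_of_deriv_pos hF ha (fun r hr => mul_pos (hk r hr.1) ?_) hzero
    exact neg_lt_zero.1 (h r a hr.1 hr.2 (neg_nonpos.2 hfa))
  · refine limit_lt_of_deriv_neg hF ha (fun r hr => ?_) hlim
    have hfr : 0 < -f r := h.pos_of_nonneg ha hr (neg_nonneg.2 hfa.le)
    exact mul_neg_of_pos_of_neg (hk r (ha.trans hr)) (neg_pos.1 hfr)

end CrossesUp

end HalfLine

/-! ### Radial linear equations -/

section RadialEquation

open Set Asymptotics

theorem tendsto_pow_nhdsGT_zero {n : ℕ} (hn : n ≠ 0) :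
    Tendsto (fun r : ℝ => r ^ n) (𝓝[>] 0) (𝓝 0) := by
  simpa only [zero_pow hn] using
    ((continuous_pow n).tendsto (0 : ℝ)).mono_left nhdsWithin_le_nhds

theorem tendsto_id_nhdsGT_zero : Tendsto (fun r : ℝ => r) (𝓝[>] 0) (𝓝 0) :=
  tendsto_id.mono_left nhdsWithin_le_nhds

theorem tendsto_div_nhdsGT_zero {f : ℝ → ℝ} {f' : ℝ} (hf : HasDerivAt f f' 0) (hf0 : f 0 = 0) :
    Tendsto (fun r => f r / r) (𝓝[>] 0) (𝓝 f') := by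
  refine hf.tendsto_slope_zero_right.congr fun r => ?_
  rw [zero_add, hf0, sub_zero, smul_eq_mul, inv_mul_eq_div]

theorem hasDerivAt_pow_mul (n : ℕ) {f : ℝ → ℝ} {f' r : ℝ} (hr : r ≠ 0) (hf : HasDerivAt f f' r) :
    HasDerivAt (fun r => r ^ n * f r) (r ^ n * (n / r * f r + f')) r := by
  refine ((hasDerivAt_pow n r).mul hf).congr_deriv ?_
  rcases n with _ | n
  · simp
  · rw [Nat.add_sub_cancel, pow_succ]
    field_simp

/-- `m'' + (n / r) m' + q m = 0` on `(0, ∞)`, the radial form of `Δφ + qφ = 0` in dimension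
`n + 1`; the functions `m` and `m'` are carried separately. -/
structure IsRadialSolution (n : ℕ) (q m m' : ℝ → ℝ) : Prop where
  hasDerivAt : ∀ r, 0 < r → HasDerivAt m (m' r) r
  hasDerivAt_deriv : ∀ r, 0 < r → HasDerivAt m' (-(n / r) * m' r - q r * m r) r

/-- The weighted Wronskian `rⁿ (m' f - m f')` of two functions with derivatives `m'` and `f'`. -/
def radialWronskian (n : ℕ) (m m' f f' : ℝ → ℝ) (r : ℝ) : ℝ :=
  r ^ n * (m' r * f r - m r * f' r)

/-- Picone's expression `rⁿ m (m' - m w' / w)` for the comparison of `m` with `w`. -/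
def piconeForm (n : ℕ) (w w' m m' : ℝ → ℝ) (r : ℝ) : ℝ :=
  r ^ n * (m r * (m' r - m r * (w' r / w r)))

namespace IsRadialSolution

variable {n : ℕ} {q m m' : ℝ → ℝ}

theorem neg (hm : IsRadialSolution n q m m') : IsRadialSolution n q (-m) (-m') where
  hasDerivAt r hr := (hm.hasDerivAt r hr).neg
  hasDerivAt_deriv r hr := (hm.hasDerivAt_deriv r hr).neg.congr_deriv
    (by simp only [Pi.neg_apply]; ring)

theorem continuousOn (hm : IsRadialSolution n q m m') : ContinuousOn m (Ioi 0) :=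
  fun r hr => (hm.hasDerivAt r hr).continuousAt.continuousWithinAt

theorem exists_bounded_primitive_sq (hm : IsRadialSolution n q m m')
    (hint : IntegrableOn (fun r => r ^ n * m r ^ 2) (Ioi 0)) :
    ∃ (F : ℝ → ℝ) (C : ℝ), (∀ r, 0 < r → HasDerivAt F (r ^ n * m r ^ 2) r) ∧
      ∀ r, 0 < r → F r ∈ Icc 0 C :=
  exists_bounded_primitive ((continuous_pow n).continuousOn.mul (hm.continuousOn.pow 2))
    (fun _ hr => mul_nonneg (pow_nonneg hr.le n) (sq_nonneg _)) hint

theorem hasDerivAt_piconeForm {qw w w' : ℝ → ℝ} {r : ℝ} (hm : IsRadialSolution n q m m')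
    (hw : IsRadialSolution n qw w w') (hr : 0 < r) (hwr : w r ≠ 0) :
    HasDerivAt (piconeForm n w w' m m')
      (r ^ n * ((m' r - m r * (w' r / w r)) ^ 2 + (qw r - q r) * m r ^ 2)) r := by
  refine (hasDerivAt_pow_mul n hr.ne' ((hm.hasDerivAt r hr).mul ((hm.hasDerivAt_deriv r hr).sub
    ((hm.hasDerivAt r hr).mul ((hw.hasDerivAt_deriv r hr).div
      (hw.hasDerivAt r hr) hwr))))).congr_deriv ?_
  simp only [Pi.mul_apply, Pi.sub_apply, Pi.div_apply]
  field_simp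
  ring

-- Sturm comparison: Picone's expression is nondecreasing and vanishes at `0`, and it cannot become
-- positive because `rⁿ m²` is integrable.
theorem exists_eq_const_mul {qw w w' : ℝ → ℝ} (hm : IsRadialSolution n q m m')
    (hw : IsRadialSolution n qw w w') (hw0 : ∀ r, 0 < r → w r ≠ 0) (hq : ∀ r, 0 < r → q r ≤ qw r)
    (hint : IntegrableOn (fun r => r ^ n * m r ^ 2) (Ioi 0))
    (hlim : Tendsto (piconeForm n w w' m m') (𝓝[>] 0) (𝓝 0)) :
    ∃ c : ℝ, ∀ r, 0 < r → m r = c * w r := by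
  set B := piconeForm n w w' m m'
  set B' := fun r => r ^ n * ((m' r - m r * (w' r / w r)) ^ 2 + (qw r - q r) * m r ^ 2)
  have hB : ∀ r, 0 < r → HasDerivAt B (B' r) r := fun r hr =>
    hm.hasDerivAt_piconeForm hw hr (hw0 r hr)
  have hpot : ∀ r, 0 < r → 0 ≤ (qw r - q r) * m r ^ 2 := fun r hr =>
    mul_nonneg (sub_nonneg.2 (hq r hr)) (sq_nonneg _)
  have hB' : ∀ r, 0 < r → 0 ≤ B' r := fun r hr =>
    mul_nonneg (pow_nonneg hr.le n) (add_nonneg (sq_nonneg _) (hpot r hr))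
  have hsq : ∀ r, 0 < r → B r ^ 2 ≤ r ^ n * m r ^ 2 * B' r := fun r hr => by
    have hextra : 0 ≤ (r ^ n * m r) ^ 2 * ((qw r - q r) * m r ^ 2) :=
      mul_nonneg (sq_nonneg _) (hpot r hr)
    simp only [B, B', piconeForm]
    linarith
  have hB_eq_zero : ∀ r ∈ Ioi (0 : ℝ), B r = 0 := fun r hr => by
    refine le_antisymm (nonpos_of_sq_le_mul_deriv hB hB'
      ((continuous_pow n).continuousOn.mul (hm.continuousOn.pow 2))
      (fun t ht => mul_nonneg (pow_nonneg ht.le n) (sq_nonneg _)) hint hsq hr) ?_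
    refine le_of_tendsto hlim ?_
    filter_upwards [Ioo_mem_nhdsGT hr] with t ht
    exact le_of_deriv_nonneg hB ht.1 ht.2.le fun x hx => hB' x (ht.1.trans hx.1)
  refine exists_eq_const_mul_of_wronskian_eq_zero hm.hasDerivAt hw.hasDerivAt hw0 fun r hr => ?_
  have hB'_eq_zero : B' r = 0 := (hB r hr).unique
    ((hasDerivAt_const r 0).congr_of_eventuallyEq
      (eventuallyEq_of_mem (Ioi_mem_nhds hr) hB_eq_zero))
  have hsum := (mul_eq_zero.1 hB'_eq_zero).resolve_left (pow_pos hr n).ne'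
  have hquot : m' r - m r * (w' r / w r) = 0 :=
    pow_eq_zero_iff two_ne_zero |>.1 (le_antisymm (by linarith [hpot r hr]) (sq_nonneg _))
  rw [sub_eq_zero.1 hquot, mul_assoc, div_mul_cancel₀ _ (hw0 r hr)]

theorem hasDerivAt_pow_mul_deriv {r : ℝ} (hm : IsRadialSolution n q m m') (hr : 0 < r) :
    HasDerivAt (fun r => r ^ n * m' r) (-(r ^ n * (q r * m r))) r :=
  (hasDerivAt_pow_mul n hr.ne' (hm.hasDerivAt_deriv r hr)).congr_deriv (by ring)

theorem exists_abs_deriv_le_pow {C : ℝ} (hm : IsRadialSolution n q m m')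
    (hq : ∀ r, 1 ≤ r → |q r| ≤ C) (hint : IntegrableOn (fun r => r ^ n * m r ^ 2) (Ioi 0)) :
    ∃ A, 0 ≤ A ∧ ∀ r, 1 ≤ r → |m' r| ≤ A * r ^ (n + 1) := by
  obtain ⟨S, T, hS, hST⟩ := hm.exists_bounded_primitive_sq hint
  have hT : 0 ≤ T := (hST 1 one_pos).1.trans (hST 1 one_pos).2
  have hqm : ∀ r, 1 ≤ r → |q r * m r| ≤ m r ^ 2 + C ^ 2 := fun r hr => by
    rw [abs_mul, ← sq_abs (m r)]
    nlinarith [mul_le_mul_of_nonneg_right (hq r hr) (abs_nonneg (m r)), sq_nonneg (|m r| - C),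
      sq_nonneg (|m r| + C)]
  have hbound : ∀ r, 1 ≤ r → |r ^ n * m' r| ≤ |m' 1| + (S r - S 1) + C ^ 2 * r ^ (n + 1) := by
    intro r hr
    refine abs_le_of_abs_deriv_le (a := 1)
      (g := fun r => |m' 1| + (S r - S 1) + C ^ 2 * r ^ (n + 1))
      (fun t ht => hm.hasDerivAt_pow_mul_deriv (one_pos.trans_le ht))
      (fun t ht => (((hS t (one_pos.trans_le ht)).sub_const (S 1)).const_add |m' 1|).add
        ((hasDerivAt_pow (n + 1) t).const_mul (C ^ 2))) ?_ (fun t ht => ?_) hr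
    · simpa only [one_pow, one_mul, sub_self, add_zero, mul_one] using
        le_add_of_nonneg_right (sq_nonneg C)
    · have htn : 0 ≤ t ^ n := by positivity
      rw [abs_neg, abs_mul, abs_of_nonneg htn, Nat.add_sub_cancel]
      push_cast
      have hextra : 0 ≤ C ^ 2 * (n * t ^ n) := by positivity
      linarith [mul_le_mul_of_nonneg_left (hqm t ht) htn]
  refine ⟨|m' 1| + T + C ^ 2, by positivity, fun r hr => ?_⟩
  have hrn : 1 ≤ r ^ n := one_le_pow₀ hr
  calc |m' r| ≤ |r ^ n * m' r| := by
        rw [abs_mul, abs_of_nonneg (zero_le_one.trans hrn)]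
        exact le_mul_of_one_le_left (abs_nonneg _) hrn
    _ ≤ |m' 1| + T + C ^ 2 * r ^ (n + 1) := by
        linarith [hbound r hr, (hST r (by positivity)).2, (hST 1 one_pos).1]
    _ ≤ (|m' 1| + T + C ^ 2) * r ^ (n + 1) := by
        nlinarith [one_le_pow₀ hr (n := n + 1), abs_nonneg (m' 1)]

theorem exists_isBigO_pow {C : ℝ} (hm : IsRadialSolution n q m m')
    (hq : ∀ r, 1 ≤ r → |q r| ≤ C) (hint : IntegrableOn (fun r => r ^ n * m r ^ 2) (Ioi 0)) :
    ∃ K : ℕ, m =O[atTop] (fun r => r ^ K) ∧ m' =O[atTop] fun r => r ^ K := by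
  obtain ⟨A, hA, hm'⟩ := hm.exists_abs_deriv_le_pow hq hint
  refine ⟨n + 2, IsBigO.of_bound (|m 1| + A) ?_, IsBigO.of_bound A ?_⟩
  · filter_upwards [eventually_ge_atTop 1] with r hr
    have hmr : |m r| ≤ |m 1| + A * r ^ (n + 2) := by
      refine abs_le_of_abs_deriv_le (a := 1) (g := fun r => |m 1| + A * r ^ (n + 2))
        (fun t ht => hm.hasDerivAt t (one_pos.trans_le ht))
        (fun t _ => ((hasDerivAt_pow (n + 2) t).const_mul A).const_add |m 1|) ?_
        (fun t ht => (hm' t ht).trans ?_) hr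
      · simpa only [one_pow, mul_one] using le_add_of_nonneg_right hA
      · rw [show n + 2 - 1 = n + 1 by omega]
        push_cast
        have hextra : 0 ≤ A * ((n + 1) * t ^ (n + 1)) := by positivity
        linarith
    rw [norm_eq_abs, norm_of_nonneg (by positivity)]
    nlinarith [one_le_pow₀ hr (n := n + 2), abs_nonneg (m 1)]
  · filter_upwards [eventually_ge_atTop 1] with r hr
    rw [norm_eq_abs, norm_of_nonneg (by positivity)]
    exact (hm' r hr).trans (by gcongr; simp)

theorem hasDerivAt_radialWronskian {f f' : ℝ → ℝ} {s r : ℝ} (hm : IsRadialSolution n q m m')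
    (hr : 0 < r) (hf : HasDerivAt f (f' r) r)
    (hf' : HasDerivAt f' (-(n / r) * f' r - q r * f r + s) r) :
    HasDerivAt (radialWronskian n m m' f f') (-(r ^ n * (m r * s))) r := by
  refine (hasDerivAt_pow_mul n hr.ne' (((hm.hasDerivAt_deriv r hr).mul hf).sub
    ((hm.hasDerivAt r hr).mul hf'))).congr_deriv ?_
  simp only [Pi.mul_apply, Pi.sub_apply]
  ring

theorem tendsto_radialWronskian_atTop {C : ℝ} {f f' : ℝ → ℝ} (hm : IsRadialSolution n q m m')
    (hq : ∀ r, 1 ≤ r → |q r| ≤ C) (hint : IntegrableOn (fun r => r ^ n * m r ^ 2) (Ioi 0))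
    (hf : SuperpolynomialDecay atTop id f) (hf' : SuperpolynomialDecay atTop id f') :
    Tendsto (radialWronskian n m m' f f') atTop (𝓝 0) := by
  obtain ⟨K, hmK, hm'K⟩ := hm.exists_isBigO_pow hq hint
  have hpow_mul : ∀ {g k : ℝ → ℝ}, g =O[atTop] (fun r => r ^ K) → SuperpolynomialDecay atTop id k →
      Tendsto (fun r => r ^ n * (g r * k r)) atTop (𝓝 0) := fun {g k} hg hk => by
    refine (((isBigO_refl (fun r : ℝ => r ^ n) atTop).mul
      (hg.mul (isBigO_refl k atTop))).trans_tendsto ((hk (n + K)).congr fun r => ?_))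
    simp only [id, pow_add]
    ring
  refine ((hpow_mul hm'K hf).sub (hpow_mul hmK hf')).congr' ?_ |>.trans (by rw [sub_zero])
  exact Eventually.of_forall fun r => (mul_sub _ _ _).symm

-- Gronwall's inequality for the energy `m² + m'²`, run backwards from `z`.
theorem eq_zero_of_le {z r : ℝ} (hm : IsRadialSolution n q m m') (hq : ContinuousOn q (Ioi 0))
    (hz : m z = 0) (hz' : m' z = 0) (hr : 0 < r) (hrz : r ≤ z) : m r = 0 := by
  obtain ⟨C, hC⟩ := isCompact_Icc.exists_bound_of_continuousOn
    (hq.mono fun x (hx : x ∈ Icc r z) => hr.trans_le hx.1)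
  set L := 1 + C + 2 * (n / r)
  have hmono : (m r ^ 2 + m' r ^ 2) * exp (L * r) ≤ (m z ^ 2 + m' z ^ 2) * exp (L * z) := by
    refine le_of_deriv_nonneg (f := fun r => (m r ^ 2 + m' r ^ 2) * exp (L * r)) (f' := fun r =>
      (2 * m r * m' r + 2 * m' r * (-(n / r) * m' r - q r * m r) + L * (m r ^ 2 + m' r ^ 2)) *
        exp (L * r)) (fun t ht => ?_) hr hrz fun t ht => mul_nonneg ?_ (exp_pos _).le
    · refine ((((hm.hasDerivAt t ht).pow 2).add ((hm.hasDerivAt_deriv t ht).pow 2)).mul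
        (((hasDerivAt_id t).const_mul L).exp)).congr_deriv ?_
      simp only [id, Pi.add_apply, Pi.pow_apply]
      ring
    · have hqt := abs_le.1 (hC t ⟨ht.1.le, ht.2.le⟩)
      have hnt : (n : ℝ) / t ≤ n / r := by gcongr; exact ht.1.le
      have hn0 : 0 ≤ (n : ℝ) / r * m t ^ 2 := by positivity
      linarith [mul_nonneg (sub_nonneg.2 hnt) (sq_nonneg (m' t)), sq_nonneg (m t + m' t),
        mul_nonneg (neg_le_iff_add_nonneg.1 hqt.1) (sq_nonneg (m t - m' t)),
        mul_nonneg (sub_nonneg.2 hqt.2) (sq_nonneg (m t + m' t))]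
  rw [hz, hz', zero_pow two_ne_zero, add_zero, zero_mul] at hmono
  have henergy := nonpos_of_mul_nonpos_left hmono (exp_pos _)
  have hsq : m r ^ 2 ≤ 0 := by linarith [sq_nonneg (m' r)]
  exact pow_eq_zero_iff two_ne_zero |>.1 (hsq.antisymm (sq_nonneg _))

theorem mul_deriv_nonneg_of_zero {z r : ℝ} (hm : IsRadialSolution n q m m') (hz : 0 < z)
    (hq : ∀ r, z ≤ r → q r < 0) (hmz : m z = 0) (hr : z ≤ r) : 0 ≤ m r * m' r := by
  have hmono : z ^ n * (m z * m' z) ≤ r ^ n * (m r * m' r) := by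
    refine le_of_deriv_nonneg (f := fun r => r ^ n * (m r * m' r))
      (f' := fun r => r ^ n * (m' r ^ 2 - q r * m r ^ 2)) (fun t ht => ?_) hz hr fun t ht => ?_
    · refine (hasDerivAt_pow_mul n ht.ne'
        ((hm.hasDerivAt t ht).mul (hm.hasDerivAt_deriv t ht))).congr_deriv ?_
      simp only [Pi.mul_apply]
      ring
    · refine mul_nonneg (pow_nonneg (hz.trans ht.1).le n) ?_
      nlinarith [hq t ht.1.le, sq_nonneg (m t), sq_nonneg (m' t)]
  rw [hmz, zero_mul, mul_zero] at hmono
  exact nonneg_of_mul_nonneg_right hmono (pow_pos (hz.trans_le hr) n)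

theorem eq_zero_of_gt {z r : ℝ} (hm : IsRadialSolution n q m m')
    (hint : IntegrableOn (fun r => r ^ n * m r ^ 2) (Ioi 0)) (hz : 0 < z)
    (hq : ∀ r, z ≤ r → q r < 0) (hmz : m z = 0) (hr : z < r) : m r = 0 := by
  by_contra hmr
  have hr0 := hz.trans hr
  have hmono : ∀ t, r ≤ t → m r ^ 2 ≤ m t ^ 2 := fun t ht =>
    le_of_deriv_nonneg (f := fun r => m r ^ 2) (f' := fun r => 2 * (m r * m' r))
      (fun x hx => ((hm.hasDerivAt x hx).pow 2).congr_deriv (by ring)) hr0 ht fun x hx =>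
        mul_nonneg zero_le_two (hm.mul_deriv_nonneg_of_zero hz hq hmz (hr.le.trans hx.1.le))
  have hconst : IntegrableOn (fun _ : ℝ => r ^ n * m r ^ 2) (Ioi r) := by
    refine Integrable.mono' (hint.mono_set (Ioi_subset_Ioi hr0.le)) aestronglyMeasurable_const ?_
    filter_upwards [ae_restrict_mem measurableSet_Ioi] with t ht
    have hrt : r ≤ t := le_of_lt ht
    rw [norm_of_nonneg (by positivity)]
    exact mul_le_mul (pow_le_pow_left₀ hr0.le hrt n) (hmono t hrt) (sq_nonneg _)
      (pow_nonneg (hr0.le.trans hrt) n)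
  rw [integrableOn_const_iff, volume_Ioi] at hconst
  exact hconst.elim (fun h => (by positivity : r ^ n * m r ^ 2 ≠ 0) (enorm_eq_zero.1 h))
    (lt_irrefl _)

theorem ne_zero_of_potential_neg {z s : ℝ} (hm : IsRadialSolution n q m m')
    (hint : IntegrableOn (fun r => r ^ n * m r ^ 2) (Ioi 0)) (hqc : ContinuousOn q (Ioi 0))
    (hz : 0 < z) (hq : ∀ r, z ≤ r → q r < 0) (hs : 0 < s) (hms : m s ≠ 0) : m z ≠ 0 := by
  intro hmz
  have hzero : ∀ r ∈ Ioi z, m r = 0 := fun r hr => hm.eq_zero_of_gt hint hz hq hmz hr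
  have hr : z < max (z + 1) s := (lt_add_one z).trans_le (le_max_left _ _)
  have hm'r : m' (max (z + 1) s) = 0 := (hm.hasDerivAt _ (hz.trans hr)).unique
    ((hasDerivAt_const _ 0).congr_of_eventuallyEq (eventuallyEq_of_mem (Ioi_mem_nhds hr) hzero))
  exact hms (hm.eq_zero_of_le hqc (hzero _ hr) hm'r hs (le_max_right _ _))

end IsRadialSolution

end RadialEquation

/-! ### Nondegeneracy of radial profiles -/

section RadialProfile

open Set Asymptotics

theorem tendsto_zero_of_superpolynomialDecay {f : ℝ → ℝ} (hf : SuperpolynomialDecay atTop id f) :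
    Tendsto f atTop (𝓝 0) := by
  simpa only [pow_zero, one_mul] using hf 0

/-- A positive decreasing rapidly decaying solution of `v'' + (n / r) v' + g = 0` on `(0, ∞)`, where
`g = γ(v)`, `q = γ'(v)` and `G = Γ(v)` come from a nonlinearity `γ` with primitive `Γ`, all of them
recorded as functions of `r`. The fields `crossesUp` and `pos_of_nonpos` encode the shape of `γ`
that makes the linearized equation nondegenerate among radial functions. -/
structure RadialProfile (n : ℕ) (v v' g q G : ℝ → ℝ) : Prop where
  hasDerivAt : ∀ r, 0 < r → HasDerivAt v (v' r) r
  hasDerivAt_deriv : ∀ r, 0 < r → HasDerivAt v' (-(n / r) * v' r - g r) r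
  hasDerivAt_nonlinearity : ∀ r, 0 < r → HasDerivAt g (q r * v' r) r
  hasDerivAt_primitive : ∀ r, 0 < r → HasDerivAt G (g r * v' r) r
  pos : ∀ r, 0 < r → 0 < v r
  deriv_neg : ∀ r, 0 < r → v' r < 0
  crossesUp : ∀ α β : ℝ, 0 ≤ α → α ≤ β → 0 < β → CrossesUp fun r => α * (v r * q r) - β * g r
  pos_of_nonpos : ∀ r, 0 < r → g r ≤ 0 → 0 < v r * q r - g r
  decay : SuperpolynomialDecay atTop id v
  decay_deriv : SuperpolynomialDecay atTop id v'
  decay_nonlinearity : SuperpolynomialDecay atTop id g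
  decay_primitive : SuperpolynomialDecay atTop id G
  tendsto_zero : Tendsto v (𝓝[>] 0) (𝓝 (v 0))
  tendsto_zero_deriv : Tendsto v' (𝓝[>] 0) (𝓝 0)
  tendsto_zero_nonlinearity : Tendsto g (𝓝[>] 0) (𝓝 (g 0))
  tendsto_zero_primitive : Tendsto G (𝓝[>] 0) (𝓝 (G 0))
  nonlinearity_zero_pos : 0 < g 0
  potential_neg : ∃ R > 0, ∀ r, R ≤ r → q r < 0
  potential_bound : ∃ C, ∀ r, 1 ≤ r → |q r| ≤ C
  continuousOn_potential : ContinuousOn q (Ioi 0)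

/-- A square integrable solution of `m'' + (n / r) m' + q m = 0` that is regular at the origin. -/
structure IsRegularRadialSolution (n : ℕ) (q m m' : ℝ → ℝ) : Prop
    extends IsRadialSolution n q m m' where
  integrableOn : IntegrableOn (fun r => r ^ n * m r ^ 2) (Ioi 0)
  tendsto_zero : Tendsto m (𝓝[>] 0) (𝓝 (m 0))
  tendsto_zero_deriv : Tendsto m' (𝓝[>] 0) (𝓝 0)

namespace RadialProfile

variable {n : ℕ} {v v' g q G : ℝ → ℝ}

-- Pohozaev's identity: the left side has derivative `rⁿ ((n + 1) G - (n - 1) / 2 * v g)`.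
theorem pohozaev_pos (h : RadialProfile n v v' g q G) (hn : 1 ≤ n) {r : ℝ} (hr : 0 < r) :
    0 < r ^ n * (r * (v' r ^ 2 / 2 + G r) + (n - 1) / 2 * (v r * v' r)) := by
  have hn1 : (1 : ℝ) ≤ n := by exact_mod_cast hn
  have hZ := h.crossesUp (n - 1) (n + 3) (by linarith) (by linarith) (by linarith)
  set Q : ℝ → ℝ := fun r => (n + 1) * G r - (n - 1) / 2 * (v r * g r)
  have hQ : CrossesUp fun r => -Q r := by
    refine hZ.neg_of_deriv (k := fun r => -v' r / 2)
      (fun r hr => by linarith [h.deriv_neg r hr]) (fun r hr => ?_) ?_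
    · refine (((h.hasDerivAt_primitive r hr).const_mul _).sub
        (((h.hasDerivAt r hr).mul (h.hasDerivAt_nonlinearity r hr)).const_mul _)).congr_deriv ?_
      ring
    · simpa only [mul_zero, sub_zero] using!
        ((tendsto_zero_of_superpolynomialDecay h.decay_primitive).const_mul _).sub
          ((tendsto_zero_of_superpolynomialDecay (h.decay.mul h.decay_nonlinearity)).const_mul _)
  refine hQ.pos_of_deriv (k := fun r => r ^ n) (fun r hr => pow_pos hr n)
    (F := fun r => r ^ n * (r * (v' r ^ 2 / 2 + G r) + (n - 1) / 2 * (v r * v' r)))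
    (fun r hr => ?_) ?_ ?_ hr
  · refine (hasDerivAt_pow_mul n hr.ne' (((hasDerivAt_id r).mul
      ((((h.hasDerivAt_deriv r hr).pow 2).div_const 2).add (h.hasDerivAt_primitive r hr))).add
      (((h.hasDerivAt r hr).mul (h.hasDerivAt_deriv r hr)).const_mul _))).congr_deriv ?_
    simp only [Q, id, Pi.add_apply, Pi.mul_apply, Pi.pow_apply]
    field_simp
    ring
  · simpa only [zero_mul, mul_zero] using (tendsto_pow_nhdsGT_zero (by omega : n ≠ 0)).mul
      ((tendsto_id_nhdsGT_zero.mul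
        (((h.tendsto_zero_deriv.pow 2).div_const 2).add h.tendsto_zero_primitive)).add
        ((h.tendsto_zero.mul h.tendsto_zero_deriv).const_mul _))
  · have hdecay := ((((h.decay_deriv.mul h.decay_deriv).const_mul (1 / 2)).add
      h.decay_primitive).param_mul.add ((h.decay.mul h.decay_deriv).const_mul ((n - 1) / 2))) n
    refine hdecay.congr fun r => ?_
    simp only [id, Pi.add_apply, Pi.mul_apply]
    ring

theorem two_mul_primitive_lt (h : RadialProfile n v v' g q G) {r : ℝ} (hr : 0 < r)
    (hI : 0 ≤ v r * q r - g r) : 2 * G r < g r * v r := by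
  have hup := h.crossesUp 1 1 zero_le_one le_rfl one_pos
  simp only [one_mul] at hup
  rw [← sub_neg]
  refine lt_limit_of_deriv_pos (f := fun r => 2 * G r - g r * v r)
    (f' := fun r => -v' r * (v r * q r - g r)) (fun t ht => ?_) hr (fun t ht => ?_) ?_
  · refine (((h.hasDerivAt_primitive t ht).const_mul 2).sub
      ((h.hasDerivAt_nonlinearity t ht).mul (h.hasDerivAt t ht))).congr_deriv ?_
    ring
  · exact mul_pos (neg_pos.2 (h.deriv_neg t (hr.trans ht))) (hup.pos_of_nonneg hr ht hI)
  · simpa only [mul_zero, sub_zero] using!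
      ((tendsto_zero_of_superpolynomialDecay h.decay_primitive).const_mul 2).sub
        (tendsto_zero_of_superpolynomialDecay (h.decay_nonlinearity.mul h.decay))

theorem logDeriv_numerator_pos_of_neg (h : RadialProfile n v v' g q G) (hn : 1 ≤ n) {r : ℝ}
    (hr : 0 < r) (hI : v r * q r - g r < 0) :
    0 < r ^ n * ((n - 1) * (v r * v' r) + r * (v' r ^ 2 + g r * v r)) := by
  have hup := h.crossesUp 1 1 zero_le_one le_rfl one_pos
  simp only [one_mul] at hup
  refine limit_lt_of_deriv_pos
    (f := fun r => r ^ n * ((n - 1) * (v r * v' r) + r * (v' r ^ 2 + g r * v r)))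
    (f' := fun r => r ^ n * (2 * (g r * v r) + r * (v' r * (v r * q r - g r))))
    (fun t ht => ?_) hr (fun t ht => ?_) ?_
  · refine (hasDerivAt_pow_mul n ht.ne' ((((h.hasDerivAt t ht).mul
      (h.hasDerivAt_deriv t ht)).const_mul ((n : ℝ) - 1)).add ((hasDerivAt_id t).mul
      (((h.hasDerivAt_deriv t ht).pow 2).add
        ((h.hasDerivAt_nonlinearity t ht).mul (h.hasDerivAt t ht)))))).congr_deriv ?_
    simp only [id, Pi.add_apply, Pi.mul_apply, Pi.pow_apply]
    field_simp
    ring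
  · obtain ⟨ht0, htr⟩ := ht
    have hIt : v t * q t - g t < 0 := hup t r ht0 htr hI.le
    have hgt : 0 < g t := not_le.1 fun hg => (h.pos_of_nonpos t ht0 hg).not_gt hIt
    have hvt := h.pos t ht0
    have hprod := mul_pos_of_neg_of_neg (h.deriv_neg t ht0) hIt
    positivity
  · simpa only [zero_mul] using (tendsto_pow_nhdsGT_zero (by omega : n ≠ 0)).mul
      (((h.tendsto_zero.mul h.tendsto_zero_deriv).const_mul ((n : ℝ) - 1)).add
        (tendsto_id_nhdsGT_zero.mul
          ((h.tendsto_zero_deriv.pow 2).add (h.tendsto_zero_nonlinearity.mul h.tendsto_zero))))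

theorem logDeriv_numerator_pos (h : RadialProfile n v v' g q G) (hn : 1 ≤ n) {r : ℝ}
    (hr : 0 < r) : 0 < r ^ n * ((n - 1) * (v r * v' r) + r * (v' r ^ 2 + g r * v r)) := by
  rcases lt_or_ge (v r * q r - g r) 0 with hI | hI
  · exact h.logDeriv_numerator_pos_of_neg hn hr hI
  · have hG := mul_pos (mul_pos (pow_pos hr n) hr) (sub_pos.2 (h.two_mul_primitive_lt hr hI))
    linarith [h.pohozaev_pos hn hr]

theorem mul_logDeriv_strictAnti (h : RadialProfile n v v' g q G) (hn : 1 ≤ n) {a b : ℝ}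
    (ha : 0 < a) (hab : a < b) : b * v' b / v b < a * v' a / v a := by
  rw [← neg_lt_neg_iff]
  refine lt_of_deriv_pos (f := fun r => -(r * v' r / v r)) (f' := fun r =>
    r ^ n * ((n - 1) * (v r * v' r) + r * (v' r ^ 2 + g r * v r)) / (r ^ n * v r ^ 2))
    (fun r hr => ?_) ha hab fun r hr => ?_
  · have hvr := (h.pos r hr).ne'
    refine ((((hasDerivAt_id r).mul (h.hasDerivAt_deriv r hr)).div (h.hasDerivAt r hr)
      hvr).neg).congr_deriv ?_
    simp only [id, Pi.mul_apply]
    field_simp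
    ring
  · have hr0 := ha.trans hr.1
    have hvr := h.pos r hr0
    exact div_pos (h.logDeriv_numerator_pos hn hr0) (by positivity)

end RadialProfile

namespace IsRegularRadialSolution

variable {n : ℕ} {v v' g q G m m' : ℝ → ℝ}

theorem neg (hm : IsRegularRadialSolution n q m m') : IsRegularRadialSolution n q (-m) (-m') where
  toIsRadialSolution := hm.toIsRadialSolution.neg
  integrableOn := by simpa only [Pi.neg_apply, neg_sq] using hm.integrableOn
  tendsto_zero := hm.tendsto_zero.neg
  tendsto_zero_deriv := by simpa only [neg_zero] using! hm.tendsto_zero_deriv.neg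

theorem hasDerivAt_radialWronskian_deriv (hm : IsRegularRadialSolution n q m m')
    (h : RadialProfile n v v' g q G) {r : ℝ} (hr : 0 < r) :
    HasDerivAt (radialWronskian n m m' v' fun r => -(n / r) * v' r - g r)
      (-(r ^ n * (m r * (n / r ^ 2 * v' r)))) r := by
  refine hm.hasDerivAt_radialWronskian hr (h.hasDerivAt_deriv r hr) ?_
  refine ((((hasDerivAt_inv hr.ne').const_mul (n : ℝ)).neg.mul (h.hasDerivAt_deriv r hr)).sub
    (h.hasDerivAt_nonlinearity r hr)).congr_deriv ?_
  simp only [Pi.neg_apply]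
  field_simp
  ring

theorem tendsto_radialWronskian_deriv_atTop (hm : IsRegularRadialSolution n q m m')
    (h : RadialProfile n v v' g q G) :
    Tendsto (radialWronskian n m m' v' fun r => -(n / r) * v' r - g r) atTop (𝓝 0) := by
  obtain ⟨C, hC⟩ := h.potential_bound
  refine hm.tendsto_radialWronskian_atTop hC hm.integrableOn h.decay_deriv ?_
  refine (((h.decay_deriv.inv_param_mul tendsto_id).const_mul (-n)).add
    (h.decay_nonlinearity.const_mul (-1))).congr fun r => ?_
  simp only [Pi.add_apply, Pi.mul_apply, Pi.inv_apply, id]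
  ring

theorem radialWronskian_deriv_neg (hm : IsRegularRadialSolution n q m m')
    (h : RadialProfile n v v' g q G) (hn : 1 ≤ n) {z : ℝ} (hz : 0 < z)
    (hpos : ∀ r, z < r → 0 < m r) :
    radialWronskian n m m' v' (fun r => -(n / r) * v' r - g r) z < 0 := by
  refine lt_limit_of_deriv_pos (fun r hr => hm.hasDerivAt_radialWronskian_deriv h hr) hz
    (fun r hr => ?_) (hm.tendsto_radialWronskian_deriv_atTop h)
  have hr0 := hz.trans hr
  have hmv := mul_neg_of_pos_of_neg (hpos r hr) (h.deriv_neg r hr0)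
  have hpow : 0 < r ^ n * (n / r ^ 2) := by positivity
  linarith [mul_neg_of_pos_of_neg hpow hmv]

theorem deriv_pos_of_last_zero (hm : IsRegularRadialSolution n q m m')
    (h : RadialProfile n v v' g q G) (hn : 1 ≤ n) {z : ℝ} (hz : 0 < z) (hmz : m z = 0)
    (hpos : ∀ r, z < r → 0 < m r) : 0 < m' z := by
  have hW := hm.radialWronskian_deriv_neg h hn hz hpos
  rw [radialWronskian, hmz, zero_mul, sub_zero] at hW
  exact pos_of_mul_neg_left (neg_of_mul_neg_right hW (pow_nonneg hz.le n)) (h.deriv_neg z hz).le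

theorem exists_nonpos (hm : IsRegularRadialSolution n q m m')
    (h : RadialProfile n v v' g q G) (hn : 1 ≤ n) : ∃ r, 0 < r ∧ m r ≤ 0 := by
  by_contra! hpos
  have hW := hm.radialWronskian_deriv_neg h hn one_pos fun r hr => hpos r (one_pos.trans hr)
  refine hW.not_gt (limit_lt_of_deriv_pos (fun r hr => hm.hasDerivAt_radialWronskian_deriv h hr)
    one_pos (fun r hr => ?_) ?_)
  · have hr0 := hr.1
    have hmv := mul_neg_of_pos_of_neg (hpos r hr0) (h.deriv_neg r hr0)
    have hpow : 0 < r ^ n * (n / r ^ 2) := by positivity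
    linarith [mul_neg_of_pos_of_neg hpow hmv]
  · obtain ⟨k, rfl⟩ : ∃ k, n = k + 1 := ⟨n - 1, by omega⟩
    have hmv : Tendsto (fun r => m r * v' r) (𝓝[>] 0) (𝓝 0) := by
      simpa only [mul_zero] using hm.tendsto_zero.mul h.tendsto_zero_deriv
    have hlim := ((tendsto_pow_nhdsGT_zero k.succ_ne_zero).mul
      ((hm.tendsto_zero_deriv.mul h.tendsto_zero_deriv).add
        (hm.tendsto_zero.mul h.tendsto_zero_nonlinearity))).add
      ((((tendsto_id_nhdsGT_zero.pow k).mul hmv)).const_mul ((k : ℝ) + 1))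
    simp only [mul_zero, zero_mul, add_zero] at hlim
    refine hlim.congr' ?_
    filter_upwards [self_mem_nhdsWithin] with r hr
    have hr0 : r ≠ 0 := ne_of_gt hr
    rw [radialWronskian, pow_succ]
    push_cast
    field_simp
    ring

theorem hasDerivAt_radialWronskian_scaling (hm : IsRegularRadialSolution n q m m')
    (h : RadialProfile n v v' g q G) (c : ℝ) {r : ℝ} (hr : 0 < r) :
    HasDerivAt (radialWronskian n m m' (fun r => r * v' r + c * v r)
        fun r => (1 - n + c) * v' r - r * g r)
      (-(r ^ n * (m r * (c * (v r * q r) - (c + 2) * g r)))) r := by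
  refine hm.hasDerivAt_radialWronskian hr ((((hasDerivAt_id r).mul (h.hasDerivAt_deriv r hr)).add
    ((h.hasDerivAt r hr).const_mul c)).congr_deriv ?_)
    ((((h.hasDerivAt_deriv r hr).const_mul (1 - n + c)).sub
      ((hasDerivAt_id r).mul (h.hasDerivAt_nonlinearity r hr))).congr_deriv ?_) <;>
  · simp only [id]
    field_simp
    ring

theorem tendsto_radialWronskian_scaling_atTop (hm : IsRegularRadialSolution n q m m')
    (h : RadialProfile n v v' g q G) (c : ℝ) :
    Tendsto (radialWronskian n m m' (fun r => r * v' r + c * v r)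
      fun r => (1 - n + c) * v' r - r * g r) atTop (𝓝 0) := by
  obtain ⟨C, hC⟩ := h.potential_bound
  refine hm.tendsto_radialWronskian_atTop hC hm.integrableOn
    (h.decay_deriv.param_mul.add (h.decay.const_mul c)) ?_
  refine ((h.decay_deriv.const_mul (1 - n + c)).add
    (h.decay_nonlinearity.param_mul.const_mul (-1))).congr fun r => ?_
  simp only [Pi.add_apply, Pi.mul_apply, id]
  ring

theorem tendsto_radialWronskian_scaling_zero (hm : IsRegularRadialSolution n q m m')
    (h : RadialProfile n v v' g q G) (hn : 1 ≤ n) (c : ℝ) :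
    Tendsto (radialWronskian n m m' (fun r => r * v' r + c * v r)
      fun r => (1 - n + c) * v' r - r * g r) (𝓝[>] 0) (𝓝 0) := by
  simpa only [zero_mul] using! (tendsto_pow_nhdsGT_zero (by omega : n ≠ 0)).mul
    ((hm.tendsto_zero_deriv.mul ((tendsto_id_nhdsGT_zero.mul h.tendsto_zero_deriv).add
      (h.tendsto_zero.const_mul c))).sub
      (hm.tendsto_zero.mul ((h.tendsto_zero_deriv.const_mul (1 - (n : ℝ) + c)).sub
        (tendsto_id_nhdsGT_zero.mul h.tendsto_zero_nonlinearity))))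

theorem scaling_source_neg_of_last_zero (hm : IsRegularRadialSolution n q m m')
    (h : RadialProfile n v v' g q G) {c z : ℝ} (hc : 0 < c) (hcz : z * v' z + c * v z = 0)
    (hz : 0 < z) (hmz : m z = 0) (hpos : ∀ r, z < r → 0 < m r) :
    c * (v z * q z) - (c + 2) * g z < 0 := by
  have hI := h.crossesUp c (c + 2) hc.le (by linarith) (by linarith)
  by_contra! hcon
  refine (limit_lt_of_deriv_neg (fun r hr => hm.hasDerivAt_radialWronskian_scaling h c hr) hz
    (fun r hr => ?_) (hm.tendsto_radialWronskian_scaling_atTop h c)).ne ?_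
  · exact neg_neg_of_pos (mul_pos (pow_pos (hz.trans hr) n)
      (mul_pos (hpos r hr) (hI.pos_of_nonneg hz hr hcon)))
  · simp only [radialWronskian, hmz, hcz, mul_zero, zero_mul, sub_zero]

-- The constant `c = -z v'(z) / v(z)` makes `r v' + c v` vanish at `z`, so the Wronskian `W` of `m`
-- with `r v' + c v` vanishes at `z`. Following `W` down to the previous zero of `m`, or to the
-- origin, gives a contradiction.
theorem exists_nonpos_of_zero (hm : IsRegularRadialSolution n q m m')
    (h : RadialProfile n v v' g q G) (hn : 1 ≤ n) {z : ℝ} (hz : 0 < z) (hmz : m z = 0) :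
    ∃ r, z < r ∧ m r ≤ 0 := by
  by_contra! hpos
  set c := -(z * v' z / v z) with hc
  have hc0 : 0 < c := neg_pos.2
    (div_neg_of_neg_of_pos (mul_neg_of_pos_of_neg hz (h.deriv_neg z hz)) (h.pos z hz))
  have hcz : z * v' z + c * v z = 0 := by
    rw [hc, neg_mul, div_mul_cancel₀ _ (h.pos z hz).ne', add_neg_cancel]
  set W := radialWronskian n m m' (fun r => r * v' r + c * v r)
    fun r => (1 - n + c) * v' r - r * g r
  have hWz : -W z = 0 := by
    simp only [W, radialWronskian, hmz, hcz, mul_zero, zero_mul, sub_zero, neg_zero]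
  set I : ℝ → ℝ := fun r => c * (v r * q r) - (c + 2) * g r
  have hW : ∀ r, 0 < r → HasDerivAt (fun r => -W r) (r ^ n * (m r * I r)) r := fun r hr =>
    (hm.hasDerivAt_radialWronskian_scaling h c hr).neg.congr_deriv (neg_neg _)
  have hW' : ∀ r, 0 < r → r < z → m r < 0 → 0 < r ^ n * (m r * I r) := fun r hr hrz hmr =>
    mul_pos (pow_pos hr n) (mul_pos_of_neg_of_neg hmr
      (h.crossesUp c (c + 2) hc0.le (by linarith) (by linarith) r z hr hrz
        (hm.scaling_source_neg_of_last_zero h hc0 hcz hz hmz hpos).le))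
  have hmneg := eventually_nhdsLT_neg_of_deriv_pos (hm.hasDerivAt z hz)
    (hm.deriv_pos_of_last_zero h hn hz hmz hpos) hmz
  rcases neg_on_Ioo_or_exists_zero hz (hm.continuousOn.mono Ioo_subset_Ioi_self) hmneg with
    hneg | ⟨y, ⟨hy, hyz⟩, hmy, hneg⟩
  · refine (limit_lt_of_deriv_pos hW hz (fun r hr => hW' r hr.1 hr.2 (hneg r hr)) ?_).ne' hWz
    simpa only [neg_zero] using (hm.tendsto_radialWronskian_scaling_zero h hn c).neg
  · have hWy := lt_of_deriv_pos hW hy hyz fun r hr => hW' r (hy.trans hr.1) hr.2 (hneg r hr)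
    have hm'y : m' y ≤ 0 := nonpos_deriv_of_eventually_nhdsGT_neg (hm.hasDerivAt y hy) hmy
      (mem_of_superset (Ioo_mem_nhdsGT hyz) hneg)
    have hlog := h.mul_logDeriv_strictAnti hn hy hyz
    rw [lt_div_iff₀ (h.pos y hy)] at hlog
    rw [hWz] at hWy
    simp only [W, radialWronskian, hmy, zero_mul, sub_zero] at hWy
    linarith [mul_nonpos_of_nonneg_of_nonpos (pow_nonneg hy.le n)
      (mul_nonpos_of_nonpos_of_nonneg hm'y (by linarith : 0 ≤ y * v' y + c * v y))]

theorem eq_zero_of_one_le (hm : IsRegularRadialSolution n q m m')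
    (h : RadialProfile n v v' g q G) (hn : 1 ≤ n) {r : ℝ} (hr : 0 < r) : m r = 0 := by
  by_contra hmr
  obtain ⟨R, hR, hq⟩ := h.potential_neg
  have hne : ∀ z, R ≤ z → m z ≠ 0 := fun z hz =>
    hm.ne_zero_of_potential_neg hm.integrableOn h.continuousOn_potential (hR.trans_le hz)
      (fun t ht => hq t (hz.trans ht)) hr hmr
  by_cases hzero : ∃ z, 0 < z ∧ m z = 0
  · obtain ⟨x, hx, hmx⟩ := hzero
    have hxR : x ≤ R := not_lt.1 fun hRx => hne x hRx.le hmx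
    obtain ⟨z, hz, hmz, hnez⟩ := exists_last_zero hxR
      (hm.continuousOn.mono fun t ht => hx.trans_le ht.1) hmx
    have hz0 : 0 < z := hx.trans_le hz.1
    have hne' : ∀ t ∈ Ioi z, m t ≠ 0 := fun t ht => (le_total t R).elim
      (fun htR => hnez t ⟨ht, htR⟩) (hne t)
    rcases pos_or_neg_of_ne_zero isPreconnected_Ioi
      (hm.continuousOn.mono (Ioi_subset_Ioi hz0.le)) hne' with hpos | hneg
    · obtain ⟨t, hzt, hmt⟩ := hm.exists_nonpos_of_zero h hn hz0 hmz
      exact (hpos t hzt).not_ge hmt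
    · obtain ⟨t, hzt, hmt⟩ := hm.neg.exists_nonpos_of_zero h hn hz0 (neg_eq_zero.2 hmz)
      exact (hneg t hzt).not_ge (neg_nonpos.1 hmt)
  · push Not at hzero
    rcases pos_or_neg_of_ne_zero isPreconnected_Ioi hm.continuousOn hzero with hpos | hneg
    · obtain ⟨t, ht, hmt⟩ := hm.exists_nonpos h hn
      exact (hpos t ht).not_ge hmt
    · obtain ⟨t, ht, hmt⟩ := hm.neg.exists_nonpos h hn
      exact (hneg t ht).not_ge (neg_nonpos.1 hmt)

-- In dimension one `v'` itself solves the linearized equation, but it is odd.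
theorem eq_zero_of_dim_one (hm : IsRegularRadialSolution 0 q m m')
    (h : RadialProfile 0 v v' g q G) {r : ℝ} (hr : 0 < r) : m r = 0 := by
  have hW : ∀ r ∈ Ioi (0 : ℝ), HasDerivAt (radialWronskian 0 m m' v'
      fun r => -((0 : ℕ) / r) * v' r - g r) 0 r := fun r hr =>
    (hm.hasDerivAt_radialWronskian_deriv h hr).congr_deriv (by simp)
  obtain ⟨W₀, hconst⟩ := isOpen_Ioi.exists_is_const_of_deriv_eq_zero isPreconnected_Ioi
    (fun r hr => (hW r hr).differentiableAt.differentiableWithinAt) fun r hr => (hW r hr).deriv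
  have hW₀ : W₀ = 0 := tendsto_nhds_unique (tendsto_const_nhds.congr' <|
    (eventually_gt_atTop 0).mono fun r hr => (hconst r hr).symm)
    (hm.tendsto_radialWronskian_deriv_atTop h)
  have hW_eq : ∀ r, 0 < r → m' r * v' r = m r * -g r := fun r hr => by
    have hr' := hconst r hr
    simp only [radialWronskian, pow_zero, one_mul, Nat.cast_zero, zero_div, neg_zero, zero_mul,
      zero_sub, hW₀] at hr'
    exact sub_eq_zero.1 hr'
  have hv'' : ∀ r, 0 < r → HasDerivAt v' (-g r) r := fun r hr =>
    (h.hasDerivAt_deriv r hr).congr_deriv (by simp)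
  obtain ⟨c, hc⟩ := exists_eq_const_mul_of_wronskian_eq_zero hm.hasDerivAt hv''
    (fun r hr => (h.deriv_neg r hr).ne) hW_eq
  have hm' : ∀ r, 0 < r → c * -g r = m' r := fun r hr => by
    refine mul_right_cancel₀ (h.deriv_neg r hr).ne ?_
    rw [hW_eq r hr, hc r hr]
    ring
  have hcg : 0 = c * -g 0 := tendsto_nhds_unique hm.tendsto_zero_deriv <|
    (h.tendsto_zero_nonlinearity.neg.const_mul c).congr' <|
      eventually_mem_nhdsWithin.mono hm'
  have hc0 : c = 0 :=
    (mul_eq_zero.1 hcg.symm).resolve_right (neg_ne_zero.2 h.nonlinearity_zero_pos.ne')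
  rw [hc r hr, hc0, zero_mul]

theorem eq_zero (hm : IsRegularRadialSolution n q m m') (h : RadialProfile n v v' g q G) {r : ℝ}
    (hr : 0 < r) : m r = 0 := by
  rcases n.eq_zero_or_pos with rfl | hn
  · exact hm.eq_zero_of_dim_one h hr
  · exact hm.eq_zero_of_one_le h hn hr

end IsRegularRadialSolution

end RadialProfile

/-! ### Isometries of the unit sphere -/

section Isometry

variable {E : Type*} [NormedAddCommGroup E] [InnerProductSpace ℝ E]

/-- The restriction of a linear isometry to the unit sphere. -/
def sphereIsometry (R : E ≃ₗᵢ[ℝ] E) (θ : Metric.sphere (0 : E) 1) : Metric.sphere (0 : E) 1 :=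
  ⟨R θ, by simp⟩

open scoped Pointwise in
theorem preimage_smul_coe_image (R : E ≃ₗᵢ[ℝ] E) (s : Set (Metric.sphere (0 : E) 1)) :
    R ⁻¹' (Set.Ioo (0 : ℝ) 1 • ((↑) '' s)) =
      Set.Ioo (0 : ℝ) 1 • ((↑) '' (sphereIsometry R ⁻¹' s)) := by
  ext x
  simp only [Set.mem_preimage, Set.mem_smul, Set.mem_image]
  constructor
  · rintro ⟨t, ht, _, ⟨θ, hθ, rfl⟩, h⟩
    refine ⟨t, ht, R.symm θ, ⟨sphereIsometry R.symm θ, ?_, rfl⟩, ?_⟩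
    · have : sphereIsometry R (sphereIsometry R.symm θ) = θ := Subtype.ext (R.apply_symm_apply _)
      rwa [this]
    · rw [← map_smul, h, R.symm_apply_apply]
  · rintro ⟨t, ht, _, ⟨θ, hθ, rfl⟩, h⟩
    exact ⟨t, ht, R θ, ⟨sphereIsometry R θ, hθ, rfl⟩, by rw [← h, map_smul]⟩

/-- Rotation by the angle `t` in the plane of the orthonormal vectors `e`, `f`. -/
def planeRotation (e f : E) (t : ℝ) : E →ₗ[ℝ] E where
  toFun x := x + ((cos t - 1) * inner ℝ e x - sin t * inner ℝ f x) • e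
    + (sin t * inner ℝ e x + (cos t - 1) * inner ℝ f x) • f
  map_add' x y := by
    simp only [inner_add_right]
    module
  map_smul' c x := by
    simp only [inner_smul_right, RingHom.id_apply]
    module

theorem planeRotation_apply (e f : E) (t : ℝ) (x : E) :
    planeRotation e f t x = x + ((cos t - 1) * inner ℝ e x - sin t * inner ℝ f x) • e
      + (sin t * inner ℝ e x + (cos t - 1) * inner ℝ f x) • f :=
  rfl

variable {e f : E}

theorem norm_planeRotation (he : ‖e‖ = 1) (hf : ‖f‖ = 1) (hef : inner ℝ e f = 0) (t : ℝ) (x : E) :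
    ‖planeRotation e f t x‖ = ‖x‖ := by
  have hee : inner ℝ e e = 1 := by rw [real_inner_self_eq_norm_sq, he, one_pow]
  have hff : inner ℝ f f = 1 := by rw [real_inner_self_eq_norm_sq, hf, one_pow]
  have hfe : inner ℝ f e = 0 := by rw [real_inner_comm, hef]
  have hsq : ‖planeRotation e f t x‖ ^ 2 = ‖x‖ ^ 2 := by
    rw [← real_inner_self_eq_norm_sq, ← real_inner_self_eq_norm_sq]
    simp only [planeRotation_apply, inner_add_left, inner_add_right, real_inner_smul_left,
      real_inner_smul_right, hee, hff, hef, hfe, real_inner_comm e x, real_inner_comm f x]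
    linear_combination (inner ℝ e x ^ 2 + inner ℝ f x ^ 2) * sin_sq_add_cos_sq t
  exact (sq_eq_sq₀ (norm_nonneg _) (norm_nonneg _)).mp hsq

theorem hasDerivAt_planeRotation (e f : E) (t : ℝ) (x : E) :
    HasDerivAt (fun t => planeRotation e f t x)
      ((-sin t * inner ℝ e x - cos t * inner ℝ f x) • e
        + (cos t * inner ℝ e x + -sin t * inner ℝ f x) • f) t := by
  have he := ((((hasDerivAt_cos t).sub_const 1).mul_const (inner ℝ e x)).sub
    ((hasDerivAt_sin t).mul_const (inner ℝ f x))).smul_const e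
  have hf := (((hasDerivAt_sin t).mul_const (inner ℝ e x)).add
    (((hasDerivAt_cos t).sub_const 1).mul_const (inner ℝ f x))).smul_const f
  exact (he.const_add x).add hf

theorem continuous_planeRotation (e f : E) :
    Continuous fun z : ℝ × E => planeRotation e f z.1 z.2 := by
  simp only [planeRotation_apply]
  fun_prop

end Isometry

/-! ### Integration over the unit sphere -/

section SphereIntegral

variable {E : Type*} [NormedAddCommGroup E] [InnerProductSpace ℝ E] [FiniteDimensional ℝ E]
  [MeasurableSpace E] [BorelSpace E]

/-- The integral of `F` over the unit sphere with respect to the (unnormalised) surface measure.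
Functions on the sphere are restrictions of functions on the whole space, so that they can be
differentiated. -/
def sphereIntegral (F : E → ℝ) : ℝ :=
  ∫ θ : Metric.sphere (0 : E) 1, F θ ∂(volume : Measure E).toSphere

variable {F G : E → ℝ}

theorem integrable_toSphere (hF : Continuous F) :
    Integrable (fun θ : Metric.sphere (0 : E) 1 => F θ) (volume : Measure E).toSphere :=
  (hF.comp continuous_subtype_val).integrable_of_hasCompactSupport
    (HasCompactSupport.of_compactSpace _)

theorem sphereIntegral_congr (h : ∀ x, ‖x‖ = 1 → F x = G x) :
    sphereIntegral F = sphereIntegral G :=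
  integral_congr_ae (Eventually.of_forall fun θ => h θ (norm_eq_of_mem_sphere θ))

theorem sphereIntegral_add (hF : Continuous F) (hG : Continuous G) :
    sphereIntegral (fun x => F x + G x) = sphereIntegral F + sphereIntegral G :=
  integral_add (integrable_toSphere hF) (integrable_toSphere hG)

theorem sphereIntegral_sub (hF : Continuous F) (hG : Continuous G) :
    sphereIntegral (fun x => F x - G x) = sphereIntegral F - sphereIntegral G :=
  integral_sub (integrable_toSphere hF) (integrable_toSphere hG)

theorem sphereIntegral_const_mul (c : ℝ) (F : E → ℝ) :
    sphereIntegral (fun x => c * F x) = c * sphereIntegral F :=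
  integral_const_mul _ _

theorem sphereIntegral_finset_sum {ι : Type*} (s : Finset ι) {F : ι → E → ℝ}
    (hF : ∀ i, Continuous (F i)) :
    sphereIntegral (fun x => ∑ i ∈ s, F i x) = ∑ i ∈ s, sphereIntegral (F i) :=
  integral_finsetSum _ fun i _ => integrable_toSphere (hF i)

theorem sphereIntegral_nonneg (h : ∀ x, 0 ≤ F x) : 0 ≤ sphereIntegral F :=
  integral_nonneg fun θ => h θ

theorem measurePreserving_sphereIsometry (R : E ≃ₗᵢ[ℝ] E) :
    MeasurePreserving (sphereIsometry R) (volume : Measure E).toSphere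
      (volume : Measure E).toSphere := by
  have hmeas : Measurable (sphereIsometry R) :=
    (Continuous.subtype_mk (R.continuous.comp continuous_subtype_val) _).measurable
  refine ⟨hmeas, Measure.ext fun s hs => ?_⟩
  rw [Measure.map_apply hmeas hs, Measure.toSphere_apply' _ hs,
    Measure.toSphere_apply' _ (hmeas hs), ← preimage_smul_coe_image,
    R.measurePreserving.measure_preimage_emb R.toHomeomorph.measurableEmbedding]

theorem sphereIntegral_comp_isometry (R : E ≃ₗᵢ[ℝ] E) (hF : Continuous F) :
    sphereIntegral (fun x => F (R x)) = sphereIntegral F := by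
  have hmap := (measurePreserving_sphereIsometry R).map_eq
  unfold sphereIntegral
  conv_rhs => rw [← hmap]
  exact (integral_map (measurePreserving_sphereIsometry R).measurable.aemeasurable
    (hF.comp continuous_subtype_val).aestronglyMeasurable).symm

theorem hasDerivAt_sphereIntegral {H H' : ℝ → E → ℝ}
    (hd : ∀ t x, HasDerivAt (fun t => H t x) (H' t x) t) (hc : ∀ t, Continuous (H t))
    (hc' : Continuous fun z : ℝ × E => H' z.1 z.2) (t : ℝ) :
    HasDerivAt (fun t => sphereIntegral (H t)) (sphereIntegral (H' t)) t := by
  have hcompact : IsCompact (Metric.closedBall t 1 ×ˢ Metric.sphere (0 : E) 1) :=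
    (isCompact_closedBall _ _).prod (isCompact_sphere _ _)
  obtain ⟨C, hC⟩ := hcompact.exists_bound_of_continuousOn hc'.continuousOn
  have hct : Continuous (H' t) := hc'.comp (Continuous.prodMk_right t)
  exact (hasDerivAt_integral_of_dominated_loc_of_deriv_le (bound := fun _ => C)
    (F := fun t (θ : Metric.sphere (0 : E) 1) => H t θ)
    (F' := fun t (θ : Metric.sphere (0 : E) 1) => H' t θ)
    (Metric.ball_mem_nhds t one_pos)
    (Eventually.of_forall fun t => (integrable_toSphere (hc t)).1) (integrable_toSphere (hc t))
    (integrable_toSphere hct).1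
    (Eventually.of_forall fun θ s hs => hC (s, θ) ⟨Metric.ball_subset_closedBall hs, θ.2⟩)
    (integrable_const _) (Eventually.of_forall fun θ s _ => hd s θ)).2

theorem sphereIntegral_comp_planeRotation {e f : E} (he : ‖e‖ = 1) (hf : ‖f‖ = 1)
    (hef : inner ℝ e f = 0) (hF : Continuous F) (t : ℝ) :
    sphereIntegral (fun x => F (planeRotation e f t x)) = sphereIntegral F :=
  sphereIntegral_comp_isometry (LinearIsometry.toLinearIsometryEquiv
    ⟨planeRotation e f t, norm_planeRotation he hf hef t⟩ rfl) hF

theorem sphereIntegral_fderiv_rotation {e f : E} (he : ‖e‖ = 1) (hf : ‖f‖ = 1)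
    (hef : inner ℝ e f = 0) (hF : ContDiff ℝ 1 F) :
    sphereIntegral (fun x => fderiv ℝ F x (inner ℝ e x • f - inner ℝ f x • e)) = 0 := by
  have hrot := continuous_planeRotation e f
  have hrot' (t : ℝ) : Continuous fun x => planeRotation e f t x :=
    hrot.comp (f := fun x => (t, x)) (Continuous.prodMk_right t)
  have hF' : Continuous (fderiv ℝ F) := hF.continuous_fderiv one_ne_zero
  have hvel : Continuous fun z : ℝ × E =>
      (-sin z.1 * inner ℝ e z.2 - cos z.1 * inner ℝ f z.2) • e
        + (cos z.1 * inner ℝ e z.2 + -sin z.1 * inner ℝ f z.2) • f := by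
    fun_prop
  have hderiv := hasDerivAt_sphereIntegral (H := fun t x => F (planeRotation e f t x))
    (H' := fun t x => fderiv ℝ F (planeRotation e f t x)
      ((-sin t * inner ℝ e x - cos t * inner ℝ f x) • e
        + (cos t * inner ℝ e x + -sin t * inner ℝ f x) • f))
    (fun t x => (hF.differentiable one_ne_zero _).hasFDerivAt.comp_hasDerivAt t
      (hasDerivAt_planeRotation e f t x))
    (fun t => hF.continuous.comp (hrot' t))
    ((hF'.comp hrot).clm_apply hvel) 0
  simp only [sphereIntegral_comp_planeRotation he hf hef hF.continuous] at hderiv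
  rw [← hderiv.unique (hasDerivAt_const 0 (sphereIntegral F))]
  congr 1
  funext x
  simp [planeRotation_apply, sub_eq_neg_add]

end SphereIntegral

/-! ### Partial derivatives and the Laplacian -/

section PartialDerivatives

/-- Euclidean space `ℝ^N`. -/
abbrev Euc (N : ℕ) : Type := EuclideanSpace ℝ (Fin N)

variable {N : ℕ} {F : Type*} [NormedAddCommGroup F] [NormedSpace ℝ F] {f g : Euc N → ℝ} {x : Euc N}

theorem fderiv_eq_sum_pd (f : Euc N → ℝ) (x v : Euc N) :
    fderiv ℝ f x v = ∑ i, v i * pd i f x := by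
  conv_lhs => rw [← (EuclideanSpace.basisFun (Fin N) ℝ).sum_repr v]
  rw [map_sum]
  simp [pd]

theorem fderiv_mul_apply (hf : DifferentiableAt ℝ f x) (hg : DifferentiableAt ℝ g x) (v : Euc N) :
    fderiv ℝ (fun y => f y * g y) x v = fderiv ℝ f x v * g x + f x * fderiv ℝ g x v := by
  rw [fderiv_fun_mul hf hg, add_apply, smul_apply, smul_apply, smul_eq_mul, smul_eq_mul]
  ring

theorem pd_add (i : Fin N) (hf : DifferentiableAt ℝ f x) (hg : DifferentiableAt ℝ g x) :
    pd i (fun y => f y + g y) x = pd i f x + pd i g x := by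
  rw [pd, fderiv_fun_add hf hg, add_apply, pd, pd]

theorem pd_mul (i : Fin N) (hf : DifferentiableAt ℝ f x) (hg : DifferentiableAt ℝ g x) :
    pd i (fun y => f y * g y) x = pd i f x * g x + f x * pd i g x :=
  fderiv_mul_apply hf hg _

theorem pd_const_mul (i : Fin N) (c : ℝ) (hf : DifferentiableAt ℝ f x) :
    pd i (fun y => c * f y) x = c * pd i f x := by
  rw [pd, fderiv_const_mul hf, smul_apply, smul_eq_mul, pd]

theorem pd_comp {h : ℝ → ℝ} {h' : ℝ} (i : Fin N) (hf : DifferentiableAt ℝ f x)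
    (hh : HasDerivAt h h' (f x)) :
    pd i (fun y => h (f y)) x = h' * pd i f x := by
  have hcomp : HasFDerivAt (fun y => h (f y)) (h' • fderiv ℝ f x) x :=
    hh.comp_hasFDerivAt x hf.hasFDerivAt
  rw [pd, hcomp.fderiv, smul_apply, smul_eq_mul, pd]

theorem contDiff_pd {f : Euc N → F} (hf : ContDiff ℝ (⊤ : ℕ∞) f) (i : Fin N) :
    ContDiff ℝ (⊤ : ℕ∞) (pd i f) :=
  (hf.fderiv_right (m := ((⊤ : ℕ∞) : WithTop ℕ∞)) le_rfl).clm_apply contDiff_const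

theorem contDiff_lap (hf : ContDiff ℝ (⊤ : ℕ∞) f) : ContDiff ℝ (⊤ : ℕ∞) (lap f) :=
  ContDiff.sum fun i _ => contDiff_pd (contDiff_pd hf i) i

theorem differentiable_of_smooth {f : Euc N → F} (hf : ContDiff ℝ (⊤ : ℕ∞) f) :
    Differentiable ℝ f :=
  hf.differentiable (by simp)

theorem continuous_fderiv_of_smooth (hf : ContDiff ℝ (⊤ : ℕ∞) f) : Continuous (fderiv ℝ f) :=
  hf.continuous_fderiv (by simp)

theorem lap_mul (hf : ContDiff ℝ (⊤ : ℕ∞) f) (hg : ContDiff ℝ (⊤ : ℕ∞) g) (x : Euc N) :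
    lap (fun y => f y * g y) x =
      lap f x * g x + 2 * (∑ i, pd i f x * pd i g x) + f x * lap g x := by
  have hf' := differentiable_of_smooth hf
  have hg' := differentiable_of_smooth hg
  simp only [lap, Finset.sum_mul, Finset.mul_sum, ← Finset.sum_add_distrib]
  refine Finset.sum_congr rfl fun i _ => ?_
  have hfi := differentiable_of_smooth (contDiff_pd hf i) x
  have hgi := differentiable_of_smooth (contDiff_pd hg i) x
  have hpd : pd i (fun y => f y * g y) = fun y => pd i f y * g y + f y * pd i g y :=
    funext fun y => pd_mul i (hf' y) (hg' y)
  rw [hpd, pd_add i (hfi.fun_mul (hg' x)) ((hf' x).fun_mul hgi), pd_mul i hfi (hg' x),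
    pd_mul i (hf' x) hgi]
  ring

theorem lap_add (hf : ContDiff ℝ (⊤ : ℕ∞) f) (hg : ContDiff ℝ (⊤ : ℕ∞) g) (x : Euc N) :
    lap (fun y => f y + g y) x = lap f x + lap g x := by
  simp only [lap, ← Finset.sum_add_distrib]
  refine Finset.sum_congr rfl fun i _ => ?_
  have hpd : pd i (fun y => f y + g y) = fun y => pd i f y + pd i g y :=
    funext fun y => pd_add i (differentiable_of_smooth hf y) (differentiable_of_smooth hg y)
  rw [hpd, pd_add i (differentiable_of_smooth (contDiff_pd hf i) x)
    (differentiable_of_smooth (contDiff_pd hg i) x)]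

theorem lap_const_mul (c : ℝ) (hf : ContDiff ℝ (⊤ : ℕ∞) f) (x : Euc N) :
    lap (fun y => c * f y) x = c * lap f x := by
  simp only [lap, Finset.mul_sum]
  refine Finset.sum_congr rfl fun i _ => ?_
  have hpd : pd i (fun y => c * f y) = fun y => c * pd i f y :=
    funext fun y => pd_const_mul i c (differentiable_of_smooth hf y)
  rw [hpd, pd_const_mul i c (differentiable_of_smooth (contDiff_pd hf i) x)]

theorem fderiv_fderiv_eq_sum (hf : ContDiff ℝ (⊤ : ℕ∞) f) (x v w : Euc N) :
    fderiv ℝ (fderiv ℝ f) x v w = ∑ i, w i * fderiv ℝ (pd i f) x v := by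
  have hdiff : DifferentiableAt ℝ (fderiv ℝ f) x :=
    (hf.fderiv_right (m := ((⊤ : ℕ∞) : WithTop ℕ∞)) le_rfl).differentiable (by simp) x
  have hpd (i : Fin N) : fderiv ℝ (pd i f) x v =
      fderiv ℝ (fderiv ℝ f) x v (EuclideanSpace.single i 1) := by
    have hfun : pd i f = fun y => fderiv ℝ f y (EuclideanSpace.single i 1) := rfl
    simp [hfun, fderiv_clm_apply hdiff (differentiableAt_const _)]
  conv_lhs => rw [← (EuclideanSpace.basisFun (Fin N) ℝ).sum_repr w]
  rw [map_sum]
  simp [hpd]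

theorem contDiff_coord (i : Fin N) : ContDiff ℝ (⊤ : ℕ∞) fun x : Euc N => x i :=
  (EuclideanSpace.proj i : Euc N →L[ℝ] ℝ).contDiff

theorem fderiv_coord (i : Fin N) (x v : Euc N) : fderiv ℝ (fun x : Euc N => x i) x v = v i := by
  have h : HasFDerivAt (fun x : Euc N => x i) (EuclideanSpace.proj i : Euc N →L[ℝ] ℝ) x :=
    (EuclideanSpace.proj i : Euc N →L[ℝ] ℝ).hasFDerivAt
  rw [h.fderiv]
  rfl

theorem sum_coord_mul_self (x : Euc N) : ∑ i, x i * x i = ‖x‖ ^ 2 := by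
  rw [EuclideanSpace.real_norm_sq_eq]
  exact Finset.sum_congr rfl fun i _ => (pow_two _).symm

end PartialDerivatives

/-! ### The Laplace–Beltrami operator of the unit sphere -/

section SphereLaplacian

variable {N : ℕ} {f g : Euc N → ℝ}

theorem fderiv_coord_mul_rotation {F : Euc N → ℝ} {x : Euc N} (hF : DifferentiableAt ℝ F x)
    (i j : Fin N) :
    fderiv ℝ (fun y => y j * F y) x
        (x i • EuclideanSpace.single j 1 - x j • EuclideanSpace.single i 1) =
      (x i - if j = i then x j else 0) * F x
        + (x i * (x j * pd j F x) - x j * x j * pd i F x) := by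
  rw [fderiv_mul_apply (differentiable_of_smooth (contDiff_coord j) x) hF, fderiv_coord, map_sub,
    map_smul, map_smul]
  rcases eq_or_ne j i with rfl | hji
  · simp only [pd, sub_self, PiLp.zero_apply, if_true, zero_mul, zero_add, smul_eq_mul]
    ring
  · simp [pd, hji]
    ring

theorem sphereIntegral_tangential_pd {F : Euc N → ℝ} (hF : ContDiff ℝ (⊤ : ℕ∞) F) (i : Fin N) :
    sphereIntegral (fun x => pd i F x - x i * fderiv ℝ F x x - (N - 1) * (x i * F x)) = 0 := by
  let T (j : Fin N) (x : Euc N) : ℝ := fderiv ℝ (fun y => y j * F y) x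
    (x i • EuclideanSpace.single j 1 - x j • EuclideanSpace.single i 1)
  have hcoord (j : Fin N) : Continuous fun x : Euc N => x j := (contDiff_coord j).continuous
  have hT_integral (j : Fin N) : sphereIntegral (T j) = 0 := by
    rcases eq_or_ne i j with rfl | hij
    · simp [T, sphereIntegral]
    · simpa [T, EuclideanSpace.inner_single_left] using sphereIntegral_fderiv_rotation
        (e := EuclideanSpace.single i (1 : ℝ)) (f := EuclideanSpace.single j (1 : ℝ)) (by simp)
        (by simp) (by simp [EuclideanSpace.inner_single_left, hij])
        (((contDiff_coord j).mul hF).of_le (by simp))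
  have hT_cont (j : Fin N) : Continuous (T j) :=
    (continuous_fderiv_of_smooth ((contDiff_coord j).mul hF)).clm_apply
      (((hcoord i).smul continuous_const).sub ((hcoord j).smul continuous_const))
  have hT_sum : sphereIntegral (fun x => ∑ j, T j x) = 0 := by
    rw [sphereIntegral_finset_sum _ hT_cont, Finset.sum_eq_zero fun j _ => hT_integral j]
  rw [← neg_zero, ← hT_sum, ← neg_one_mul, ← sphereIntegral_const_mul]
  refine sphereIntegral_congr fun x hx => ?_
  simp only [T, fderiv_coord_mul_rotation (differentiable_of_smooth hF x)]
  rw [Finset.sum_add_distrib, Finset.sum_sub_distrib, ← Finset.sum_mul, ← Finset.sum_mul,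
    ← Finset.mul_sum, ← fderiv_eq_sum_pd, sum_coord_mul_self, hx, Finset.sum_sub_distrib,
    Finset.sum_const, Finset.card_univ, Fintype.card_fin, nsmul_eq_mul,
    Finset.sum_ite_eq' Finset.univ i, if_pos (Finset.mem_univ i)]
  ring

/-- The Laplace–Beltrami operator of the unit sphere, in terms of an extension of the function to
the whole space. The value is geometrically meaningful only on the unit sphere. -/
def sphereLap (f : Euc N → ℝ) (x : Euc N) : ℝ :=
  lap f x - fderiv ℝ (fderiv ℝ f) x x x - (N - 1) * fderiv ℝ f x x

theorem continuous_sphereLap (hf : ContDiff ℝ (⊤ : ℕ∞) f) : Continuous (sphereLap f) := by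
  have hf' : ContDiff ℝ (⊤ : ℕ∞) (fderiv ℝ f) := hf.fderiv_right le_rfl
  have hf'' : Continuous (fderiv ℝ (fderiv ℝ f)) := hf'.continuous_fderiv (by simp)
  exact ((contDiff_lap hf).continuous.sub
    ((hf''.clm_apply continuous_id).clm_apply continuous_id)).sub
    (continuous_const.mul (hf'.continuous.clm_apply continuous_id))

theorem sum_tangential_pd_pd_mul (hf : ContDiff ℝ (⊤ : ℕ∞) f) (hg : ContDiff ℝ (⊤ : ℕ∞) g)
    (x : Euc N) :
    ∑ i, (pd i (fun y => pd i f y * g y) x - x i * fderiv ℝ (fun y => pd i f y * g y) x x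
        - (N - 1) * (x i * (pd i f x * g x))) =
      sphereLap f x * g x
        + (∑ i, pd i f x * pd i g x - fderiv ℝ f x x * fderiv ℝ g x x) := by
  have hpf (i : Fin N) := differentiable_of_smooth (contDiff_pd hf i) x
  have hg' := differentiable_of_smooth hg x
  have hterm (i : Fin N) :
      pd i (fun y => pd i f y * g y) x - x i * fderiv ℝ (fun y => pd i f y * g y) x x
          - (N - 1) * (x i * (pd i f x * g x)) =
        pd i (pd i f) x * g x + pd i f x * pd i g x
          - (x i * fderiv ℝ (pd i f) x x * g x + x i * pd i f x * fderiv ℝ g x x)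
          - (N - 1) * g x * (x i * pd i f x) := by
    rw [pd_mul i (hpf i) hg', fderiv_mul_apply (hpf i) hg']
    ring
  rw [Finset.sum_congr rfl fun i _ => hterm i, Finset.sum_sub_distrib, Finset.sum_sub_distrib,
    Finset.sum_add_distrib, Finset.sum_add_distrib, ← Finset.sum_mul, ← Finset.sum_mul,
    ← Finset.sum_mul, ← Finset.mul_sum, ← fderiv_eq_sum_pd, ← fderiv_fderiv_eq_sum hf, sphereLap,
    lap]
  ring

theorem sphereIntegral_sphereLap_mul (hf : ContDiff ℝ (⊤ : ℕ∞) f) (hg : ContDiff ℝ (⊤ : ℕ∞) g) :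
    sphereIntegral (fun x => sphereLap f x * g x) =
      -sphereIntegral fun x => ∑ i, pd i f x * pd i g x - fderiv ℝ f x x * fderiv ℝ g x x := by
  have hfg (i : Fin N) : ContDiff ℝ (⊤ : ℕ∞) fun y => pd i f y * g y := (contDiff_pd hf i).mul hg
  have hsum := sphereIntegral_finset_sum Finset.univ (F := fun (i : Fin N) x =>
      pd i (fun y => pd i f y * g y) x - x i * fderiv ℝ (fun y => pd i f y * g y) x x
        - (N - 1) * (x i * (pd i f x * g x)))
    fun i => ((contDiff_pd (hfg i) i).continuous.sub ((contDiff_coord i).continuous.mul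
      ((continuous_fderiv_of_smooth (hfg i)).clm_apply continuous_id))).sub
      (continuous_const.mul ((contDiff_coord i).continuous.mul (hfg i).continuous))
  rw [Finset.sum_eq_zero fun i _ => sphereIntegral_tangential_pd (hfg i) i] at hsum
  simp only [sum_tangential_pd_pd_mul hf hg] at hsum
  rw [eq_neg_iff_add_eq_zero, ← hsum]
  refine (sphereIntegral_add ((continuous_sphereLap hf).mul hg.continuous) ?_).symm
  exact (continuous_finsetSum _ fun i _ =>
    (contDiff_pd hf i).continuous.mul (contDiff_pd hg i).continuous).sub
    (((continuous_fderiv_of_smooth hf).clm_apply continuous_id).mul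
      ((continuous_fderiv_of_smooth hg).clm_apply continuous_id))

theorem sphereIntegral_sphereLap_mul_comm (hf : ContDiff ℝ (⊤ : ℕ∞) f)
    (hg : ContDiff ℝ (⊤ : ℕ∞) g) :
    sphereIntegral (fun x => sphereLap f x * g x) =
      sphereIntegral (fun x => f x * sphereLap g x) := by
  simp only [mul_comm (f _) (sphereLap g _)]
  rw [sphereIntegral_sphereLap_mul hf hg, sphereIntegral_sphereLap_mul hg hf]
  simp only [mul_comm]

theorem contDiff_inner_pow (a : Euc N) (k : ℕ) :
    ContDiff ℝ (⊤ : ℕ∞) fun x : Euc N => inner ℝ a x ^ k :=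
  (contDiff_const.inner ℝ contDiff_id).pow k

theorem fderiv_inner_pow (a : Euc N) (k : ℕ) (x v : Euc N) :
    fderiv ℝ (fun y : Euc N => inner ℝ a y ^ k) x v =
      k * inner ℝ a x ^ (k - 1) * inner ℝ a v := by
  have hinner : HasFDerivAt (fun y : Euc N => inner ℝ a y) (innerSL ℝ a) x :=
    (innerSL ℝ a).hasFDerivAt
  rw [(hinner.pow k).fderiv]
  simp

theorem pd_inner_pow (a : Euc N) (k : ℕ) (i : Fin N) :
    pd i (fun y : Euc N => inner ℝ a y ^ k) =
      fun x => k * a i * inner ℝ a x ^ (k - 1) := by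
  funext x
  rw [pd, fderiv_inner_pow, EuclideanSpace.inner_single_right]
  simp only [one_mul, conj_trivial]
  ring

theorem fderiv_pd_inner_pow (a : Euc N) (k : ℕ) (i : Fin N) (x v : Euc N) :
    fderiv ℝ (pd i fun y : Euc N => inner ℝ a y ^ k) x v =
      k * (k - 1) * a i * inner ℝ a x ^ (k - 2) * inner ℝ a v := by
  rw [pd_inner_pow, fderiv_const_mul
    (differentiable_of_smooth (contDiff_inner_pow a (k - 1)) x), smul_apply, fderiv_inner_pow,
    smul_eq_mul, Nat.sub_sub]
  rcases k with - | k
  · simp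
  · push_cast [Nat.add_sub_cancel]
    ring

theorem fderiv_fderiv_inner_pow (a : Euc N) (k : ℕ) (x : Euc N) :
    fderiv ℝ (fderiv ℝ fun y => inner ℝ a y ^ k) x x x = k * (k - 1) * inner ℝ a x ^ k := by
  have hterm (i : Fin N) : x i * fderiv ℝ (pd i fun y => inner ℝ a y ^ k) x x =
      k * (k - 1) * inner ℝ a x ^ (k - 2) * inner ℝ a x * (a i * x i) := by
    rw [fderiv_pd_inner_pow]
    ring
  have hinner : ∑ i, a i * x i = inner ℝ a x := by
    simp [PiLp.inner_apply, mul_comm]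
  rw [fderiv_fderiv_eq_sum (contDiff_inner_pow a k), Finset.sum_congr rfl fun i _ => hterm i,
    ← Finset.mul_sum, hinner]
  rcases k with - | - | k
  · simp
  · simp
  · rw [show k + 1 + 1 - 2 = k from rfl]
    ring

theorem sphereLap_inner_pow (a : Euc N) (k : ℕ) (x : Euc N) :
    sphereLap (fun y => inner ℝ a y ^ k) x =
      -(k * (k + N - 2) * inner ℝ a x ^ k) + k * (k - 1) * ‖a‖ ^ 2 * inner ℝ a x ^ (k - 2) := by
  have hlap : lap (fun y => inner ℝ a y ^ k) x =
      k * (k - 1) * ‖a‖ ^ 2 * inner ℝ a x ^ (k - 2) := by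
    rw [← sum_coord_mul_self a, lap, Finset.mul_sum, Finset.sum_mul]
    refine Finset.sum_congr rfl fun i _ => ?_
    rw [pd, fderiv_pd_inner_pow, EuclideanSpace.inner_single_right]
    simp only [one_mul, conj_trivial]
    ring
  have hradial : fderiv ℝ (fun y => inner ℝ a y ^ k) x x = k * inner ℝ a x ^ k := by
    rw [fderiv_inner_pow]
    rcases k with - | k
    · simp
    · rw [Nat.add_sub_cancel, pow_succ, mul_assoc]
  rw [sphereLap, hlap, hradial, fderiv_fderiv_inner_pow]
  ring

end SphereLaplacian

/-! ### Moments over spheres -/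

section Moments

variable {N : ℕ} {φ : Euc N → ℝ}

theorem pd_comp_smul (i : Fin N) (φ : Euc N → ℝ) (r : ℝ) (x : Euc N) :
    pd i (fun y => φ (r • y)) x = r * pd i φ (r • x) := by
  rw [pd, fderiv_comp_smul, smul_apply, smul_eq_mul, pd]

theorem lap_comp_smul (hφ : ContDiff ℝ (⊤ : ℕ∞) φ) (r : ℝ) (x : Euc N) :
    lap (fun y => φ (r • y)) x = r ^ 2 * lap φ (r • x) := by
  rw [lap, lap, Finset.mul_sum]
  refine Finset.sum_congr rfl fun i _ => ?_
  rw [funext (pd_comp_smul i φ r), pd_const_mul i r, pd_comp_smul, pow_two, mul_assoc]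
  exact ((contDiff_pd hφ i).comp (contDiff_const_smul r)).differentiable (by simp) x

theorem fderiv_fderiv_comp_smul (hφ : ContDiff ℝ (⊤ : ℕ∞) φ) (r : ℝ) (x v w : Euc N) :
    fderiv ℝ (fderiv ℝ fun y => φ (r • y)) x v w =
      r ^ 2 * fderiv ℝ (fderiv ℝ φ) (r • x) v w := by
  have hφ' : ContDiff ℝ (⊤ : ℕ∞) (fderiv ℝ φ) := hφ.fderiv_right le_rfl
  have hfun : (fderiv ℝ fun y => φ (r • y)) = fun y => r • fderiv ℝ φ (r • y) :=
    funext fun y => fderiv_comp_smul r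
  have hdiff : DifferentiableAt ℝ (fun y => fderiv ℝ φ (r • y)) x :=
    (hφ'.comp (contDiff_const_smul r)).differentiable (by simp) x
  rw [hfun, fderiv_fun_const_smul hdiff, fderiv_comp_smul]
  simp only [smul_apply, smul_eq_mul, pow_two, mul_assoc]

theorem sphereLap_comp_smul (hφ : ContDiff ℝ (⊤ : ℕ∞) φ) (r : ℝ) (x : Euc N) :
    sphereLap (fun y => φ (r • y)) x =
      r ^ 2 * lap φ (r • x) - r ^ 2 * fderiv ℝ (fderiv ℝ φ) (r • x) x x
        - (N - 1) * r * fderiv ℝ φ (r • x) x := by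
  rw [sphereLap, lap_comp_smul hφ, fderiv_fderiv_comp_smul hφ, fderiv_comp_smul, smul_apply,
    smul_eq_mul, mul_assoc (_ - _)]

/-- The `k`-th moment of `φ` in the direction `a` over the sphere of radius `r`. On the functions
all of whose lower moments vanish, it plays the role of the `k`-th spherical harmonic mode. -/
def moment (φ : Euc N → ℝ) (a : Euc N) (k : ℕ) (r : ℝ) : ℝ :=
  sphereIntegral fun x => φ (r • x) * inner ℝ a x ^ k

/-- The `k`-th moment of the radial derivative of `φ` in the direction `a` over the sphere of
radius `r`. -/
def momentDeriv (φ : Euc N → ℝ) (a : Euc N) (k : ℕ) (r : ℝ) : ℝ :=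
  sphereIntegral fun x => fderiv ℝ φ (r • x) x * inner ℝ a x ^ k

theorem hasDerivAt_moment (hφ : ContDiff ℝ (⊤ : ℕ∞) φ) (a : Euc N) (k : ℕ) (r : ℝ) :
    HasDerivAt (moment φ a k) (momentDeriv φ a k r) r := by
  have hφ' := continuous_fderiv_of_smooth hφ
  have hφc := hφ.continuous
  refine hasDerivAt_sphereIntegral (H := fun t x => φ (t • x) * inner ℝ a x ^ k)
    (H' := fun t x => fderiv ℝ φ (t • x) x * inner ℝ a x ^ k) (fun t x => ?_)
    (fun t => by fun_prop) (by fun_prop) r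
  have hray : HasDerivAt (fun t : ℝ => t • x) x t := by
    simpa using (hasDerivAt_id t).smul_const x
  exact ((differentiable_of_smooth hφ _).hasFDerivAt.comp_hasDerivAt t hray).mul_const _

theorem hasDerivAt_momentDeriv (hφ : ContDiff ℝ (⊤ : ℕ∞) φ) (a : Euc N) (k : ℕ) (r : ℝ) :
    HasDerivAt (momentDeriv φ a k)
      (sphereIntegral fun x => fderiv ℝ (fderiv ℝ φ) (r • x) x x * inner ℝ a x ^ k) r := by
  have hφ' : ContDiff ℝ (⊤ : ℕ∞) (fderiv ℝ φ) := hφ.fderiv_right le_rfl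
  have hφc := hφ'.continuous
  have hφ'' : Continuous (fderiv ℝ (fderiv ℝ φ)) := hφ'.continuous_fderiv (by simp)
  refine hasDerivAt_sphereIntegral (H := fun t x => fderiv ℝ φ (t • x) x * inner ℝ a x ^ k)
    (H' := fun t x => fderiv ℝ (fderiv ℝ φ) (t • x) x x * inner ℝ a x ^ k) (fun t x => ?_)
    (fun t => by fun_prop) (by fun_prop) r
  have hray : HasDerivAt (fun t : ℝ => t • x) x t := by
    simpa using (hasDerivAt_id t).smul_const x
  have hcomp := (hφ'.differentiable (by simp) (t • x)).hasFDerivAt.comp_hasDerivAt t hray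
  simpa using (hcomp.clm_apply (hasDerivAt_const t x)).mul_const (inner ℝ a x ^ k)

theorem moment_lap (hφ : ContDiff ℝ (⊤ : ℕ∞) φ) (a : Euc N) (k : ℕ) (r : ℝ) :
    r ^ 2 * moment (lap φ) a k r =
      r ^ 2 * (sphereIntegral fun x => fderiv ℝ (fderiv ℝ φ) (r • x) x x * inner ℝ a x ^ k)
        + (N - 1) * r * momentDeriv φ a k r - k * (k + N - 2) * moment φ a k r
        + k * (k - 1) * ‖a‖ ^ 2 * moment φ a (k - 2) r := by
  have hφ' : ContDiff ℝ (⊤ : ℕ∞) (fderiv ℝ φ) := hφ.fderiv_right le_rfl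
  have hφ'c := hφ'.continuous
  have hφ'' : Continuous (fderiv ℝ (fderiv ℝ φ)) := hφ'.continuous_fderiv (by simp)
  have hlap := (contDiff_lap hφ).continuous
  have hleft : sphereIntegral (fun x => sphereLap (fun y => φ (r • y)) x * inner ℝ a x ^ k) =
      r ^ 2 * moment (lap φ) a k r
        - r ^ 2 * (sphereIntegral fun x => fderiv ℝ (fderiv ℝ φ) (r • x) x x * inner ℝ a x ^ k)
        - (N - 1) * r * momentDeriv φ a k r := by
    rw [moment, momentDeriv, ← sphereIntegral_const_mul, ← sphereIntegral_const_mul,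
      ← sphereIntegral_const_mul, ← sphereIntegral_sub (by fun_prop) (by fun_prop),
      ← sphereIntegral_sub (by fun_prop) (by fun_prop)]
    refine sphereIntegral_congr fun x _ => ?_
    rw [sphereLap_comp_smul hφ]
    ring
  have hright : sphereIntegral (fun x => φ (r • x) * sphereLap (fun y => inner ℝ a y ^ k) x) =
      -(k * (k + N - 2)) * moment φ a k r
        + k * (k - 1) * ‖a‖ ^ 2 * moment φ a (k - 2) r := by
    have hφc := hφ.continuous
    rw [moment, moment, ← sphereIntegral_const_mul, ← sphereIntegral_const_mul,
      ← sphereIntegral_add (by fun_prop) (by fun_prop)]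
    refine sphereIntegral_congr fun x _ => ?_
    rw [sphereLap_inner_pow a k x]
    ring
  have hgreen := sphereIntegral_sphereLap_mul_comm (hφ.comp (contDiff_const_smul r))
    (contDiff_inner_pow a k)
  linear_combination hleft.symm.trans (hgreen.trans hright)

end Moments

/-! ### Polar coordinates and completeness of the moments -/

section Polar

variable {E : Type*} [NormedAddCommGroup E] [InnerProductSpace ℝ E] [FiniteDimensional ℝ E]
  [MeasurableSpace E] [BorelSpace E]

theorem integrableOn_pow_mul_sphereIntegral {f : E → ℝ} (hf : Integrable f) :
    IntegrableOn (fun r : ℝ => r ^ (Module.finrank ℝ E - 1) * sphereIntegral fun x => f (r • x))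
      (Set.Ioi 0) := by
  have hpunctured : Integrable (fun x : ({0}ᶜ : Set E) => f x)
      ((volume : Measure E).comap (↑)) := by
    have := hf.integrableOn (s := ({0}ᶜ : Set E))
    rwa [integrableOn_iff_comap_subtypeVal (measurableSet_singleton 0).compl] at this
  have hprod : Integrable (fun z : Metric.sphere (0 : E) 1 × Set.Ioi (0 : ℝ) =>
      f ((z.2 : ℝ) • (z.1 : E)))
      ((volume : Measure E).toSphere.prod (.volumeIoiPow (Module.finrank ℝ E - 1))) := by
    refine ((volume : Measure E).measurePreserving_homeomorphUnitSphereProd.integrable_comp_emb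
      (Homeomorph.measurableEmbedding _)).mp (hpunctured.congr (Eventually.of_forall fun x => ?_))
    have hx : ‖(x : E)‖ ≠ 0 := norm_ne_zero_iff.mpr x.2
    simp [smul_smul, hx]
  have hradial := hprod.integral_prod_right
  rw [Measure.volumeIoiPow, integrable_withDensity_iff_integrable_smul' (by fun_prop) (by simp)]
    at hradial
  rw [integrableOn_iff_comap_subtypeVal measurableSet_Ioi]
  refine hradial.congr (Eventually.of_forall ?_)
  rintro ⟨r, hr : 0 < r⟩
  simp (disch := positivity) [ENNReal.toReal_ofReal, sphereIntegral]

theorem sphereIntegral_mul_sq_le {F G : E → ℝ} (hF : Continuous F) (hG : Continuous G) :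
    sphereIntegral (fun x => F x * G x) ^ 2 ≤
      sphereIntegral (fun x => F x ^ 2) * sphereIntegral (fun x => G x ^ 2) := by
  have hquad (t : ℝ) : 0 ≤ sphereIntegral (fun x => G x ^ 2) * (t * t)
      + -2 * sphereIntegral (fun x => F x * G x) * t + sphereIntegral (fun x => F x ^ 2) := by
    calc (0 : ℝ) ≤ sphereIntegral fun x => (F x - t * G x) ^ 2 :=
          sphereIntegral_nonneg fun x => sq_nonneg _
      _ = sphereIntegral fun x => t * t * G x ^ 2 + -2 * t * (F x * G x) + F x ^ 2 := by
          congr 1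
          funext x
          ring
      _ = _ := by
          rw [sphereIntegral_add (by fun_prop) (by fun_prop),
            sphereIntegral_add (by fun_prop) (by fun_prop), sphereIntegral_const_mul,
            sphereIntegral_const_mul]
          ring
  have hdiscrim := discrim_le_zero hquad
  rw [discrim] at hdiscrim
  linarith

end Polar

section Completeness

theorem eq_zero_of_integral_mul_subalgebra_eq_zero {X : Type*} [TopologicalSpace X]
    [CompactSpace X] [MeasurableSpace X] [OpensMeasurableSpace X] {μ : Measure X}
    [IsFiniteMeasure μ] [μ.IsOpenPosMeasure] {A : Subalgebra ℝ C(X, ℝ)} (hA : A.SeparatesPoints)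
    {f : C(X, ℝ)} (hf : ∀ g ∈ A, ∫ x, f x * g x ∂μ = 0) :
    f = 0 := by
  have hint (g : C(X, ℝ)) : Integrable (fun x => f x * g x) μ :=
    (f * g).continuous.integrable_of_hasCompactSupport (HasCompactSupport.of_compactSpace _)
  have hcont : Continuous fun g : C(X, ℝ) => ∫ x, f x * g x ∂μ := by
    refine continuous_iff_continuousAt.mpr fun g₀ => ?_
    have hbound : ∀ᶠ g in 𝓝 g₀, ‖g‖ ≤ ‖g₀‖ + 1 :=
      (continuous_norm.tendsto g₀).eventually_le_const (lt_add_one _)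
    refine continuousAt_of_dominated (bound := fun _ => ‖f‖ * (‖g₀‖ + 1))
      (Eventually.of_forall fun g => (hint g).1) ?_ (integrable_const _)
      (Eventually.of_forall fun x => ((continuous_eval_const x).const_smul (f x)).continuousAt)
    filter_upwards [hbound] with g hg
    refine Eventually.of_forall fun x => ?_
    rw [norm_mul]
    exact mul_le_mul (f.norm_coe_le_norm x) ((g.norm_coe_le_norm x).trans hg) (norm_nonneg _)
      (norm_nonneg _)
  have hall (g : C(X, ℝ)) : ∫ x, f x * g x ∂μ = 0 := by
    have hg : g ∈ A.topologicalClosure := by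
      rw [ContinuousMap.subalgebra_topologicalClosure_eq_top_of_separatesPoints A hA]
      trivial
    exact (isClosed_eq hcont continuous_const).closure_subset_iff.mpr hf hg
  have hsq := hall f
  rw [integral_eq_zero_iff_of_nonneg (fun x => mul_self_nonneg (f x)) (hint f)] at hsq
  have hzero : (fun x => f x * f x) = 0 :=
    (Continuous.ae_eq_iff_eq μ (f * f).continuous continuous_zero).mp hsq
  ext x
  exact mul_self_eq_zero.mp (congrFun hzero x)

variable {E : Type*} [NormedAddCommGroup E] [InnerProductSpace ℝ E]

/-- The characters `θ ↦ exp ⟪a, θ⟫` of the unit sphere, as a homomorphism in `a`. -/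
def sphereExp : Multiplicative E →* C(Metric.sphere (0 : E) 1, ℝ) where
  toFun a := ⟨fun θ => Real.exp (inner ℝ a.toAdd (θ : E)), by fun_prop⟩
  map_one' := by
    ext θ
    simp
  map_mul' a b := by
    ext θ
    simp [inner_add_left, Real.exp_add]

theorem separatesPoints_adjoin_sphereExp :
    (Algebra.adjoin ℝ (Set.range (sphereExp (E := E)))).SeparatesPoints := by
  intro x y hxy
  refine ⟨_, ⟨sphereExp (.ofAdd ((x : E) - y)), Algebra.subset_adjoin ⟨_, rfl⟩, rfl⟩, ?_⟩
  intro heq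
  have hinner : inner ℝ ((x : E) - y) x = inner ℝ ((x : E) - y) y := Real.exp_injective heq
  rw [← sub_eq_zero, ← inner_sub_right, inner_self_eq_zero, sub_eq_zero] at hinner
  exact hxy (Subtype.ext hinner)

variable [FiniteDimensional ℝ E] [MeasurableSpace E] [BorelSpace E]

theorem hasSum_sphereIntegral {F : ℕ → E → ℝ} {b : ℕ → ℝ} (hF : ∀ k, Continuous (F k))
    (hb : Summable b) (hbound : ∀ k x, ‖x‖ = 1 → ‖F k x‖ ≤ b k) :
    HasSum (fun k => sphereIntegral (F k)) (sphereIntegral fun x => ∑' k, F k x) := by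
  refine hasSum_integral_of_summable_integral_norm (fun k => integrable_toSphere (hF k))
    (Summable.of_nonneg_of_le (fun k => integral_nonneg fun _ => norm_nonneg _) (fun k => ?_)
      (hb.mul_right ((volume : Measure E).toSphere.real Set.univ)))
  have hnorm (θ : Metric.sphere (0 : E) 1) : ‖‖F k θ‖‖ ≤ b k :=
    (norm_norm _).trans_le (hbound k θ (norm_eq_of_mem_sphere θ))
  exact (le_abs_self _).trans (norm_integral_le_of_norm_le_const (Eventually.of_forall hnorm))

theorem sphereIntegral_mul_exp_eq_zero {f : E → ℝ} (hf : Continuous f) {a : E}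
    (h : ∀ k : ℕ, sphereIntegral (fun x => f x * inner ℝ a x ^ k) = 0) :
    sphereIntegral (fun x => f x * Real.exp (inner ℝ a x)) = 0 := by
  obtain ⟨C, hC⟩ := (isCompact_sphere (0 : E) 1).exists_bound_of_continuousOn hf.continuousOn
  have hbound (k : ℕ) (x : E) (hx : ‖x‖ = 1) :
      ‖(k.factorial : ℝ)⁻¹ * (f x * inner ℝ a x ^ k)‖ ≤ C * (‖a‖ ^ k / k.factorial) := by
    have hfx : ‖f x‖ ≤ C := hC x (by simpa using hx)
    have hC0 : 0 ≤ C := (norm_nonneg _).trans hfx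
    have hinner : |inner ℝ a x| ≤ ‖a‖ := by
      simpa [hx] using abs_real_inner_le_norm a x
    calc ‖(k.factorial : ℝ)⁻¹ * (f x * inner ℝ a x ^ k)‖
        = (k.factorial : ℝ)⁻¹ * (‖f x‖ * |inner ℝ a x| ^ k) := by simp
      _ ≤ (k.factorial : ℝ)⁻¹ * (C * ‖a‖ ^ k) := by gcongr
      _ = C * (‖a‖ ^ k / k.factorial) := by ring
  have hsum := hasSum_sphereIntegral (fun k => by fun_prop)
    ((Real.summable_pow_div_factorial ‖a‖).mul_left C) hbound
  simp only [sphereIntegral_const_mul, h, mul_zero] at hsum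
  rw [← hsum.unique hasSum_zero]
  refine sphereIntegral_congr fun x _ => ?_
  rw [Real.exp_eq_exp_ℝ, NormedSpace.exp_eq_tsum_div, ← tsum_mul_left]
  exact tsum_congr fun k => by ring

theorem eq_zero_of_sphereIntegral_mul_inner_pow {f : E → ℝ} (hf : Continuous f)
    (h : ∀ (a : E) (k : ℕ), sphereIntegral (fun x => f x * inner ℝ a x ^ k) = 0) {x : E}
    (hx : ‖x‖ = 1) :
    f x = 0 := by
  have horth : ∀ g ∈ Algebra.adjoin ℝ (Set.range (sphereExp (E := E))),
      ∫ θ : Metric.sphere (0 : E) 1, f θ * g θ ∂(volume : Measure E).toSphere = 0 := by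
    intro g hg
    rw [← MonoidHom.coe_mrange, ← Subalgebra.mem_toSubmodule, Algebra.adjoin_eq_span,
      Submonoid.closure_eq] at hg
    have hint (g : C(Metric.sphere (0 : E) 1, ℝ)) :
        Integrable (fun θ : Metric.sphere (0 : E) 1 => f θ * g θ) (volume : Measure E).toSphere :=
      ((hf.comp continuous_subtype_val).mul g.continuous).integrable_of_hasCompactSupport
        (HasCompactSupport.of_compactSpace _)
    induction hg using Submodule.span_induction with
    | mem g hg =>
      obtain ⟨a, rfl⟩ := hg
      exact sphereIntegral_mul_exp_eq_zero hf (h a.toAdd)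
    | zero => simp
    | add g₁ g₂ _ _ h₁ h₂ =>
      simp only [ContinuousMap.add_apply, mul_add]
      rw [integral_add (hint g₁) (hint g₂), h₁, h₂, add_zero]
    | smul c g _ hg =>
      simp only [ContinuousMap.smul_apply, smul_eq_mul, mul_left_comm (f _) c]
      rw [integral_const_mul, hg, mul_zero]
  have hzero := eq_zero_of_integral_mul_subalgebra_eq_zero
    (f := ⟨fun θ : Metric.sphere (0 : E) 1 => f θ, by fun_prop⟩) separatesPoints_adjoin_sphereExp
    horth
  exact DFunLike.congr_fun hzero ⟨x, by simpa using hx⟩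

end Completeness

/-! ### Radial functions -/

section RadialFunction

variable {n : ℕ} {f : Euc (n + 1) → ℝ} {x : Euc (n + 1)}

/-- A function on Euclidean space is radial if its value depends only on the norm. -/
def IsRadial {N : ℕ} (f : Euc N → ℝ) : Prop :=
  ∀ ⦃x y⦄, ‖x‖ = ‖y‖ → f x = f y

/-- The restriction of a function to the first coordinate axis. For a radial function this is its
radial profile, extended to an even function on the real line. -/
def axisProfile (f : Euc (n + 1) → ℝ) (r : ℝ) : ℝ :=
  f (r • EuclideanSpace.single 0 1)

theorem norm_smul_single_zero (r : ℝ) :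
    ‖r • (EuclideanSpace.single 0 1 : Euc (n + 1))‖ = |r| := by
  rw [norm_smul, PiLp.norm_single, norm_one, mul_one, Real.norm_eq_abs]

theorem axisProfile_norm (hf : IsRadial f) (x : Euc (n + 1)) : axisProfile f ‖x‖ = f x :=
  hf (by rw [norm_smul_single_zero, abs_norm])

theorem axisProfile_neg (hf : IsRadial f) (r : ℝ) : axisProfile f (-r) = axisProfile f r :=
  hf (by rw [norm_smul_single_zero, norm_smul_single_zero, abs_neg])

theorem axisProfile_zero (f : Euc (n + 1) → ℝ) : axisProfile f 0 = f 0 := by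
  rw [axisProfile, zero_smul]

theorem contDiff_axisProfile (hf : ContDiff ℝ (⊤ : ℕ∞) f) :
    ContDiff ℝ (⊤ : ℕ∞) (axisProfile f) :=
  hf.comp (contDiff_id.smul contDiff_const)

theorem hasDerivAt_axisProfile (hf : ContDiff ℝ (⊤ : ℕ∞) f) (r : ℝ) :
    HasDerivAt (axisProfile f) (deriv (axisProfile f) r) r :=
  ((contDiff_axisProfile hf).differentiable (by simp) r).hasDerivAt

theorem contDiff_deriv_axisProfile (hf : ContDiff ℝ (⊤ : ℕ∞) f) :
    ContDiff ℝ (⊤ : ℕ∞) (deriv (axisProfile f)) :=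
  (contDiff_infty_iff_deriv.1 (contDiff_axisProfile hf)).2

theorem hasDerivAt_deriv_axisProfile (hf : ContDiff ℝ (⊤ : ℕ∞) f) (r : ℝ) :
    HasDerivAt (deriv (axisProfile f)) (deriv (deriv (axisProfile f)) r) r :=
  ((contDiff_deriv_axisProfile hf).differentiable (by simp) r).hasDerivAt

theorem deriv_axisProfile_zero (hf : IsRadial f) : deriv (axisProfile f) 0 = 0 := by
  have heven : deriv (fun r => axisProfile f (-r)) 0 = -deriv (axisProfile f) 0 := by
    rw [deriv_comp_neg, neg_zero]
  rw [funext (axisProfile_neg hf)] at heven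
  exact self_eq_neg.1 heven

theorem differentiableAt_norm (hx : x ≠ 0) : DifferentiableAt ℝ (‖·‖ : Euc (n + 1) → ℝ) x :=
  (contDiffAt_norm ℝ hx).differentiableAt one_ne_zero

theorem pd_norm (l : Fin (n + 1)) (hx : x ≠ 0) : pd l (‖·‖) x = x l / ‖x‖ := by
  have hsq : pd l (fun y : Euc (n + 1) => ‖y‖ * ‖y‖) x = 2 * x l := by
    simp only [← pow_two]
    rw [pd, fderiv_norm_sq_apply]
    simp [EuclideanSpace.inner_single_right]
  rw [pd_mul l (differentiableAt_norm hx) (differentiableAt_norm hx)] at hsq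
  rw [eq_div_iff (norm_ne_zero_iff.2 hx)]
  linarith

theorem pd_eq_of_isRadial (hf : ContDiff ℝ (⊤ : ℕ∞) f) (hrad : IsRadial f) (l : Fin (n + 1))
    (hx : x ≠ 0) : pd l f x = deriv (axisProfile f) ‖x‖ * (x l / ‖x‖) := by
  rw [← pd_norm l hx, ← pd_comp l (differentiableAt_norm hx) (hasDerivAt_axisProfile hf ‖x‖),
    funext (axisProfile_norm hrad)]

theorem lap_eq_of_isRadial (hf : ContDiff ℝ (⊤ : ℕ∞) f) (hrad : IsRadial f) (hx : x ≠ 0) :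
    lap f x = deriv (deriv (axisProfile f)) ‖x‖ + n / ‖x‖ * deriv (axisProfile f) ‖x‖ := by
  have hr : ‖x‖ ≠ 0 := norm_ne_zero_iff.2 hx
  set V' := deriv (axisProfile f)
  have hquot : HasDerivAt (fun r => V' r / r) ((deriv V' ‖x‖ * ‖x‖ - V' ‖x‖) / ‖x‖ ^ 2) ‖x‖ := by
    simpa using! (hasDerivAt_deriv_axisProfile hf ‖x‖).div (hasDerivAt_id _) hr
  have hpd (l : Fin (n + 1)) : pd l (pd l f) x =
      (deriv V' ‖x‖ * ‖x‖ - V' ‖x‖) / ‖x‖ ^ 3 * (x l * x l) + V' ‖x‖ / ‖x‖ := by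
    have hev : pd l f =ᶠ[𝓝 x] fun y => V' ‖y‖ / ‖y‖ * y l := by
      filter_upwards [isOpen_ne.mem_nhds hx] with y hy
      rw [pd_eq_of_isRadial hf hrad l hy]
      ring
    have hcoord : pd l (fun y : Euc (n + 1) => y l) x = 1 := by
      rw [pd, fderiv_coord, PiLp.single_apply, if_pos rfl]
    have hnorm := differentiableAt_norm hx
    have hdiff : DifferentiableAt ℝ (fun y : Euc (n + 1) => V' ‖y‖ / ‖y‖) x :=
      hquot.differentiableAt.comp x hnorm
    rw [pd, hev.fderiv_eq, ← pd, pd_mul l hdiff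
      (differentiable_of_smooth (contDiff_coord l) x), pd_comp l hnorm hquot, pd_norm l hx, hcoord]
    field_simp
  simp only [lap, hpd, Finset.sum_add_distrib, ← Finset.mul_sum, sum_coord_mul_self,
    Finset.sum_const, Finset.card_univ, Fintype.card_fin, nsmul_eq_mul]
  push_cast
  field_simp
  ring

theorem isRadialSolution_axisProfile {Q : ℝ → ℝ} (hf : ContDiff ℝ (⊤ : ℕ∞) f) (hrad : IsRadial f)
    (hlap : ∀ x, x ≠ 0 → lap f x = -(Q ‖x‖ * f x)) :
    IsRadialSolution n Q (axisProfile f) (deriv (axisProfile f)) where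
  hasDerivAt r _ := hasDerivAt_axisProfile hf r
  hasDerivAt_deriv r hr := by
    set x : Euc (n + 1) := r • EuclideanSpace.single 0 1
    have hx : ‖x‖ = r := (norm_smul_single_zero r).trans (abs_of_pos hr)
    have hx0 : x ≠ 0 := norm_ne_zero_iff.1 (hx.trans_ne hr.ne')
    have heq := (lap_eq_of_isRadial hf hrad hx0).symm.trans (hlap x hx0)
    rw [← axisProfile_norm hrad x, hx] at heq
    exact (hasDerivAt_deriv_axisProfile hf r).congr_deriv (by linarith)

end RadialFunction

/-! ### Schrödinger kernels with a radial potential -/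

section SchrodingerKernel

variable {n : ℕ} {Q : ℝ → ℝ} {φ : Euc (n + 1) → ℝ}

/-- The space of smooth square-integrable solutions of `-Δφ = Q(|x|) φ` on the punctured space,
`Q` being a function of the radius. -/
def schrodingerKernel (N : ℕ) (Q : ℝ → ℝ) : Submodule ℝ (Euc N → ℝ) where
  carrier := {φ | ContDiff ℝ (⊤ : ℕ∞) φ ∧ MemLp φ 2 ∧ ∀ x, x ≠ 0 → lap φ x = -(Q ‖x‖ * φ x)}
  zero_mem' := by
    have hpd (i : Fin N) : pd i (0 : Euc N → ℝ) = 0 := by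
      ext x
      simp [pd]
    exact ⟨contDiff_const, MemLp.zero, fun x _ => by simp [lap, hpd]⟩
  add_mem' := by
    rintro φ ψ ⟨hφ, hφ2, hlapφ⟩ ⟨hψ, hψ2, hlapψ⟩
    refine ⟨hφ.add hψ, hφ2.add hψ2, fun x hx => (lap_add hφ hψ x).trans ?_⟩
    rw [hlapφ x hx, hlapψ x hx, Pi.add_apply]
    ring
  smul_mem' := by
    rintro c φ ⟨hφ, hφ2, hlapφ⟩
    refine ⟨contDiff_const.mul hφ, hφ2.const_smul c, fun x hx => (lap_const_mul c hφ x).trans ?_⟩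
    rw [hlapφ x hx, Pi.smul_apply, smul_eq_mul]
    ring

/-- The potential of the radial equation for the `k`-th moments of a solution of
`-Δφ = Q(|x|) φ` in dimension `n + 1`, namely `Q` minus the centrifugal term `k (k + n - 1) / r²`
coming from the `k`-th eigenvalue of the spherical Laplacian. -/
def modePotential (n : ℕ) (Q : ℝ → ℝ) (k : ℕ) (r : ℝ) : ℝ :=
  Q r - k * (k + n - 1) / r ^ 2

theorem modePotential_zero (n : ℕ) (Q : ℝ → ℝ) : modePotential n Q 0 = Q := by
  ext r
  simp [modePotential]

theorem modePotential_le (n : ℕ) (Q : ℝ → ℝ) {j k : ℕ} (hjk : j ≤ k) (r : ℝ) :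
    modePotential n Q k r ≤ modePotential n Q j r := by
  rcases hjk.eq_or_lt with rfl | hlt
  · rfl
  have hdiff : 0 ≤ ((k : ℝ) - j) * (k + j + n - 1) := by
    have hk : (j : ℝ) + 1 ≤ k := by exact_mod_cast hlt
    exact mul_nonneg (by linarith) (by linarith [j.cast_nonneg (α := ℝ), n.cast_nonneg (α := ℝ)])
  refine sub_le_sub_left (div_le_div_of_nonneg_right ?_ (sq_nonneg r)) _
  linarith

theorem isRadialSolution_moment (hφ : φ ∈ schrodingerKernel (n + 1) Q) (a : Euc (n + 1)) (k : ℕ)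
    (hlow : ∀ r, 0 < r → k * (k - 1) * moment φ a (k - 2) r = 0) :
    IsRadialSolution n (modePotential n Q k) (moment φ a k) (momentDeriv φ a k) where
  hasDerivAt r _ := hasDerivAt_moment hφ.1 a k r
  hasDerivAt_deriv r hr := by
    have hlap : moment (lap φ) a k r = -Q r * moment φ a k r := by
      rw [moment, moment, ← sphereIntegral_const_mul]
      refine sphereIntegral_congr fun x hx => ?_
      have hnorm : ‖r • x‖ = r := by rw [norm_smul, hx, mul_one, Real.norm_of_nonneg hr.le]
      rw [hφ.2.2 (r • x) (norm_ne_zero_iff.1 (hnorm.trans_ne hr.ne')), hnorm]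
      ring
    have hmode := moment_lap hφ.1 a k r
    rw [hlap] at hmode
    push_cast at hmode
    refine (hasDerivAt_momentDeriv hφ.1 a k r).congr_deriv ?_
    unfold modePotential
    field_simp
    linear_combination -hmode - ‖a‖ ^ 2 * hlow r hr

theorem continuous_moment (hφ : ContDiff ℝ (⊤ : ℕ∞) φ) (a : Euc (n + 1)) (k : ℕ) :
    Continuous (moment φ a k) :=
  continuous_iff_continuousAt.2 fun r => (hasDerivAt_moment hφ a k r).continuousAt

theorem continuous_momentDeriv (hφ : ContDiff ℝ (⊤ : ℕ∞) φ) (a : Euc (n + 1)) (k : ℕ) :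
    Continuous (momentDeriv φ a k) :=
  continuous_iff_continuousAt.2 fun r => (hasDerivAt_momentDeriv hφ a k r).continuousAt

theorem integrableOn_pow_mul_moment_sq (hφ : ContDiff ℝ (⊤ : ℕ∞) φ) (hφ2 : MemLp φ 2)
    (a : Euc (n + 1)) (k : ℕ) :
    IntegrableOn (fun r => r ^ n * moment φ a k r ^ 2) (Set.Ioi 0) := by
  have hpolar := integrableOn_pow_mul_sphereIntegral hφ2.integrable_sq
  rw [finrank_euclideanSpace_fin, Nat.add_sub_cancel] at hpolar
  set A := sphereIntegral fun x : Euc (n + 1) => (inner ℝ a x ^ k) ^ 2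
  refine (hpolar.mul_const A).mono' ?_ ((ae_restrict_mem measurableSet_Ioi).mono ?_)
  · have hm := continuous_moment hφ a k
    exact (by fun_prop : Continuous fun r => r ^ n * moment φ a k r ^ 2).aestronglyMeasurable
  · intro r (hr : 0 < r)
    rw [Real.norm_of_nonneg (by positivity), mul_assoc]
    gcongr
    have hc := hφ.continuous
    exact sphereIntegral_mul_sq_le (by fun_prop) (by fun_prop)

theorem moment_zero_right (φ : Euc (n + 1) → ℝ) (a : Euc (n + 1)) (k : ℕ) :
    moment φ a k 0 = φ 0 * sphereIntegral fun x => inner ℝ a x ^ k := by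
  simp only [moment, zero_smul, sphereIntegral_const_mul]

theorem momentDeriv_zero_right (hφ : fderiv ℝ φ 0 = 0) (a : Euc (n + 1)) (k : ℕ) :
    momentDeriv φ a k 0 = 0 := by
  simp [momentDeriv, hφ, sphereIntegral]

theorem momentDeriv_zero_zero (φ : Euc (n + 1) → ℝ) (a : Euc (n + 1)) :
    momentDeriv φ a 0 0 = 0 := by
  have hodd := sphereIntegral_comp_isometry (LinearIsometryEquiv.neg ℝ)
    (F := fun x : Euc (n + 1) => fderiv ℝ φ 0 x) (fderiv ℝ φ 0).continuous
  simp only [LinearIsometryEquiv.coe_neg, map_neg, ← neg_one_mul (fderiv ℝ φ 0 _),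
    sphereIntegral_const_mul] at hodd
  simp only [momentDeriv, zero_smul, pow_zero, mul_one]
  linarith

theorem tendsto_moment_div (hφ : ContDiff ℝ (⊤ : ℕ∞) φ) (hφ0 : φ 0 = 0) (a : Euc (n + 1)) (k : ℕ) :
    Tendsto (fun r => moment φ a k r / r) (𝓝[>] 0) (𝓝 (momentDeriv φ a k 0)) := by
  have hm0 : moment φ a k 0 = 0 := by rw [moment_zero_right, hφ0, zero_mul]
  exact tendsto_div_nhdsGT_zero (hasDerivAt_moment hφ a k 0) hm0

theorem tendsto_piconeForm_moment (hφ : ContDiff ℝ (⊤ : ℕ∞) φ) (hφ0 : φ 0 = 0) {w w' : ℝ → ℝ}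
    {l : ℝ} (hw : Tendsto (fun r => r * (w' r / w r)) (𝓝[>] 0) (𝓝 l)) (a : Euc (n + 1)) (k : ℕ) :
    Tendsto (piconeForm n w w' (moment φ a k) (momentDeriv φ a k)) (𝓝[>] 0) (𝓝 0) := by
  have hm : Tendsto (moment φ a k) (𝓝[>] 0) (𝓝 (moment φ a k 0)) :=
    (continuous_moment hφ a k).continuousWithinAt
  rw [moment_zero_right, hφ0, zero_mul] at hm
  have hm' : Tendsto (momentDeriv φ a k) (𝓝[>] 0) (𝓝 (momentDeriv φ a k 0)) :=
    (continuous_momentDeriv hφ a k).continuousWithinAt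
  have hpow : Tendsto (fun r : ℝ => r ^ n) (𝓝[>] 0) (𝓝 (0 ^ n)) :=
    (continuous_pow n).continuousWithinAt.tendsto
  have hprod := hpow.mul (hm.mul (hm'.sub ((tendsto_moment_div hφ hφ0 a k).mul hw)))
  rw [zero_mul, mul_zero] at hprod
  refine hprod.congr' ?_
  filter_upwards [self_mem_nhdsWithin] with r (hr : 0 < r)
  rw [piconeForm]
  field_simp

-- The centrifugal term makes the modes `k ≥ j` comparable, by Picone's identity, with a positive
-- solution in mode `j`, so they are multiples of it.
theorem moment_eq_zero_of_isRadialSolution {j : ℕ} {w w' : ℝ → ℝ} {b l : ℝ}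
    (hφ : φ ∈ schrodingerKernel (n + 1) Q) (hφ0 : φ 0 = 0)
    (hlow : ∀ k < j, ∀ a r, 0 < r → moment φ a k r = 0)
    (hvanish : ∀ a k, Tendsto (fun r => moment φ a k r / r ^ j) (𝓝[>] 0) (𝓝 0))
    (hw : IsRadialSolution n (modePotential n Q j) w w') (hw0 : ∀ r, 0 < r → w r ≠ 0)
    (hb : b ≠ 0) (hwb : Tendsto (fun r => w r / r ^ j) (𝓝[>] 0) (𝓝 b))
    (hwl : Tendsto (fun r => r * (w' r / w r)) (𝓝[>] 0) (𝓝 l)) (k : ℕ) :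
    ∀ a r, 0 < r → moment φ a k r = 0 := by
  induction k using Nat.strong_induction_on with
  | h k ih =>
  rcases lt_or_ge k j with hkj | hjk
  · exact hlow k hkj
  intro a
  have hlower (r : ℝ) (hr : 0 < r) : (k : ℝ) * (k - 1) * moment φ a (k - 2) r = 0 := by
    rcases k with _ | _ | k
    · simp
    · simp
    · rw [ih (k + 2 - 2) (by lia) a r hr, mul_zero]
  obtain ⟨c, hc⟩ := (isRadialSolution_moment hφ a k hlower).exists_eq_const_mul hw hw0
    (fun r _ => modePotential_le n Q hjk r)
    (integrableOn_pow_mul_moment_sq hφ.1 hφ.2.1 a k)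
    (tendsto_piconeForm_moment hφ.1 hφ0 hwl a k)
  have hlim : Tendsto (fun r => moment φ a k r / r ^ j) (𝓝[>] 0) (𝓝 (c * b)) := by
    refine (hwb.const_mul c).congr' ?_
    filter_upwards [self_mem_nhdsWithin] with r hr
    rw [hc r hr, mul_div_assoc]
  have hc0 : c = 0 :=
    (mul_eq_zero.1 (tendsto_nhds_unique hlim (hvanish a k))).resolve_right hb
  intro r hr
  rw [hc r hr, hc0, zero_mul]

theorem eq_zero_of_moment_eq_zero (hφ : ContDiff ℝ (⊤ : ℕ∞) φ) (hφ0 : φ 0 = 0)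
    (h : ∀ k a r, 0 < r → moment φ a k r = 0) : φ = 0 := by
  ext x
  rcases eq_or_ne x 0 with rfl | hx
  · exact hφ0
  have hr : 0 < ‖x‖ := norm_pos_iff.2 hx
  have hc := hφ.continuous
  have hzero := eq_zero_of_sphereIntegral_mul_inner_pow (f := fun y => φ (‖x‖ • y)) (by fun_prop)
    (fun a k => h k a ‖x‖ hr) (norm_smul_inv_norm (𝕜 := ℝ) hx)
  simpa [smul_smul, hr.ne'] using hzero

end SchrodingerKernel

section KernelClassification

variable {n : ℕ} {Q : ℝ → ℝ} {φ : Euc (n + 1) → ℝ}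

theorem exists_eq_smul_of_mem_schrodingerKernel {W : Euc (n + 1) → ℝ}
    (hW : W ∈ schrodingerKernel (n + 1) Q) (hrad : IsRadial W) (hW0 : ∀ x, W x ≠ 0)
    (hφ : φ ∈ schrodingerKernel (n + 1) Q) : ∃ c : ℝ, φ = c • W := by
  set c := φ 0 / W 0
  set χ := φ - c • W
  have hχ : χ ∈ schrodingerKernel (n + 1) Q := Submodule.sub_mem _ hφ (Submodule.smul_mem _ c hW)
  have hχ0 : χ 0 = 0 := by simp [χ, c, hW0 0]
  have hχlim (a : Euc (n + 1)) (k : ℕ) :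
      Tendsto (fun r => moment χ a k r / r ^ 0) (𝓝[>] 0) (𝓝 0) := by
    have hlim : Tendsto (moment χ a k) (𝓝[>] 0) (𝓝 (moment χ a k 0)) :=
      (continuous_moment hχ.1 a k).continuousWithinAt
    simpa [moment_zero_right, hχ0] using hlim
  have hw : Tendsto (axisProfile W) (𝓝[>] 0) (𝓝 (W 0)) :=
    ((contDiff_axisProfile hW.1).continuous.tendsto' _ _ (axisProfile_zero W)).mono_left
      nhdsWithin_le_nhds
  have hw' : Tendsto (deriv (axisProfile W)) (𝓝[>] 0) (𝓝 0) :=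
    ((contDiff_deriv_axisProfile hW.1).continuous.tendsto' _ _
      (deriv_axisProfile_zero hrad)).mono_left nhdsWithin_le_nhds
  have hwl := tendsto_id_nhdsGT_zero.mul (hw'.div hw (hW0 0))
  refine ⟨c, sub_eq_zero.1 (eq_zero_of_moment_eq_zero hχ.1 hχ0 ?_)⟩
  refine moment_eq_zero_of_isRadialSolution (j := 0) (w := axisProfile W) hχ hχ0 (by simp) hχlim ?_
    (fun r _ => hW0 _) (hW0 0) (by simpa using hw) hwl
  rw [modePotential_zero]
  exact isRadialSolution_axisProfile hW.1 hrad hW.2.2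

theorem sphereIntegral_one_ne_zero : sphereIntegral (fun _ : Euc (n + 1) => 1) ≠ 0 := by
  rw [sphereIntegral, integral_const, smul_eq_mul, mul_one, Ne, measureReal_eq_zero_iff,
    Measure.measure_univ_eq_zero]
  exact Measure.toSphere_ne_zero _

theorem isRegularRadialSolution_moment_zero (hφ : φ ∈ schrodingerKernel (n + 1) Q)
    (a : Euc (n + 1)) :
    IsRegularRadialSolution n Q (moment φ a 0) (momentDeriv φ a 0) where
  toIsRadialSolution := by
    simpa [modePotential_zero] using isRadialSolution_moment hφ a 0
  integrableOn := integrableOn_pow_mul_moment_sq hφ.1 hφ.2.1 a 0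
  tendsto_zero := (continuous_moment hφ.1 a 0).continuousWithinAt
  tendsto_zero_deriv := ((continuous_momentDeriv hφ.1 a 0).tendsto' _ _
    (momentDeriv_zero_zero φ a)).mono_left nhdsWithin_le_nhds

theorem apply_zero_eq_zero_of_moment_zero (hφ : ContDiff ℝ (⊤ : ℕ∞) φ)
    (h : ∀ r, 0 < r → moment φ 0 0 r = 0) : φ 0 = 0 := by
  have hlim : Tendsto (moment φ 0 0) (𝓝[>] 0) (𝓝 (moment φ 0 0 0)) :=
    (continuous_moment hφ 0 0).continuousWithinAt
  have hzero : moment φ 0 0 0 = 0 :=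
    tendsto_nhds_unique hlim (tendsto_const_nhds.congr'
      (eventually_nhdsWithin_of_forall fun r hr => (h r hr).symm))
  simp only [moment_zero_right, pow_zero] at hzero
  exact (mul_eq_zero.1 hzero).resolve_right sphereIntegral_one_ne_zero

variable {f : Euc (n + 1) → ℝ}

theorem pd_zero_of_isRadial (hrad : IsRadial f) (l : Fin (n + 1)) : pd l f 0 = 0 := by
  have heven := pd_comp_smul l f (-1) 0
  have hneg : (fun x => f ((-1 : ℝ) • x)) = f := funext fun x => hrad (by simp)
  rw [hneg, smul_zero] at heven
  linarith

theorem fderiv_pd_zero_of_isRadial (hf : ContDiff ℝ (⊤ : ℕ∞) f) (hrad : IsRadial f)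
    (l : Fin (n + 1)) (v : Euc (n + 1)) :
    fderiv ℝ (pd l f) 0 v = deriv (deriv (axisProfile f)) 0 * v l := by
  rcases eq_or_ne v 0 with rfl | hv
  · simp
  have hv' : ‖v‖ ≠ 0 := norm_ne_zero_iff.2 hv
  have hray : HasDerivAt (fun t : ℝ => pd l f (t • v)) (fderiv ℝ (pd l f) 0 v) 0 := by
    have hline : HasDerivAt (fun t : ℝ => t • v) v 0 := by
      simpa using (hasDerivAt_id (0 : ℝ)).smul_const v
    have hpd := (differentiable_of_smooth (contDiff_pd hf l) ((0 : ℝ) • v)).hasFDerivAt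
    simpa using! hpd.comp_hasDerivAt 0 hline
  have hprofile : HasDerivAt (fun t : ℝ => deriv (axisProfile f) (t * ‖v‖) * (v l / ‖v‖))
      (deriv (deriv (axisProfile f)) 0 * v l) 0 := by
    have hscale : HasDerivAt (fun t : ℝ => t * ‖v‖) ‖v‖ 0 := by
      simpa using (hasDerivAt_id (0 : ℝ)).mul_const ‖v‖
    have hcomp := (hasDerivAt_deriv_axisProfile hf (0 * ‖v‖)).comp 0 hscale
    refine (hcomp.mul_const (v l / ‖v‖)).congr_deriv ?_
    rw [zero_mul]
    field_simp
  have heq (t : ℝ) (ht : t ∈ Set.Ici 0) :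
      pd l f (t • v) = deriv (axisProfile f) (t * ‖v‖) * (v l / ‖v‖) := by
    rcases (Set.mem_Ici.1 ht).eq_or_lt with rfl | ht
    · simp [pd_zero_of_isRadial hrad, deriv_axisProfile_zero hrad]
    · rw [pd_eq_of_isRadial hf hrad l (smul_ne_zero ht.ne' hv), norm_smul,
        Real.norm_of_nonneg ht.le, PiLp.smul_apply, smul_eq_mul, mul_div_mul_left _ _ ht.ne']
  exact (uniqueDiffOn_Ici 0 0 Set.self_mem_Ici).eq_deriv _ hray.hasDerivWithinAt
    (hprofile.hasDerivWithinAt.congr heq (heq 0 Set.self_mem_Ici))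

theorem fderiv_sub_sum_pd_zero (hf : ContDiff ℝ (⊤ : ℕ∞) f) (hrad : IsRadial f)
    (hφ : ContDiff ℝ (⊤ : ℕ∞) φ) (hb : deriv (deriv (axisProfile f)) 0 ≠ 0) :
    fderiv ℝ (φ - ∑ l, (pd l φ 0 / deriv (deriv (axisProfile f)) 0) • pd l f) 0 = 0 := by
  have hderiv := (differentiable_of_smooth hφ 0).hasFDerivAt.sub
    (HasFDerivAt.sum (u := Finset.univ) fun l _ =>
      (differentiable_of_smooth (contDiff_pd hf l) 0).hasFDerivAt.const_smul
        (pd l φ 0 / deriv (deriv (axisProfile f)) 0))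
  ext v
  rw [hderiv.fderiv, sub_apply, sum_apply, zero_apply, fderiv_eq_sum_pd, sub_eq_zero]
  refine Finset.sum_congr rfl fun l _ => ?_
  rw [smul_apply, fderiv_pd_zero_of_isRadial hf hrad, smul_eq_mul]
  field_simp

namespace RadialProfile

variable {v v' g G : ℝ → ℝ}

-- Differentiating the profile equation turns `n / r` into the first centrifugal term.
theorem isRadialSolution_deriv (h : RadialProfile n v v' g Q G) :
    IsRadialSolution n (modePotential n Q 1) v' (fun r => -(n / r) * v' r - g r) where
  hasDerivAt := h.hasDerivAt_deriv
  hasDerivAt_deriv r hr := by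
    have hcoef : HasDerivAt (fun r : ℝ => -(n / r)) (n / r ^ 2) r := by
      simpa [div_eq_mul_inv] using ((hasDerivAt_inv hr.ne').const_mul (n : ℝ)).fun_neg
    refine ((hcoef.mul (h.hasDerivAt_deriv r hr)).sub
      (h.hasDerivAt_nonlinearity r hr)).congr_deriv ?_
    unfold modePotential
    push_cast
    ring

theorem deriv_deriv_zero_ne_zero (h : RadialProfile n v v' g Q G) {b : ℝ} (hb : HasDerivAt v' b 0)
    (hv' : v' 0 = 0) (hlim : Tendsto (deriv v') (𝓝[>] 0) (𝓝 b)) : b ≠ 0 := by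
  have hslope := tendsto_div_nhdsGT_zero hb hv'
  have heq : b = -n * b - g 0 := by
    refine tendsto_nhds_unique hlim (((hslope.const_mul (-n : ℝ)).sub
      h.tendsto_zero_nonlinearity).congr' ?_)
    filter_upwards [self_mem_nhdsWithin] with r (hr : 0 < r)
    rw [(h.hasDerivAt_deriv r hr).deriv]
    ring
  rintro rfl
  linarith [h.nonlinearity_zero_pos]

theorem exists_eq_sum_pd (hf : ContDiff ℝ (⊤ : ℕ∞) f) (hrad : IsRadial f)
    (h : RadialProfile n (axisProfile f) (deriv (axisProfile f)) g Q G)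
    (hpd : ∀ l, pd l f ∈ schrodingerKernel (n + 1) Q) (hφ : φ ∈ schrodingerKernel (n + 1) Q) :
    ∃ c : Fin (n + 1) → ℝ, φ = ∑ l, c l • pd l f := by
  set V' := deriv (axisProfile f)
  set b := deriv V' 0
  have hV'0 : V' 0 = 0 := deriv_axisProfile_zero hrad
  have hV'' : Tendsto (deriv V') (𝓝[>] 0) (𝓝 b) :=
    (contDiff_infty_iff_deriv.1 (contDiff_deriv_axisProfile hf)).2.continuous.continuousWithinAt
  have hb : b ≠ 0 := h.deriv_deriv_zero_ne_zero (hasDerivAt_deriv_axisProfile hf 0) hV'0 hV''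
  have hslope : Tendsto (fun r => V' r / r) (𝓝[>] 0) (𝓝 b) :=
    tendsto_div_nhdsGT_zero (hasDerivAt_deriv_axisProfile hf 0) hV'0
  set c : Fin (n + 1) → ℝ := fun l => pd l φ 0 / b
  set χ := φ - ∑ l, c l • pd l f
  have hχ : χ ∈ schrodingerKernel (n + 1) Q :=
    Submodule.sub_mem _ hφ (Submodule.sum_mem _ fun l _ => Submodule.smul_mem _ _ (hpd l))
  have hχ' : fderiv ℝ χ 0 = 0 := fderiv_sub_sum_pd_zero hf hrad hφ.1 hb
  have hradial (a : Euc (n + 1)) (r : ℝ) (hr : 0 < r) : moment χ a 0 r = 0 :=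
    (isRegularRadialSolution_moment_zero hχ a).eq_zero h hr
  have hχ0 : χ 0 = 0 := apply_zero_eq_zero_of_moment_zero hχ.1 (hradial 0)
  have hχlim (a : Euc (n + 1)) (k : ℕ) :
      Tendsto (fun r => moment χ a k r / r ^ 1) (𝓝[>] 0) (𝓝 0) := by
    simpa [momentDeriv_zero_right hχ'] using tendsto_moment_div hχ.1 hχ0 a k
  have hlog : Tendsto (fun r => r * ((-(n / r) * V' r - g r) / V' r)) (𝓝[>] 0) (𝓝 (b / b)) := by
    refine (hV''.div hslope hb).congr' ?_
    filter_upwards [self_mem_nhdsWithin] with r (hr : 0 < r)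
    rw [Pi.div_apply, (h.hasDerivAt_deriv r hr).deriv]
    field_simp
  refine ⟨c, sub_eq_zero.1 (eq_zero_of_moment_eq_zero hχ.1 hχ0 ?_)⟩
  exact moment_eq_zero_of_isRadialSolution (j := 1) hχ hχ0
    (fun k hk a r hr => Nat.lt_one_iff.1 hk ▸ hradial a r hr) hχlim h.isRadialSolution_deriv
    (fun r hr => (h.deriv_neg r hr).ne) hb (by simpa using hslope) hlog

end RadialProfile

end KernelClassification

/-! ### The dual change of variables -/

section DualVariable

/-- The derivative `√(1 + 2u²)` of the dual change of variables. -/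
def dualWeight (u : ℝ) : ℝ :=
  √(1 + 2 * u ^ 2)

/-- The dual change of variables `v = ∫₀ᵘ √(1 + 2t²) dt`, in closed form. It turns the quasilinear
equation for `u` into the semilinear equation `-Δv = g(v)`. -/
def dualMap (u : ℝ) : ℝ :=
  (u * dualWeight u + arsinh (√2 * u) / √2) / 2

/-- The nonlinearity `g(v)` of the dual equation, as a function of `u`. -/
def dualNonlinearity (ω p u : ℝ) : ℝ :=
  (u ^ p - ω * u) / dualWeight u

/-- The derivative `g'(v)` of the dual nonlinearity, as a function of `u`. -/
def dualPotential (ω p u : ℝ) : ℝ :=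
  (p * u ^ (p - 1) + 2 * (p - 1) * u ^ (p + 1) - ω) / dualWeight u ^ 4

/-- The primitive `∫₀ᵛ g` of the dual nonlinearity, as a function of `u`. -/
def dualPrimitive (ω p u : ℝ) : ℝ :=
  u ^ (p + 1) / (p + 1) - ω * u ^ 2 / 2

/-- The ratio of `v` to `u √(1 + 2u²)`. -/
def dualRatio (u : ℝ) : ℝ :=
  dualMap u / (u * dualWeight u)

variable {u : ℝ}

theorem rpow_eq_rpow_sub_one_mul (hu : 0 < u) (p : ℝ) : u ^ p = u ^ (p - 1) * u := by
  rw [← Real.rpow_add_one hu.ne', sub_add_cancel]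

theorem rpow_add_one_eq_rpow_sub_one_mul (hu : 0 < u) (p : ℝ) :
    u ^ (p + 1) = u ^ (p - 1) * u ^ 2 := by
  rw [Real.rpow_add_one hu.ne', rpow_eq_rpow_sub_one_mul hu]
  ring

theorem dualWeight_sq (u : ℝ) : dualWeight u ^ 2 = 1 + 2 * u ^ 2 :=
  Real.sq_sqrt (by positivity)

theorem dualWeight_pos (u : ℝ) : 0 < dualWeight u :=
  Real.sqrt_pos.2 (by positivity)

theorem one_le_dualWeight (u : ℝ) : 1 ≤ dualWeight u :=
  Real.one_le_sqrt.2 (by nlinarith [sq_nonneg u])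

theorem contDiff_dualWeight : ContDiff ℝ (⊤ : ℕ∞) dualWeight :=
  ContDiff.sqrt (by fun_prop) fun u => by positivity

theorem hasDerivAt_dualWeight (u : ℝ) : HasDerivAt dualWeight (2 * u / dualWeight u) u := by
  have hsq : HasDerivAt (fun u : ℝ => 1 + 2 * u ^ 2) (4 * u) u :=
    (((hasDerivAt_pow 2 u).const_mul 2).const_add 1).congr_deriv (by norm_num; ring)
  refine (hsq.sqrt (by positivity)).congr_deriv ?_
  rw [dualWeight]
  ring

theorem hasDerivAt_mul_dualWeight (u : ℝ) :
    HasDerivAt (fun u => u * dualWeight u) ((1 + 4 * u ^ 2) / dualWeight u) u := by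
  refine ((hasDerivAt_id' u).mul (hasDerivAt_dualWeight u)).congr_deriv ?_
  have hs := (dualWeight_pos u).ne'
  field_simp
  linear_combination dualWeight_sq u

theorem hasDerivAt_arsinh_sqrt_two_mul_div (u : ℝ) :
    HasDerivAt (fun u => arsinh (√2 * u) / √2) (1 / dualWeight u) u := by
  refine (((hasDerivAt_id' u).const_mul √2).arsinh.div_const √2).congr_deriv ?_
  rw [mul_pow, Real.sq_sqrt zero_le_two, ← dualWeight, smul_eq_mul]
  field_simp

theorem hasDerivAt_dualMap (u : ℝ) : HasDerivAt dualMap (dualWeight u) u := by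
  refine (((hasDerivAt_mul_dualWeight u).add
    (hasDerivAt_arsinh_sqrt_two_mul_div u)).div_const 2).congr_deriv ?_
  have hs := (dualWeight_pos u).ne'
  field_simp
  linear_combination (-2) * dualWeight_sq u

theorem contDiff_dualMap : ContDiff ℝ (⊤ : ℕ∞) dualMap := by
  have harsinh : ContDiff ℝ (⊤ : ℕ∞) fun u : ℝ => arsinh (√2 * u) :=
    Real.contDiff_arsinh.comp (by fun_prop)
  exact ((contDiff_id.mul contDiff_dualWeight).add (harsinh.div_const √2)).div_const 2

theorem dualMap_pos (hu : 0 < u) : 0 < dualMap u := by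
  have harsinh : 0 < arsinh (√2 * u) := Real.arsinh_pos_iff.2 (by positivity)
  exact half_pos (add_pos (mul_pos hu (dualWeight_pos u)) (div_pos harsinh (by positivity)))

theorem dualMap_le (hu : 0 < u) : dualMap u ≤ u * dualWeight u := by
  have harsinh : arsinh (√2 * u) ≤ √2 * u := by
    conv_rhs => rw [← Real.sinh_arsinh (√2 * u)]
    exact Real.self_le_sinh_iff.2 (Real.arsinh_nonneg_iff.2 (by positivity))
  have hdiv : arsinh (√2 * u) / √2 ≤ u := (div_le_iff₀' (by positivity)).2 harsinh
  have hs : u ≤ u * dualWeight u := le_mul_of_one_le_right hu.le (one_le_dualWeight u)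
  unfold dualMap
  linarith

-- The difference vanishes at the origin and has derivative `4u · arsinh(√2 u) / √2`.
theorem mul_dualWeight_pow_three_le (hu : 0 ≤ u) :
    u * dualWeight u ^ 3 ≤ dualMap u * (1 + 4 * u ^ 2) := by
  set f := fun u => dualMap u * (1 + 4 * u ^ 2) - u * dualWeight u ^ 3
  have hf (x : ℝ) : HasDerivAt f (4 * x * (arsinh (√2 * x) / √2)) x := by
    have hquad : HasDerivAt (fun u : ℝ => 1 + 4 * u ^ 2) (8 * x) x :=
      (((hasDerivAt_pow 2 x).const_mul 4).const_add 1).congr_deriv (by norm_num; ring)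
    refine (((hasDerivAt_dualMap x).mul hquad).sub
      ((hasDerivAt_id' x).mul ((hasDerivAt_dualWeight x).fun_pow 3))).congr_deriv ?_
    unfold dualMap
    push_cast
    field_simp
    linear_combination (-2) * √2 * dualWeight x * dualWeight_sq x
  have hmono : MonotoneOn f (Set.Ici 0) := by
    refine monotoneOn_of_deriv_nonneg (convex_Ici 0)
      (fun x _ => (hf x).continuousAt.continuousWithinAt)
      (fun x _ => (hf x).differentiableAt.differentiableWithinAt) fun x hx => ?_
    rw [interior_Ici, Set.mem_Ioi] at hx
    rw [(hf x).deriv]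
    have harsinh : 0 < arsinh (√2 * x) := Real.arsinh_pos_iff.2 (by positivity)
    positivity
  have hf0 : f 0 = 0 := by simp [f, dualMap]
  exact sub_nonneg.1 (hf0.symm.trans_le (hmono Set.self_mem_Ici hu hu))

theorem antitoneOn_dualRatio : AntitoneOn dualRatio (Set.Ioi 0) := by
  have hderiv (x : ℝ) (hx : 0 < x) := (hasDerivAt_dualMap x).fun_div (hasDerivAt_mul_dualWeight x)
    (mul_pos hx (dualWeight_pos x)).ne'
  refine antitoneOn_of_deriv_nonpos (convex_Ioi 0)
    (fun x hx => (hderiv x hx).continuousAt.continuousWithinAt)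
    (fun x hx => (hderiv x (interior_subset hx)).differentiableAt.differentiableWithinAt)
    fun x hx => ?_
  have hx : 0 < x := interior_subset hx
  refine (hderiv x hx).deriv.trans_le (div_nonpos_of_nonpos_of_nonneg ?_ (sq_nonneg _))
  have hs := dualWeight_pos x
  rw [sub_nonpos, mul_div_assoc', le_div_iff₀ hs]
  linarith [mul_dualWeight_pow_three_le hx.le]

theorem dualRatio_pos (hu : 0 < u) : 0 < dualRatio u :=
  div_pos (dualMap_pos hu) (mul_pos hu (dualWeight_pos u))

theorem dualRatio_le_one (hu : 0 < u) : dualRatio u ≤ 1 :=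
  (div_le_one (mul_pos hu (dualWeight_pos u))).2 (dualMap_le hu)

variable {ω p : ℝ}

theorem hasDerivAt_dualNonlinearity (ω p : ℝ) (hu : 0 < u) :
    HasDerivAt (dualNonlinearity ω p) (dualPotential ω p u * dualWeight u) u := by
  have hnum : HasDerivAt (fun u : ℝ => u ^ p - ω * u) (p * u ^ (p - 1) - ω) u := by
    simpa using! (Real.hasDerivAt_rpow_const (Or.inl hu.ne')).sub ((hasDerivAt_id u).const_mul ω)
  have hs := (dualWeight_pos u).ne'
  refine (hnum.div (hasDerivAt_dualWeight u) hs).congr_deriv ?_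
  rw [dualPotential, rpow_eq_rpow_sub_one_mul hu p, rpow_add_one_eq_rpow_sub_one_mul hu]
  field_simp
  linear_combination (p * u ^ (p - 1) - ω) * dualWeight_sq u

theorem hasDerivAt_dualPrimitive (ω : ℝ) (hp : p + 1 ≠ 0) (hu : 0 < u) :
    HasDerivAt (dualPrimitive ω p) (dualNonlinearity ω p u * dualWeight u) u := by
  refine (((Real.hasDerivAt_rpow_const (p := p + 1) (Or.inl hu.ne')).div_const (p + 1)).sub
    (((hasDerivAt_pow 2 u).const_mul ω).div_const 2)).congr_deriv ?_
  have hs := (dualWeight_pos u).ne'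
  rw [dualNonlinearity, add_sub_cancel_right]
  push_cast
  field_simp

theorem dual_combination_eq (ω p α β : ℝ) (hu : 0 < u) :
    α * (dualMap u * dualPotential ω p u) - β * dualNonlinearity ω p u =
      u / dualWeight u * (u ^ (p - 1) * (α * dualRatio u * (p - 1))
        - (β - α * dualRatio u / dualWeight u ^ 2) * (u ^ (p - 1) - ω)) := by
  have hs := (dualWeight_pos u).ne'
  have hratio : dualMap u = dualRatio u * (u * dualWeight u) := by
    rw [dualRatio, div_mul_cancel₀ _ (mul_ne_zero hu.ne' hs)]
  rw [dualPotential, dualNonlinearity, rpow_eq_rpow_sub_one_mul hu p,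
    rpow_add_one_eq_rpow_sub_one_mul hu, hratio]
  field_simp
  linear_combination (α * dualRatio u * u ^ (p - 1) * (1 - p)) * dualWeight_sq u

theorem dualRatio_div_lt_one (hu : 0 < u) : dualRatio u / dualWeight u ^ 2 < 1 := by
  have hs : 1 < dualWeight u ^ 2 := by
    rw [dualWeight_sq]
    linarith [pow_pos hu 2]
  rw [div_lt_one (by linarith)]
  linarith [dualRatio_le_one hu]

theorem mul_dualRatio_div_lt {α β : ℝ} (hαβ : α ≤ β) (hβ : 0 < β) (hu : 0 < u) :
    α * dualRatio u / dualWeight u ^ 2 < β := by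
  have hnonneg : 0 ≤ dualRatio u / dualWeight u ^ 2 :=
    div_nonneg (dualRatio_pos hu).le (sq_nonneg _)
  rw [mul_div_assoc]
  exact (mul_le_mul_of_nonneg_right hαβ hnonneg).trans_lt
    (mul_lt_of_lt_one_right hβ (dualRatio_div_lt_one hu))

theorem mul_sub_mul_neg_of_lt {X₁ X₂ c₁ c₂ d₁ d₂ : ℝ} (hω : 0 < ω) (hX₂ : 0 < X₂) (hX : X₂ < X₁)
    (hc₁ : 0 ≤ c₁) (hc : c₁ ≤ c₂) (hd₂ : 0 < d₂) (hd : d₂ ≤ d₁)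
    (h : X₂ * c₂ - d₂ * (X₂ - ω) ≤ 0) : X₁ * c₁ - d₁ * (X₁ - ω) < 0 := by
  have hX₁ : 0 < X₁ := hX₂.trans hX
  have hslope : 0 < d₂ - c₂ :=
    pos_of_mul_pos_left ((mul_pos hd₂ hω).trans_le (by linarith : d₂ * ω ≤ (d₂ - c₂) * X₂)) hX₂.le
  have hgrow : X₁ * c₂ < d₂ * (X₁ - ω) := by linarith [mul_lt_mul_of_pos_left hX hslope]
  have hXω : 0 < X₁ - ω :=
    pos_of_mul_pos_right ((mul_nonneg hX₁.le (hc₁.trans hc)).trans_lt hgrow) hd₂.le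
  have hcoef : X₁ * c₁ ≤ X₁ * c₂ := mul_le_mul_of_nonneg_left hc hX₁.le
  linarith [mul_le_mul_of_nonneg_right hd hXω.le]

theorem dual_combination_neg_of_lt (hω : 0 < ω) (hp : 1 < p) {α β u₁ u₂ : ℝ} (hα : 0 ≤ α)
    (hαβ : α ≤ β) (hβ : 0 < β) (hu₂ : 0 < u₂) (hlt : u₂ < u₁)
    (h : α * (dualMap u₂ * dualPotential ω p u₂) - β * dualNonlinearity ω p u₂ ≤ 0) :
    α * (dualMap u₁ * dualPotential ω p u₁) - β * dualNonlinearity ω p u₁ < 0 := by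
  have hu₁ : 0 < u₁ := hu₂.trans hlt
  have hp' : 0 ≤ p - 1 := by linarith
  have hρ : dualRatio u₁ ≤ dualRatio u₂ := antitoneOn_dualRatio hu₂ hu₁ hlt.le
  have hρ₁ := (dualRatio_pos hu₁).le
  have hρ₂ := (dualRatio_pos hu₂).le
  have hs₂ : 0 < dualWeight u₂ ^ 2 := pow_pos (dualWeight_pos u₂) 2
  have hs : dualWeight u₂ ^ 2 ≤ dualWeight u₁ ^ 2 := by
    rw [dualWeight_sq, dualWeight_sq]
    gcongr
  rw [dual_combination_eq ω p α β hu₂] at h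
  rw [dual_combination_eq ω p α β hu₁]
  refine mul_neg_of_pos_of_neg (div_pos hu₁ (dualWeight_pos u₁)) ?_
  refine mul_sub_mul_neg_of_lt hω (rpow_pos_of_pos hu₂ _)
    (Real.rpow_lt_rpow hu₂.le hlt (by linarith)) (by positivity) (by gcongr)
    (sub_pos.2 (mul_dualRatio_div_lt hαβ hβ hu₂)) ?_
    (nonpos_of_mul_nonpos_right h (div_pos hu₂ (dualWeight_pos u₂)))
  gcongr

theorem dualNonlinearity_lt_of_nonpos (hp : 1 < p) (hu : 0 < u)
    (h : dualNonlinearity ω p u ≤ 0) :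
    0 < dualMap u * dualPotential ω p u - dualNonlinearity ω p u := by
  have hs := dualWeight_pos u
  have hXω : u ^ (p - 1) - ω ≤ 0 := by
    rw [dualNonlinearity, rpow_eq_rpow_sub_one_mul hu p, ← sub_mul, div_nonpos_iff] at h
    rcases h with ⟨_, hs'⟩ | ⟨h, _⟩
    · linarith
    · exact nonpos_of_mul_nonpos_left h hu
  have hρ := dualRatio_pos hu
  have hgain : 0 < u ^ (p - 1) * (dualRatio u * (p - 1)) :=
    mul_pos (rpow_pos_of_pos hu _) (mul_pos hρ (by linarith))
  have hloss := mul_nonpos_of_nonneg_of_nonpos (sub_pos.2 (dualRatio_div_lt_one hu)).le hXω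
  have heq := dual_combination_eq ω p 1 1 hu
  simp only [one_mul] at heq
  rw [heq]
  exact mul_pos (div_pos hu hs) (by linarith)

end DualVariable

/-! ### Ground states in the dual variable -/

section GroundState

variable {N : ℕ} {F G : Type*} [NormedAddCommGroup F] [NormedSpace ℝ F] [NormedAddCommGroup G]
  [NormedSpace ℝ G]

theorem pd_continuousLinearMap_comp (L : F →L[ℝ] G) {f : Euc N → F} (hf : Differentiable ℝ f)
    (i : Fin N) : pd i (fun y => L (f y)) = fun x => L (pd i f x) := by
  ext x
  have hcomp : HasFDerivAt (fun y => L (f y)) (L.comp (fderiv ℝ f x)) x :=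
    L.hasFDerivAt.comp x (hf x).hasFDerivAt
  rw [pd, hcomp.fderiv]
  rfl

theorem lap_continuousLinearMap_comp (L : F →L[ℝ] G) {f : Euc N → F}
    (hf : ContDiff ℝ (⊤ : ℕ∞) f) (x : Euc N) : lap (fun y => L (f y)) x = L (lap f x) := by
  rw [lap, lap, map_sum]
  refine Finset.sum_congr rfl fun i _ => ?_
  rw [pd_continuousLinearMap_comp L (differentiable_of_smooth hf),
    pd_continuousLinearMap_comp L (differentiable_of_smooth (contDiff_pd hf i))]

variable {f : Euc N → ℝ}

theorem pd_comm (hf : ContDiff ℝ (⊤ : ℕ∞) f) (i j : Fin N) : pd i (pd j f) = pd j (pd i f) := by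
  ext x
  have hsymm : IsSymmSndFDerivAt ℝ f x :=
    hf.contDiffAt.isSymmSndFDerivAt (by simpa using WithTop.coe_le_coe.2 (le_top (a := (2 : ℕ∞))))
  have hpd (i j : Fin N) : pd i (pd j f) x =
      fderiv ℝ (fderiv ℝ f) x (EuclideanSpace.single i 1) (EuclideanSpace.single j 1) := by
    rw [fderiv_fderiv_eq_sum hf]
    simp [pd, PiLp.single_apply]
  rw [hpd, hpd, hsymm]

theorem lap_pd (hf : ContDiff ℝ (⊤ : ℕ∞) f) (l : Fin N) (x : Euc N) :
    lap (pd l f) x = pd l (lap f) x := by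
  have hsum : pd l (lap f) x = ∑ i, pd l (pd i (pd i f)) x := by
    have hfun : lap f = fun y => ∑ i, pd i (pd i f) y := rfl
    rw [hfun, pd, fderiv_fun_sum fun i _ =>
      differentiable_of_smooth (contDiff_pd (contDiff_pd hf i) i) x, sum_apply]
    rfl
  rw [hsum, lap]
  refine Finset.sum_congr rfl fun i _ => ?_
  rw [pd_comm hf i l, pd_comm (contDiff_pd hf i) i l]

theorem lap_comp {h h' h'' : ℝ → ℝ} (hf : ContDiff ℝ (⊤ : ℕ∞) f)
    (hh : ∀ t, HasDerivAt h (h' t) t) (hh' : ∀ t, HasDerivAt h' (h'' t) t) (x : Euc N) :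
    lap (fun y => h (f y)) x = h' (f x) * lap f x + h'' (f x) * gradsq f x := by
  have hdiff := differentiable_of_smooth hf
  simp only [lap, gradsq, Finset.mul_sum, ← Finset.sum_add_distrib]
  refine Finset.sum_congr rfl fun i _ => ?_
  have hpd : pd i (fun y => h (f y)) = fun y => h' (f y) * pd i f y :=
    funext fun y => pd_comp i (hdiff y) (hh _)
  have hdiff' : DifferentiableAt ℝ (fun y => h' (f y)) x :=
    (hh' (f x)).differentiableAt.comp x (hdiff x)
  rw [hpd, pd_mul i hdiff' (differentiable_of_smooth (contDiff_pd hf i) x),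
    pd_comp i (hdiff x) (hh' _)]
  ring

theorem lap_sq (hf : ContDiff ℝ (⊤ : ℕ∞) f) (x : Euc N) :
    lap (fun y => f y ^ 2) x = 2 * f x * lap f x + 2 * gradsq f x :=
  lap_comp (h := fun t => t ^ 2) (h' := fun t => 2 * t) (h'' := fun _ => 2) hf
    (fun t => by simpa using hasDerivAt_pow 2 t)
    (fun t => by simpa using (hasDerivAt_id' t).const_mul 2) x

theorem hasDerivAt_two_mul_div_dualWeight (u : ℝ) :
    HasDerivAt (fun u => 2 * u / dualWeight u) (2 / dualWeight u ^ 3) u := by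
  have hs := (dualWeight_pos u).ne'
  refine (((hasDerivAt_id' u).const_mul 2).fun_div (hasDerivAt_dualWeight u) hs).congr_deriv ?_
  field_simp
  linear_combination dualWeight_sq u

variable {ω p : ℝ} {u η : Euc N → ℝ}

namespace IsGroundState

theorem lap_add_gradsq (hu : IsGroundState N ω p u) (x : Euc N) :
    (1 + 2 * u x ^ 2) * lap u x + 2 * u x * gradsq u x = ω * u x - u x ^ p := by
  have hsolves := hu.solves x
  rw [lap_sq hu.smooth] at hsolves
  linarith

theorem contDiff_dualMap_comp (hu : IsGroundState N ω p u) :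
    ContDiff ℝ (⊤ : ℕ∞) fun y => dualMap (u y) :=
  contDiff_dualMap.comp hu.smooth

theorem lap_dualMap_comp (hu : IsGroundState N ω p u) (x : Euc N) :
    lap (fun y => dualMap (u y)) x = -dualNonlinearity ω p (u x) := by
  have hs := (dualWeight_pos (u x)).ne'
  rw [lap_comp hu.smooth hasDerivAt_dualMap hasDerivAt_dualWeight, dualNonlinearity]
  field_simp
  linear_combination hu.lap_add_gradsq x + lap u x * dualWeight_sq (u x)

theorem pd_dualMap_comp (hu : IsGroundState N ω p u) (l : Fin N) (x : Euc N) :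
    pd l (fun y => dualMap (u y)) x = dualWeight (u x) * pd l u x :=
  pd_comp l (differentiable_of_smooth hu.smooth x) (hasDerivAt_dualMap _)

theorem lap_pd_dualMap_comp (hu : IsGroundState N ω p u) (l : Fin N) (x : Euc N) :
    lap (pd l fun y => dualMap (u y)) x =
      -(dualPotential ω p (u x) * pd l (fun y => dualMap (u y)) x) := by
  have hlap : lap (fun y => dualMap (u y)) = fun y => -dualNonlinearity ω p (u y) :=
    funext hu.lap_dualMap_comp
  rw [lap_pd hu.contDiff_dualMap_comp, hlap, hu.pd_dualMap_comp,
    pd_comp l (differentiable_of_smooth hu.smooth x)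
      (hasDerivAt_dualNonlinearity ω p (hu.pos x)).fun_neg]
  ring

theorem lap_dualWeight_mul (hu : IsGroundState N ω p u) (hη : ContDiff ℝ (⊤ : ℕ∞) η) {x : Euc N}
    (h : Lplus ω p u η x = 0) :
    lap (fun y => dualWeight (u y) * η y) x =
      -(dualPotential ω p (u x) * (dualWeight (u x) * η x)) := by
  have hweight : ContDiff ℝ (⊤ : ℕ∞) fun y => dualWeight (u y) :=
    contDiff_dualWeight.comp hu.smooth
  have hcross : ∑ i, pd i (fun y => dualWeight (u y)) x * pd i η x =
      2 * u x / dualWeight (u x) * ∑ i, pd i u x * pd i η x := by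
    rw [Finset.mul_sum]
    refine Finset.sum_congr rfl fun i _ => ?_
    rw [pd_comp i (differentiable_of_smooth hu.smooth x) (hasDerivAt_dualWeight _), mul_assoc]
  have hground := hu.lap_add_gradsq x
  rw [rpow_eq_rpow_sub_one_mul (hu.pos x) p] at hground
  rw [Lplus, lap_mul hu.smooth hη, lap_sq hu.smooth] at h
  rw [lap_mul hweight hη, lap_comp hu.smooth hasDerivAt_dualWeight
    hasDerivAt_two_mul_div_dualWeight, hcross, dualPotential,
    rpow_add_one_eq_rpow_sub_one_mul (hu.pos x)]
  have hs := (dualWeight_pos (u x)).ne'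
  field_simp
  linear_combination (-(1 + 2 * u x ^ 2)) * h + (-2 * u x * η x) * hground
    + (2 * u x * lap u x * η x + 4 * u x * (∑ i, pd i u x * pd i η x)
      + lap η x * (dualWeight (u x) ^ 2 + 1 + 2 * u x ^ 2)) * dualWeight_sq (u x)

end IsGroundState

end GroundState

/-! ### The radial profile of a ground state -/

section GroundStateProfile

open Set Asymptotics

theorem superpolynomialDecay_of_isBigO {f g : ℝ → ℝ} (hf : SuperpolynomialDecay atTop id f)
    (h : g =O[atTop] f) : SuperpolynomialDecay atTop id g :=
  (superpolynomialDecay_iff_isBigO g tendsto_id).2 fun z =>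
    h.trans ((superpolynomialDecay_iff_isBigO f tendsto_id).1 hf z)

theorem superpolynomialDecay_comp {f h : ℝ → ℝ} (hf : SuperpolynomialDecay atTop id f)
    (hh : DifferentiableAt ℝ h 0) (h0 : h 0 = 0) :
    SuperpolynomialDecay atTop id fun r => h (f r) := by
  have hO := hh.isBigO_sub.comp_tendsto (tendsto_zero_of_superpolynomialDecay hf)
  simp only [h0, sub_zero] at hO
  exact superpolynomialDecay_of_isBigO hf hO

theorem superpolynomialDecay_exp_neg_mul {δ : ℝ} (hδ : 0 < δ) :
    SuperpolynomialDecay atTop id fun r => exp (-δ * r) := fun k => by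
  simpa using tendsto_rpow_mul_exp_neg_mul_atTop_nhds_zero k δ hδ

theorem superpolynomialDecay_of_abs_le_exp {f : ℝ → ℝ} {C δ : ℝ} (hδ : 0 < δ)
    (hf : ∀ r, 0 < r → |f r| ≤ C * exp (-δ * r)) : SuperpolynomialDecay atTop id f := by
  refine superpolynomialDecay_of_isBigO (superpolynomialDecay_exp_neg_mul hδ)
    (IsBigO.of_bound C ?_)
  filter_upwards [eventually_gt_atTop 0] with r hr
  simpa only [norm_eq_abs, abs_exp] using hf r hr

theorem dualMap_zero : dualMap 0 = 0 := by
  simp [dualMap]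

variable {p : ℝ}

theorem dualNonlinearity_zero (ω : ℝ) (hp : p ≠ 0) : dualNonlinearity ω p 0 = 0 := by
  simp [dualNonlinearity, hp]

theorem dualPrimitive_zero (ω : ℝ) (hp : p + 1 ≠ 0) : dualPrimitive ω p 0 = 0 := by
  simp [dualPrimitive, hp]

theorem dualPotential_zero (ω : ℝ) (hp : 1 < p) : dualPotential ω p 0 = -ω := by
  simp [dualPotential, dualWeight, (sub_pos.2 hp).ne', (by linarith : p + 1 ≠ 0)]

theorem differentiable_dualNonlinearity (ω : ℝ) (hp : 1 ≤ p) :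
    Differentiable ℝ (dualNonlinearity ω p) := fun u =>
  ((Real.differentiable_rpow_const hp u).sub (differentiableAt_id.const_mul ω)).div
    (hasDerivAt_dualWeight u).differentiableAt (dualWeight_pos u).ne'

theorem differentiable_dualPrimitive (ω : ℝ) (hp : 0 ≤ p) :
    Differentiable ℝ (dualPrimitive ω p) := fun u =>
  ((Real.differentiable_rpow_const (by linarith) u).div_const (p + 1)).sub
    (((differentiableAt_id.pow 2).const_mul ω).div_const 2)

theorem continuous_dualPotential (ω : ℝ) (hp : 1 ≤ p) : Continuous (dualPotential ω p) :=
  ((((Real.continuous_rpow_const (by linarith)).const_mul p).add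
    ((Real.continuous_rpow_const (by linarith)).const_mul _)).sub continuous_const).div
    (contDiff_dualWeight.continuous.pow 4) fun u => (pow_pos (dualWeight_pos u) 4).ne'

theorem dualNonlinearity_neg_of_lt {ω u₁ u₂ : ℝ} (hp : 1 < p) (hu₂ : 0 < u₂) (hlt : u₂ < u₁)
    (h : dualNonlinearity ω p u₁ ≤ 0) : dualNonlinearity ω p u₂ < 0 := by
  have hfactor {u : ℝ} (hu : 0 < u) :
      dualNonlinearity ω p u = u / dualWeight u * (u ^ (p - 1) - ω) := by
    rw [dualNonlinearity, rpow_eq_rpow_sub_one_mul hu p]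
    ring
  have hu₁ : 0 < u₁ := hu₂.trans hlt
  rw [hfactor hu₁] at h
  rw [hfactor hu₂]
  have hω := nonpos_of_mul_nonpos_right h (div_pos hu₁ (dualWeight_pos u₁))
  have hpow : u₂ ^ (p - 1) < u₁ ^ (p - 1) := Real.rpow_lt_rpow hu₂.le hlt (sub_pos.2 hp)
  exact mul_neg_of_pos_of_neg (div_pos hu₂ (dualWeight_pos u₂)) (by linarith)

namespace IsGroundState

theorem abs_le_exp {N : ℕ} {ω : ℝ} {u : Euc N → ℝ} (hu : IsGroundState N ω p u) :
    ∃ C, ∃ δ > 0, ∀ x, |u x| ≤ C * exp (-δ * ‖x‖) := by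
  obtain ⟨C, _, δ, hδ, h⟩ := hu.decay 0
  exact ⟨C, δ, hδ, fun x => by simpa only [norm_iteratedFDeriv_zero] using! h x⟩

theorem abs_pd_le_exp {N : ℕ} {ω : ℝ} {u : Euc N → ℝ} (hu : IsGroundState N ω p u) :
    ∃ C, ∃ δ > 0, ∀ l x, |pd l u x| ≤ C * exp (-δ * ‖x‖) := by
  obtain ⟨C, _, δ, hδ, h⟩ := hu.decay 1
  refine ⟨C, δ, hδ, fun l x => le_trans ?_ (norm_iteratedFDeriv_one (𝕜 := ℝ) (f := u) ▸ h x)⟩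
  simpa [pd] using (fderiv ℝ u x).le_opNorm (EuclideanSpace.single l 1)

theorem isRadial {N : ℕ} {ω : ℝ} {u : Euc N → ℝ} (hu : IsGroundState N ω p u) : IsRadial u := by
  obtain ⟨U, _, _, hU⟩ := hu.radial
  intro x y hxy
  rw [hU, hU, hxy]

variable {n : ℕ} {ω : ℝ} {u : Euc (n + 1) → ℝ}

theorem isRadial_dualMap_comp (hu : IsGroundState (n + 1) ω p u) :
    IsRadial fun y => dualMap (u y) := fun _ _ hxy => congrArg dualMap (hu.isRadial hxy)

theorem axisProfile_pos (hu : IsGroundState (n + 1) ω p u) (r : ℝ) : 0 < axisProfile u r :=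
  hu.pos _

theorem strictAntiOn_axisProfile (hu : IsGroundState (n + 1) ω p u) :
    StrictAntiOn (axisProfile u) (Ici 0) := by
  obtain ⟨U, hanti, _, hU⟩ := hu.radial
  refine hanti.congr fun r hr => ?_
  rw [axisProfile, hU, norm_smul_single_zero, abs_of_nonneg hr]

theorem deriv_axisProfile_nonpos (hu : IsGroundState (n + 1) ω p u) {r : ℝ} (hr : 0 < r) :
    deriv (axisProfile u) r ≤ 0 := by
  rw [← derivWithin_of_mem_nhds (Ici_mem_nhds hr)]
  exact hu.strictAntiOn_axisProfile.antitoneOn.derivWithin_nonpos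

theorem deriv_axisProfile_dualMap_comp (hu : IsGroundState (n + 1) ω p u) (r : ℝ) :
    deriv (axisProfile fun y => dualMap (u y)) r =
      dualWeight (axisProfile u r) * deriv (axisProfile u) r :=
  ((hasDerivAt_dualMap _).comp r (hasDerivAt_axisProfile hu.smooth r)).deriv

theorem deriv_axisProfile_dualMap_comp_nonpos (hu : IsGroundState (n + 1) ω p u) {r : ℝ}
    (hr : 0 < r) : deriv (axisProfile fun y => dualMap (u y)) r ≤ 0 := by
  rw [hu.deriv_axisProfile_dualMap_comp]
  exact mul_nonpos_of_nonneg_of_nonpos (dualWeight_pos _).le (hu.deriv_axisProfile_nonpos hr)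

theorem hasDerivAt_deriv_axisProfile_dualMap_comp (hu : IsGroundState (n + 1) ω p u) {r : ℝ}
    (hr : 0 < r) :
    HasDerivAt (deriv (axisProfile fun y => dualMap (u y)))
      (-(n / r) * deriv (axisProfile fun y => dualMap (u y)) r
        - dualNonlinearity ω p (axisProfile u r)) r := by
  set x : Euc (n + 1) := r • EuclideanSpace.single 0 1
  have hx : ‖x‖ = r := (norm_smul_single_zero r).trans (abs_of_pos hr)
  have hx0 : x ≠ 0 := norm_ne_zero_iff.1 (hx.trans_ne hr.ne')
  have heq := lap_eq_of_isRadial hu.contDiff_dualMap_comp hu.isRadial_dualMap_comp hx0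
  rw [hu.lap_dualMap_comp, hx] at heq
  refine (hasDerivAt_deriv_axisProfile hu.contDiff_dualMap_comp r).congr_deriv ?_
  rw [axisProfile]
  linarith

theorem hasDerivAt_pow_mul_deriv_axisProfile_dualMap_comp (hu : IsGroundState (n + 1) ω p u)
    {r : ℝ} (hr : 0 < r) :
    HasDerivAt (fun r => r ^ n * deriv (axisProfile fun y => dualMap (u y)) r)
      (r ^ n * -dualNonlinearity ω p (axisProfile u r)) r :=
  (hasDerivAt_pow_mul n hr.ne' (hu.hasDerivAt_deriv_axisProfile_dualMap_comp hr)).congr_deriv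
    (by ring)

theorem deriv_axisProfile_dualMap_comp_neg (hp : 1 < p) (hu : IsGroundState (n + 1) ω p u) {r : ℝ}
    (hr : 0 < r) : deriv (axisProfile fun y => dualMap (u y)) r < 0 := by
  refine (hu.deriv_axisProfile_dualMap_comp_nonpos hr).lt_of_ne fun hzero => ?_
  have hmax : IsLocalMax (deriv (axisProfile fun y => dualMap (u y))) r := by
    filter_upwards [Ioi_mem_nhds hr] with s hs
    exact (hu.deriv_axisProfile_dualMap_comp_nonpos hs).trans_eq hzero.symm
  have hcrit := hmax.hasDerivAt_eq_zero (hu.hasDerivAt_deriv_axisProfile_dualMap_comp hr)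
  rw [hzero, mul_zero, zero_sub, neg_eq_zero] at hcrit
  have hincr := lt_of_deriv_pos (fun s => hu.hasDerivAt_pow_mul_deriv_axisProfile_dualMap_comp)
    hr (lt_add_one r) fun s hs => by
      have hs0 : 0 < s := hr.trans hs.1
      exact mul_pos (pow_pos hs0 n) (neg_pos.2 (dualNonlinearity_neg_of_lt hp
        (hu.axisProfile_pos s) (hu.strictAntiOn_axisProfile hr.le hs0.le hs.1) hcrit.le))
  rw [hzero, mul_zero] at hincr
  exact hincr.not_ge (mul_nonpos_of_nonneg_of_nonpos (by positivity)
    (hu.deriv_axisProfile_dualMap_comp_nonpos (hr.trans (lt_add_one r))))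

theorem tendsto_deriv_axisProfile_dualMap_comp (hu : IsGroundState (n + 1) ω p u) :
    Tendsto (deriv (axisProfile fun y => dualMap (u y))) (𝓝[>] 0) (𝓝 0) :=
  ((contDiff_deriv_axisProfile hu.contDiff_dualMap_comp).continuous.tendsto' 0 0
    (deriv_axisProfile_zero hu.isRadial_dualMap_comp)).mono_left nhdsWithin_le_nhds

theorem dualNonlinearity_axisProfile_zero_pos (hp : 1 < p) (hu : IsGroundState (n + 1) ω p u) :
    0 < dualNonlinearity ω p (axisProfile u 0) := by
  by_contra! hle
  have hpow : Tendsto (fun r : ℝ => r ^ n) (𝓝[>] 0) (𝓝 (0 ^ n)) :=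
    ((continuous_pow n).tendsto 0).mono_left nhdsWithin_le_nhds
  have hlim := hpow.mul hu.tendsto_deriv_axisProfile_dualMap_comp
  have hincr := limit_lt_of_deriv_pos
    (fun s => hu.hasDerivAt_pow_mul_deriv_axisProfile_dualMap_comp) one_pos (fun s hs =>
      mul_pos (pow_pos hs.1 n) (neg_pos.2 (dualNonlinearity_neg_of_lt hp (hu.axisProfile_pos s)
        (hu.strictAntiOn_axisProfile self_mem_Ici hs.1.le hs.1) hle))) hlim
  rw [mul_zero, one_pow, one_mul] at hincr
  exact hincr.not_ge (hu.deriv_axisProfile_dualMap_comp_nonpos one_pos)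

theorem superpolynomialDecay_axisProfile (hu : IsGroundState (n + 1) ω p u) :
    SuperpolynomialDecay atTop id (axisProfile u) := by
  obtain ⟨C, δ, hδ, h⟩ := hu.abs_le_exp
  refine superpolynomialDecay_of_abs_le_exp (C := C) hδ fun r hr => ?_
  have hbound := h (r • EuclideanSpace.single 0 1)
  rwa [norm_smul_single_zero, abs_of_pos hr] at hbound

theorem superpolynomialDecay_deriv_axisProfile (hu : IsGroundState (n + 1) ω p u) :
    SuperpolynomialDecay atTop id (deriv (axisProfile u)) := by
  obtain ⟨C, δ, hδ, h⟩ := hu.abs_pd_le_exp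
  refine superpolynomialDecay_of_abs_le_exp (C := C) hδ fun r hr => ?_
  have hx : ‖r • (EuclideanSpace.single 0 1 : Euc (n + 1))‖ = r :=
    (norm_smul_single_zero r).trans (abs_of_pos hr)
  have hbound := h 0 (r • EuclideanSpace.single 0 1)
  rw [pd_eq_of_isRadial hu.smooth hu.isRadial 0 (norm_ne_zero_iff.1 (hx.trans_ne hr.ne')),
    hx] at hbound
  simpa [hr.ne'] using hbound

theorem superpolynomialDecay_deriv_axisProfile_dualMap_comp (hu : IsGroundState (n + 1) ω p u) :
    SuperpolynomialDecay atTop id (deriv (axisProfile fun y => dualMap (u y))) := by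
  rw [funext hu.deriv_axisProfile_dualMap_comp]
  have hweight : (fun r => dualWeight (axisProfile u r)) =O[atTop] fun _ => (1 : ℝ) :=
    ((contDiff_dualWeight.continuous.tendsto 0).comp
      (tendsto_zero_of_superpolynomialDecay hu.superpolynomialDecay_axisProfile)).isBigO_one ℝ
  refine superpolynomialDecay_of_isBigO hu.superpolynomialDecay_deriv_axisProfile ?_
  simpa only [one_mul] using hweight.mul (isBigO_refl (deriv (axisProfile u)) atTop)

theorem exists_dualPotential_axisProfile_neg (hω : 0 < ω) (hp : 1 < p)
    (hu : IsGroundState (n + 1) ω p u) :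
    ∃ R > 0, ∀ r, R ≤ r → dualPotential ω p (axisProfile u r) < 0 := by
  have hlim := ((continuous_dualPotential ω hp.le).tendsto' 0 _ (dualPotential_zero ω hp)).comp
    (tendsto_zero_of_superpolynomialDecay hu.superpolynomialDecay_axisProfile)
  obtain ⟨R, hR⟩ := eventually_atTop.1 (hlim.eventually (gt_mem_nhds (neg_lt_zero.2 hω)))
  exact ⟨max R 1, by positivity, fun r hr => hR r ((le_max_left R 1).trans hr)⟩

theorem exists_abs_dualPotential_axisProfile_le (hp : 1 < p) (hu : IsGroundState (n + 1) ω p u) :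
    ∃ C, ∀ r, 1 ≤ r → |dualPotential ω p (axisProfile u r)| ≤ C := by
  obtain ⟨C, hC⟩ := isCompact_Icc.exists_bound_of_continuousOn
    (continuous_dualPotential ω hp.le).continuousOn (s := Icc 0 (axisProfile u 0))
  exact ⟨C, fun r hr => hC _ ⟨(hu.axisProfile_pos r).le, hu.strictAntiOn_axisProfile.antitoneOn
    self_mem_Ici (zero_le_one.trans hr) (zero_le_one.trans hr)⟩⟩

theorem radialProfile (hω : 0 < ω) (hp : 1 < p) (hu : IsGroundState (n + 1) ω p u) :
    RadialProfile n (axisProfile fun y => dualMap (u y))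
      (deriv (axisProfile fun y => dualMap (u y)))
      (fun r => dualNonlinearity ω p (axisProfile u r))
      (fun r => dualPotential ω p (axisProfile u r))
      (fun r => dualPrimitive ω p (axisProfile u r)) where
  hasDerivAt r _ := hasDerivAt_axisProfile hu.contDiff_dualMap_comp r
  hasDerivAt_deriv _ hr := hu.hasDerivAt_deriv_axisProfile_dualMap_comp hr
  hasDerivAt_nonlinearity r _ :=
    ((hasDerivAt_dualNonlinearity ω p (hu.axisProfile_pos r)).comp r
      (hasDerivAt_axisProfile hu.smooth r)).congr_deriv
      (by rw [hu.deriv_axisProfile_dualMap_comp, mul_assoc])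
  hasDerivAt_primitive r _ :=
    ((hasDerivAt_dualPrimitive ω (by linarith) (hu.axisProfile_pos r)).comp r
      (hasDerivAt_axisProfile hu.smooth r)).congr_deriv
      (by rw [hu.deriv_axisProfile_dualMap_comp, mul_assoc])
  pos r _ := dualMap_pos (hu.axisProfile_pos r)
  deriv_neg _ hr := hu.deriv_axisProfile_dualMap_comp_neg hp hr
  crossesUp _ _ hα hαβ hβ _ r₂ hr₁ hr₁₂ h := dual_combination_neg_of_lt hω hp hα hαβ hβ
    (hu.axisProfile_pos r₂) (hu.strictAntiOn_axisProfile hr₁.le (hr₁.trans hr₁₂).le hr₁₂) h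
  pos_of_nonpos r _ h := dualNonlinearity_lt_of_nonpos hp (hu.axisProfile_pos r) h
  decay := superpolynomialDecay_comp (h := dualMap) hu.superpolynomialDecay_axisProfile
    (hasDerivAt_dualMap 0).differentiableAt dualMap_zero
  decay_deriv := hu.superpolynomialDecay_deriv_axisProfile_dualMap_comp
  decay_nonlinearity := superpolynomialDecay_comp hu.superpolynomialDecay_axisProfile
    (differentiable_dualNonlinearity ω hp.le 0) (dualNonlinearity_zero ω (by linarith))
  decay_primitive := superpolynomialDecay_comp hu.superpolynomialDecay_axisProfile
    (differentiable_dualPrimitive ω (by linarith) 0) (dualPrimitive_zero ω (by linarith))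
  tendsto_zero := ((contDiff_axisProfile hu.contDiff_dualMap_comp).continuous.tendsto 0).mono_left
    nhdsWithin_le_nhds
  tendsto_zero_deriv := hu.tendsto_deriv_axisProfile_dualMap_comp
  tendsto_zero_nonlinearity := (((differentiable_dualNonlinearity ω hp.le).continuous.comp
    (contDiff_axisProfile hu.smooth).continuous).tendsto 0).mono_left nhdsWithin_le_nhds
  tendsto_zero_primitive := (((differentiable_dualPrimitive ω (by linarith)).continuous.comp
    (contDiff_axisProfile hu.smooth).continuous).tendsto 0).mono_left nhdsWithin_le_nhds
  nonlinearity_zero_pos := hu.dualNonlinearity_axisProfile_zero_pos hp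
  potential_neg := hu.exists_dualPotential_axisProfile_neg hω hp
  potential_bound := hu.exists_abs_dualPotential_axisProfile_le hp
  continuousOn_potential := ((continuous_dualPotential ω hp.le).comp
    (contDiff_axisProfile hu.smooth).continuous).continuousOn

end IsGroundState

end GroundStateProfile

/-! ### Kernels of the linearized operators -/

section LinearizedKernels

variable {n : ℕ}

theorem integrable_exp_neg_mul_norm {b : ℝ} (hb : 0 < b) :
    Integrable fun x : Euc (n + 1) => exp (-b * ‖x‖) := by
  refine (integrable_fun_norm_addHaar (volume : Measure (Euc (n + 1)))
    (f := fun r => exp (-b * r))).2 ?_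
  refine (integrableOn_rpow_mul_exp_neg_mul_rpow (p := 1) (s := n) (b := b)
    (neg_one_lt_zero.trans_le n.cast_nonneg) one_pos hb).congr_fun (fun r _ => ?_)
    measurableSet_Ioi
  simp

theorem memLp_two_of_abs_le_exp {f : Euc (n + 1) → ℝ} (hf : Continuous f) {C δ : ℝ} (hδ : 0 < δ)
    (h : ∀ x, |f x| ≤ C * exp (-δ * ‖x‖)) : MemLp f 2 := by
  refine (memLp_two_iff_integrable_sq hf.aestronglyMeasurable).2 <|
    ((integrable_exp_neg_mul_norm (mul_pos two_pos hδ)).const_mul (C ^ 2)).mono'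
      (hf.pow 2).aestronglyMeasurable (Eventually.of_forall fun x => ?_)
  calc ‖f x ^ 2‖ = |f x| ^ 2 := by rw [norm_pow, norm_eq_abs]
    _ ≤ (C * exp (-δ * ‖x‖)) ^ 2 := by gcongr; exact h x
    _ = C ^ 2 * exp (-(2 * δ) * ‖x‖) := by
      rw [mul_pow, ← Real.exp_nat_mul]
      congr 2
      push_cast
      ring

theorem memLp_two_of_integrable_norm_sq_add {α E : Type*} [MeasurableSpace α] {μ : Measure α}
    [NormedAddCommGroup E] {f : α → E} {g : α → ℝ} (hf : AEStronglyMeasurable f μ)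
    (hg : ∀ x, 0 ≤ g x) (h : Integrable (fun x => ‖f x‖ ^ 2 + g x) μ) : MemLp f 2 μ :=
  (memLp_two_iff_integrable_sq_norm hf).2 <| h.mono' (hf.norm.pow 2) <|
    Eventually.of_forall fun x => by
      rw [norm_of_nonneg (sq_nonneg _)]
      exact le_add_of_nonneg_right (hg x)

theorem isRadial_lap {f : Euc (n + 1) → ℝ} (hf : ContDiff ℝ (⊤ : ℕ∞) f) (hrad : IsRadial f) :
    IsRadial (lap f) := by
  intro x y hxy
  rcases eq_or_ne x 0 with rfl | hx
  · rw [norm_zero] at hxy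
    rw [norm_eq_zero.1 hxy.symm]
  · have hy : y ≠ 0 := norm_ne_zero_iff.1 (hxy.symm.trans_ne (norm_ne_zero_iff.2 hx))
    rw [lap_eq_of_isRadial hf hrad hx, lap_eq_of_isRadial hf hrad hy, hxy]

variable {ω p : ℝ} {u : Euc (n + 1) → ℝ}

namespace IsGroundState

theorem Lminus_self (hu : IsGroundState (n + 1) ω p u) (x : Euc (n + 1)) :
    Lminus ω p u u x = 0 := by
  have hsolves := hu.solves x
  rw [rpow_eq_rpow_sub_one_mul (hu.pos x) p] at hsolves
  rw [Lminus]
  linarith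

theorem isRadial_Lminus_potential (hu : IsGroundState (n + 1) ω p u) :
    IsRadial fun x => lap (fun y => u y ^ 2) x + u x ^ (p - 1) - ω := by
  have hsq : IsRadial fun x => u x ^ 2 := fun _ _ hxy => congrArg (· ^ 2) (hu.isRadial hxy)
  intro x y hxy
  simp only [isRadial_lap (hu.smooth.pow 2) hsq hxy, hu.isRadial hxy]

theorem mem_schrodingerKernel_of_Lminus_eq_zero (hu : IsGroundState (n + 1) ω p u)
    {ζ : Euc (n + 1) → ℝ} (hζ : ContDiff ℝ (⊤ : ℕ∞) ζ) (hζ2 : MemLp ζ 2)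
    (h : ∀ x, Lminus ω p u ζ x = 0) :
    ζ ∈ schrodingerKernel (n + 1)
      (axisProfile fun x => lap (fun y => u y ^ 2) x + u x ^ (p - 1) - ω) := by
  refine ⟨hζ, hζ2, fun x _ => ?_⟩
  have hx := h x
  rw [Lminus] at hx
  rw [axisProfile_norm hu.isRadial_Lminus_potential]
  linarith

theorem exists_eq_smul_of_Lminus_eq_zero (hu : IsGroundState (n + 1) ω p u)
    {ζ : Euc (n + 1) → ℝ} (hζ : ContDiff ℝ (⊤ : ℕ∞) ζ) (hζ2 : MemLp ζ 2)
    (h : ∀ x, Lminus ω p u ζ x = 0) : ∃ a : ℝ, ζ = a • u := by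
  obtain ⟨C, δ, hδ, hdecay⟩ := hu.abs_le_exp
  have hu2 : MemLp u 2 := memLp_two_of_abs_le_exp hu.smooth.continuous hδ hdecay
  exact exists_eq_smul_of_mem_schrodingerKernel
    (hu.mem_schrodingerKernel_of_Lminus_eq_zero hu.smooth hu2 hu.Lminus_self) hu.isRadial
    (fun x => (hu.pos x).ne') (hu.mem_schrodingerKernel_of_Lminus_eq_zero hζ hζ2 h)

theorem dualWeight_le (hu : IsGroundState (n + 1) ω p u) (x : Euc (n + 1)) :
    dualWeight (u x) ≤ dualWeight (u 0) := by
  have hle : u x ≤ u 0 := by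
    rw [← axisProfile_norm hu.isRadial x, ← axisProfile_zero u]
    exact hu.strictAntiOn_axisProfile.antitoneOn Set.self_mem_Ici (norm_nonneg x) (norm_nonneg x)
  have hpos := hu.pos x
  unfold dualWeight
  gcongr

theorem memLp_dualWeight_mul (hu : IsGroundState (n + 1) ω p u) {η : Euc (n + 1) → ℝ}
    (hη : Continuous η) (hη2 : MemLp η 2) : MemLp (fun x => dualWeight (u x) * η x) 2 := by
  refine hη2.of_le_mul (c := dualWeight (u 0))
    ((contDiff_dualWeight.continuous.comp hu.smooth.continuous).mul hη).aestronglyMeasurable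
    (Eventually.of_forall fun x => ?_)
  rw [norm_mul, norm_of_nonneg (dualWeight_pos _).le]
  exact mul_le_mul_of_nonneg_right (hu.dualWeight_le x) (norm_nonneg _)

theorem dualWeight_mul_mem_schrodingerKernel (hu : IsGroundState (n + 1) ω p u)
    {η : Euc (n + 1) → ℝ} (hη : ContDiff ℝ (⊤ : ℕ∞) η) (hη2 : MemLp η 2)
    (h : ∀ x, Lplus ω p u η x = 0) :
    (fun x => dualWeight (u x) * η x) ∈
      schrodingerKernel (n + 1) fun r => dualPotential ω p (axisProfile u r) := by
  refine ⟨(contDiff_dualWeight.comp hu.smooth).mul hη,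
    hu.memLp_dualWeight_mul hη.continuous hη2, fun x _ => ?_⟩
  simp only [axisProfile_norm hu.isRadial]
  exact hu.lap_dualWeight_mul hη (h x)

theorem pd_dualMap_comp_mem_schrodingerKernel (hu : IsGroundState (n + 1) ω p u)
    (l : Fin (n + 1)) :
    pd l (fun y => dualMap (u y)) ∈
      schrodingerKernel (n + 1) fun r => dualPotential ω p (axisProfile u r) := by
  obtain ⟨C, δ, hδ, hdecay⟩ := hu.abs_pd_le_exp
  have hcont := (contDiff_pd hu.smooth l).continuous
  refine ⟨contDiff_pd hu.contDiff_dualMap_comp l, ?_, fun x _ => ?_⟩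
  · rw [funext (hu.pd_dualMap_comp l)]
    exact hu.memLp_dualWeight_mul hcont (memLp_two_of_abs_le_exp hcont hδ (hdecay l))
  · simp only [axisProfile_norm hu.isRadial]
    exact hu.lap_pd_dualMap_comp l x

theorem exists_eq_sum_pd_of_Lplus_eq_zero (hω : 0 < ω) (hp : 1 < p)
    (hu : IsGroundState (n + 1) ω p u) {η : Euc (n + 1) → ℝ} (hη : ContDiff ℝ (⊤ : ℕ∞) η)
    (hη2 : MemLp η 2) (h : ∀ x, Lplus ω p u η x = 0) :
    ∃ c : Fin (n + 1) → ℝ, η = ∑ l, c l • pd l u := by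
  obtain ⟨c, hc⟩ := (hu.radialProfile hω hp).exists_eq_sum_pd hu.contDiff_dualMap_comp
    hu.isRadial_dualMap_comp hu.pd_dualMap_comp_mem_schrodingerKernel
    (hu.dualWeight_mul_mem_schrodingerKernel hη hη2 h)
  refine ⟨c, funext fun x => mul_left_cancel₀ (dualWeight_pos (u x)).ne' ?_⟩
  simpa only [Finset.sum_apply, Pi.smul_apply, smul_eq_mul, hu.pd_dualMap_comp, Finset.mul_sum,
    mul_left_comm] using congrFun hc x

end IsGroundState

end LinearizedKernels

theorem stmt0_general (N : ℕ) (hN : 1 ≤ N) (ω p : ℝ) (hω : 0 < ω) (hp : 1 < p)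
    (u : EuclideanSpace ℝ (Fin N) → ℝ) (hu : IsGroundState N ω p u)
    (ξ : EuclideanSpace ℝ (Fin N) → ℂ) (hξ : ContDiff ℝ (⊤ : ℕ∞) ξ) (hξ2 : MemLp ξ 2)
    (heq : ∀ x, -lap ξ x
        - 2 * (u x : ℂ) * ((lap (fun y => u y * (ξ y).re) x : ℝ) : ℂ)
        + (ω : ℂ) * ξ x
        - ((lap (fun y => (u y) ^ 2) x : ℝ) : ℂ) * ξ x
        - (((p - 1) * u x ^ (p - 1) * (ξ x).re : ℝ) : ℂ)
        - ((u x ^ (p - 1) : ℝ) : ℂ) * ξ x = 0) :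
    ∃ (a : ℝ) (c : Fin N → ℝ), ∀ x,
      ξ x = Complex.I * (a : ℂ) * (u x : ℂ) + ∑ l : Fin N, (c l : ℂ) * ((pd l u x : ℝ) : ℂ) := by
  obtain ⟨n, rfl⟩ := Nat.exists_eq_add_of_le' hN
  have hplus (x : Euc (n + 1)) : Lplus ω p u (fun y => (ξ y).re) x = 0 := by
    have hlap := lap_continuousLinearMap_comp Complex.reCLM hξ x
    have hre := congrArg Complex.re (heq x)
    simp only [Complex.reCLM_apply] at hlap
    simp only [Complex.sub_re, Complex.add_re, Complex.neg_re, Complex.mul_re, Complex.mul_im,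
      Complex.ofReal_re, Complex.ofReal_im, Complex.re_ofNat, Complex.im_ofNat, Complex.zero_re,
      mul_zero, zero_mul, sub_zero, add_zero] at hre
    rw [Lplus, hlap]
    linarith
  have hminus (x : Euc (n + 1)) : Lminus ω p u (fun y => (ξ y).im) x = 0 := by
    have hlap := lap_continuousLinearMap_comp Complex.imCLM hξ x
    have him := congrArg Complex.im (heq x)
    simp only [Complex.imCLM_apply] at hlap
    simp only [Complex.sub_im, Complex.add_im, Complex.neg_im, Complex.mul_re, Complex.mul_im,
      Complex.ofReal_re, Complex.ofReal_im, Complex.re_ofNat, Complex.im_ofNat, Complex.zero_im,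
      mul_zero, zero_mul, sub_zero, add_zero] at him
    rw [Lminus, hlap]
    linarith
  obtain ⟨a, ha⟩ := hu.exists_eq_smul_of_Lminus_eq_zero (Complex.imCLM.contDiff.comp hξ) hξ2.im
    hminus
  obtain ⟨c, hc⟩ := hu.exists_eq_sum_pd_of_Lplus_eq_zero hω hp (Complex.reCLM.contDiff.comp hξ)
    hξ2.re hplus
  refine ⟨a, c, fun x => Complex.ext ?_ ?_⟩
  · simpa using congrFun hc x
  · simpa using congrFun ha x

/-- Nondegeneracy of ground states: every finite-energy smooth solution of the
linearized equation `E''_ω(u)ξ = 0` is a combination of `i·u` and the translation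
modes `∂_{x_l} u`. -/
theorem stmt0 (N : ℕ) (hN : 1 ≤ N) (ω p : ℝ) (hω : 0 < ω) (hp : 1 < p)
    (hpmax : 3 ≤ N → p < (3 * (N : ℝ) + 2) / ((N : ℝ) - 2))
    (u : EuclideanSpace ℝ (Fin N) → ℝ) (hu : IsGroundState N ω p u)
    (ξ : EuclideanSpace ℝ (Fin N) → ℂ) (hξ : ContDiff ℝ (⊤ : ℕ∞) ξ)
    (hint : Integrable (fun x => ‖ξ x‖ ^ 2 + ∑ i : Fin N, ‖pd i ξ x‖ ^ 2))
    (heq : ∀ x, -lap ξ x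
        - 2 * (u x : ℂ) * ((lap (fun y => u y * (ξ y).re) x : ℝ) : ℂ)
        + (ω : ℂ) * ξ x
        - ((lap (fun y => (u y) ^ 2) x : ℝ) : ℂ) * ξ x
        - (((p - 1) * u x ^ (p - 1) * (ξ x).re : ℝ) : ℂ)
        - ((u x ^ (p - 1) : ℝ) : ℂ) * ξ x = 0) :
    ∃ (a : ℝ) (c : Fin N → ℝ), ∀ x,
      ξ x = Complex.I * (a : ℂ) * (u x : ℂ) + ∑ l : Fin N, (c l : ℂ) * ((pd l u x : ℝ) : ℂ) :=
  stmt0_general N hN ω p hω hp u hu ξ hξ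
    (memLp_two_of_integrable_norm_sq_add hξ.continuous.aestronglyMeasurable
      (fun _ => Finset.sum_nonneg fun _ _ => sq_nonneg _) hint) heq

end
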